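/- arXiv:2401.10427 — 2 statements merged into one kernel-verified Lean document; each statement's English description precedes it below -/
import Mathlib

section
/- There is an absolute constant C > 0 and a real number y₀ such that for all x ≥ 1 and all y ≥ y₀, the number N(x,y) of positive integers n ≤ x with ω*(n) ≥ y satisfies N(x,y) ≤ C·x·(log y)/y. -/
open Filter Real

/-- `ω*(n)`: the number of divisors `d` of `n` such that `d + 1` is prime. -/
def omegaStar (n : ℕ) : ℕ := (n.divisors.filter (fun d => Nat.Prime (d + 1))).card


/-- Dyadic decomposition. -/
lemma dyadic_sum (f : ℕ → ℝ) (hf : ∀ n, 0 ≤ f n) (c : ℕ → ℝ) (a b : ℕ) (hab : a ≤ b)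
    (h : ∀ s ∈ Finset.Ico a b, ∑ d ∈ Finset.range (2 ^ (s + 1)), f d ≤ c s * 2 ^ s) :
    ∑ d ∈ Finset.Ico (2 ^ a) (2 ^ b), f d / d ≤ ∑ s ∈ Finset.Ico a b, c s := by
  induction b, hab using Nat.le_induction with
  | base => simp
  | succ b hab ih =>
    rw [Finset.sum_Ico_succ_top hab]
    rw [← Finset.sum_Ico_consecutive _ (Nat.pow_le_pow_right two_pos hab)
      (Nat.pow_le_pow_right two_pos (Nat.le_succ b))]
    refine add_le_add (ih fun s hs => h s ?_) ?_
    · simp only [Finset.mem_Ico] at hs ⊢; omega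
    · have h1 := h b (by simp; omega)
      calc ∑ d ∈ Finset.Ico (2 ^ b) (2 ^ (b + 1)), f d / d
          ≤ ∑ d ∈ Finset.Ico (2 ^ b) (2 ^ (b + 1)), f d / 2 ^ b := by
            refine Finset.sum_le_sum fun d hd => ?_
            have : (2 : ℝ) ^ b ≤ d := by exact_mod_cast (Finset.mem_Ico.1 hd).1
            exact div_le_div_of_nonneg_left (hf d) (by positivity) this
        _ = (∑ d ∈ Finset.Ico (2 ^ b) (2 ^ (b + 1)), f d) / 2 ^ b := by rw [Finset.sum_div]
        _ ≤ (∑ d ∈ Finset.range (2 ^ (b + 1)), f d) / 2 ^ b := by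
            refine div_le_div_of_nonneg_right ?_ (by positivity)
            refine Finset.sum_le_sum_of_subset_of_nonneg ?_ (fun _ _ _ => hf _)
            intro d hd; simp only [Finset.mem_Ico, Finset.mem_range] at hd ⊢; exact hd.2
        _ ≤ c b := by
            rw [div_le_iff₀ (by positivity)]; exact h1

lemma pi_bound (n : ℕ) (hn : 2 ≤ n) : (Nat.primeCounting n : ℝ) ≤ 8 * n / Real.log n := by
  have hn1 : (2 : ℝ) ≤ n := by exact_mod_cast hn
  have h := Chebyshev.pi_le_log4_mul_div (x := (n : ℝ)) (by linarith)
  rw [Nat.floor_natCast] at h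
  have hl : 0 < Real.log n := Real.log_pos (by linarith)
  have hs : Real.log (√(n:ℝ)) = Real.log n / 2 := by
    rw [Real.log_sqrt (by linarith)]
  have h4 : Real.log 4 ≤ 2 := by
    have : (4:ℝ) = 2 ^ 2 := by norm_num
    rw [this, Real.log_pow]
    have := Real.log_two_lt_d9
    push_cast; linarith
  have hsq : √(n:ℝ) * √(n:ℝ) = n := Real.mul_self_sqrt (by linarith)
  have hsp : 0 < √(n:ℝ) := Real.sqrt_pos.2 (by linarith)
  have hlog : Real.log n ≤ 2 * √(n:ℝ) := by
    have := Real.log_le_self (x := √(n:ℝ)) hsp.le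
    linarith
  refine h.trans ?_
  rw [hs, le_div_iff₀ hl, add_mul]
  have e1 : Real.log 4 * n / (Real.log n / 2) * Real.log n = 2 * Real.log 4 * n := by
    field_simp
  rw [e1]
  nlinarith [mul_le_mul_of_nonneg_left hlog hsp.le]

/-- indicator that `d+1` is prime -/
noncomputable def shp (d : ℕ) : ℝ := if Nat.Prime (d + 1) then 1 else 0

lemma shp_nonneg (d : ℕ) : 0 ≤ shp d := by unfold shp; split_ifs <;> norm_num

lemma shp_sum (n : ℕ) : ∑ d ∈ Finset.range n, shp d ≤ Nat.primeCounting n := by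
  unfold shp
  rw [Finset.sum_boole]
  norm_cast
  rw [Nat.primeCounting, Nat.primeCounting', Nat.count_eq_card_filter_range]
  refine Finset.card_le_card_of_injOn (fun d => d + 1) ?_ (fun a _ b _ h => by simpa using h)
  intro d hd
  simp at hd ⊢
  exact hd

lemma shp_recip (k : ℕ) :
    ∑ d ∈ Finset.Ico 1 (2 ^ 2 ^ k), shp d / d ≤ 24 * (k + 1) := by
  have h := dyadic_sum shp shp_nonneg (fun s => 24 / ((s : ℝ) + 1)) 0 (2 ^ k) (by simp) ?_
  · rw [pow_zero] at h
    refine h.trans ?_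
    have hh : ∑ s ∈ Finset.Ico (0:ℕ) (2 ^ k), (24 : ℝ) / ((s : ℝ) + 1) = 24 * (harmonic (2 ^ k) : ℝ) := by
      rw [harmonic, Finset.range_eq_Ico]
      push_cast
      rw [Finset.mul_sum]
      refine Finset.sum_congr rfl fun i _ => by rw [div_eq_mul_inv]
    rw [hh]
    have h2 := harmonic_le_one_add_log (2 ^ k)
    have h3 : Real.log ((2 ^ k : ℕ) : ℝ) ≤ k := by
      push_cast
      rw [Real.log_pow]
      have := Real.log_two_lt_d9
      nlinarith [(Nat.cast_nonneg k : (0:ℝ) ≤ k)]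
    linarith
  · intro s _
    refine (shp_sum _).trans ?_
    refine (pi_bound _ ?_).trans ?_
    · calc 2 = 2 ^ 1 := by norm_num
        _ ≤ 2 ^ (s + 1) := Nat.pow_le_pow_right two_pos (by omega)
    · push_cast
      rw [Real.log_pow]
      have := Real.log_two_gt_d9
      have hs : (0:ℝ) < (s:ℝ) + 1 := by positivity
      push_cast
      rw [pow_succ, div_mul_eq_mul_div, div_le_div_iff₀ (by positivity) hs]
      have h2 : (0:ℝ) < 2 ^ s := by positivity
      have : (0:ℝ) < 2 ^ s * (s + 1) := by positivity
      nlinarith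

lemma bilinear (F G : ℕ → ℝ) (hF : ∀ n, 0 ≤ F n) (hG : ∀ n, 0 ≤ G n) (bF bG : ℝ)
    (hbG : 0 ≤ bG) (U N : ℕ)
    (sF : ∀ X : ℕ, 2 ^ U ≤ X → ∑ d ∈ Finset.range X, F d ≤ bF * X)
    (sG : ∀ X : ℕ, 2 ^ U ≤ X → ∑ d ∈ Finset.range X, G d ≤ bG * X) :
    ∑ p ∈ (Finset.Ico (2 ^ U) (2 ^ (2 * U)) ×ˢ Finset.Icc (2 ^ U) N).filter
      (fun p => p.1 * p.2 ≤ N), F p.1 * G p.2 ≤ 4 * U * bF * bG * N := by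
  rw [Finset.sum_filter, Finset.sum_product]
  have h1 : ∀ d ∈ Finset.Ico (2 ^ U) (2 ^ (2 * U)),
      ∑ m ∈ Finset.Icc (2 ^ U) N, (if d * m ≤ N then F d * G m else 0)
        ≤ (2 * bG * N) * (F d / d) := by
    intro d hd
    have hdp : 0 < d := lt_of_lt_of_le (by positivity) (Finset.mem_Ico.1 hd).1
    have hdp' : (0:ℝ) < d := by exact_mod_cast hdp
    rw [← Finset.sum_filter, ← Finset.mul_sum]
    have key : ∑ m ∈ (Finset.Icc (2 ^ U) N).filter (fun m => d * m ≤ N), G m ≤ 2 * bG * N / d := by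
      by_cases hX : 2 ^ U ≤ N / d
      · calc _ ≤ ∑ m ∈ Finset.range (N / d + 1), G m := by
              refine Finset.sum_le_sum_of_subset_of_nonneg ?_ (fun _ _ _ => hG _)
              intro m hm
              simp only [Finset.mem_filter, Finset.mem_range] at hm ⊢
              rw [Nat.lt_succ_iff, Nat.le_div_iff_mul_le hdp, mul_comm]
              exact hm.2
          _ ≤ bG * ((N / d + 1 : ℕ) : ℝ) := sG _ (by omega)
          _ ≤ bG * (2 * (N / d : ℝ)) := by
              gcongr
              have h3 : ((N / d : ℕ) : ℝ) ≤ (N : ℝ) / d := Nat.cast_div_le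
              have h4 : (1 : ℝ) ≤ ((N / d : ℕ) : ℝ) := by
                exact_mod_cast le_trans Nat.one_le_two_pow hX
              push_cast; linarith
          _ = _ := by ring
      · rw [Finset.sum_eq_zero]
        · positivity
        · intro m hm
          exfalso
          simp only [Finset.mem_filter, Finset.mem_Icc] at hm
          apply hX
          refine hm.1.1.trans ?_
          rw [Nat.le_div_iff_mul_le hdp, mul_comm]
          exact hm.2
    calc F d * _ ≤ F d * (2 * bG * N / d) := mul_le_mul_of_nonneg_left key (hF d)
      _ = _ := by ring
  refine (Finset.sum_le_sum h1).trans ?_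
  rw [← Finset.mul_sum]
  have h2 := dyadic_sum F hF (fun _ => 2 * bF) U (2 * U) (by omega) ?_
  · simp only [Finset.sum_const, Nat.card_Ico, nsmul_eq_mul] at h2
    rw [show 2 * U - U = U by omega] at h2
    calc _ ≤ (2 * bG * N) * (U * (2 * bF)) := by gcongr
      _ = _ := by ring
  · intro s hs
    have := sF (2 ^ (s + 1)) (Nat.pow_le_pow_right two_pos (by simp at hs; omega))
    refine this.trans (le_of_eq ?_)
    push_cast; ring

/-- truncated inclusion-exclusion sum -/
noncomputable def ies (g : ℕ → ℝ) (P : Finset ℕ) (R : ℕ) : ℝ :=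
  ∑ j ∈ Finset.range (R + 1), (-1) ^ j * ∑ S ∈ P.powersetCard j, ∏ q ∈ S, g q

lemma esym_insert (g : ℕ → ℝ) (P : Finset ℕ) (a : ℕ) (ha : a ∉ P) (j : ℕ) :
    ∑ S ∈ (insert a P).powersetCard (j + 1), ∏ q ∈ S, g q
      = ∑ S ∈ P.powersetCard (j + 1), ∏ q ∈ S, g q
        + g a * ∑ S ∈ P.powersetCard j, ∏ q ∈ S, g q := by
  rw [Finset.powersetCard_succ_insert ha, Finset.sum_union]
  · congr 1
    rw [Finset.sum_image, Finset.mul_sum]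
    · refine Finset.sum_congr rfl fun S hS => ?_
      rw [Finset.prod_insert]
      exact fun h => ha ((Finset.mem_powersetCard.1 hS).1 h)
    · intro S hS S' hS' h
      have h1 : a ∉ S := fun h => ha ((Finset.mem_powersetCard.1 hS).1 h)
      have h2 : a ∉ S' := fun h => ha ((Finset.mem_powersetCard.1 hS').1 h)
      rw [← Finset.erase_insert h1, ← Finset.erase_insert h2]
      exact congrArg (fun s => Finset.erase s a) h
  · rw [Finset.disjoint_left]
    intro S hS hS'
    obtain ⟨S', _, rfl⟩ := Finset.mem_image.1 hS'
    exact ha ((Finset.mem_powersetCard.1 hS).1 (Finset.mem_insert_self _ _))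

lemma ies_insert (g : ℕ → ℝ) (P : Finset ℕ) (a : ℕ) (ha : a ∉ P) (R : ℕ) :
    ies g (insert a P) (R + 1) = ies g P (R + 1) - g a * ies g P R := by
  unfold ies
  rw [Finset.sum_range_succ' _ (R + 1), Finset.sum_range_succ' _ (R + 1)]
  simp_rw [esym_insert g P a ha]
  simp only [mul_add, Finset.sum_add_distrib, Finset.powersetCard_zero, Finset.sum_singleton,
    Finset.prod_empty, Finset.mul_sum]
  have : ∀ i ∈ Finset.range (R + 1), ∑ x ∈ P.powersetCard i, (-1 : ℝ) ^ (i + 1) * (g a * ∏ q ∈ x, g q)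
      = - ∑ x ∈ P.powersetCard i, (g a * ((-1 : ℝ) ^ i * ∏ q ∈ x, g q)) := by
    intro i _
    rw [← Finset.sum_neg_distrib]
    exact Finset.sum_congr rfl fun x _ => by ring
  rw [Finset.sum_congr rfl this, Finset.sum_neg_distrib]
  ring

lemma bonferroni (g : ℕ → ℝ) (P : Finset ℕ) (h0 : ∀ q ∈ P, 0 ≤ g q) (h1 : ∀ q ∈ P, g q ≤ 1)
    (R : ℕ) : 0 ≤ (-1 : ℝ) ^ R * (ies g P R - ∏ q ∈ P, (1 - g q)) := by
  induction P using Finset.induction_on generalizing R with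
  | empty =>
    have : ies g ∅ R = 1 := by
      unfold ies
      rw [Finset.sum_range_succ']
      simp only [Finset.powersetCard_zero, Finset.sum_singleton, Finset.prod_empty, pow_zero,
        mul_one, add_eq_right]
      refine Finset.sum_eq_zero fun k _ => ?_
      rw [Finset.powersetCard_eq_empty.2 (by simp)]
      simp
    simp [this]
  | insert a P ha ih =>
    have ih' := ih (fun q hq => h0 q (Finset.mem_insert_of_mem hq))
      (fun q hq => h1 q (Finset.mem_insert_of_mem hq))
    have ga0 := h0 a (Finset.mem_insert_self _ _)
    cases R with
    | zero =>
      simp only [ies, pow_zero, one_mul, zero_add, Finset.sum_range_one, Finset.powersetCard_zero,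
        Finset.sum_singleton, Finset.prod_empty, sub_nonneg]
      exact Finset.prod_le_one (fun q hq => by linarith [h1 q hq]) (fun q hq => by linarith [h0 q hq])
    | succ R =>
      rw [ies_insert g P a ha, Finset.prod_insert ha]
      have e1 := ih' (R + 1)
      have e2 := mul_nonneg ga0 (ih' R)
      rw [pow_succ] at e1 ⊢
      nlinarith

lemma esym_bound (a : ℕ → ℝ) (P : Finset ℕ) (h0 : ∀ q ∈ P, 0 ≤ a q) (j : ℕ) :
    ∑ S ∈ P.powersetCard j, ∏ q ∈ S, a q ≤ Real.exp (3 * (∑ q ∈ P, a q) - j) := by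
  have h : (∑ S ∈ P.powersetCard j, ∏ q ∈ S, a q) * Real.exp j ≤ Real.exp (3 * ∑ q ∈ P, a q) := by
    calc (∑ S ∈ P.powersetCard j, ∏ q ∈ S, a q) * Real.exp j
        = ∑ S ∈ P.powersetCard j, ∏ q ∈ S, (Real.exp 1 * a q) := by
          rw [Finset.sum_mul]
          refine Finset.sum_congr rfl fun S hS => ?_
          rw [Finset.prod_mul_distrib, Finset.prod_const, (Finset.mem_powersetCard.1 hS).2,
            ← Real.exp_nat_mul, mul_one, mul_comm]
      _ ≤ ∑ S ∈ P.powerset, ∏ q ∈ S, (Real.exp 1 * a q) := by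
          refine Finset.sum_le_sum_of_subset_of_nonneg ?_ ?_
          · intro S hS
            exact Finset.mem_powerset.2 (Finset.mem_powersetCard.1 hS).1
          · intro S hS _
            refine Finset.prod_nonneg fun q hq => ?_
            have := h0 q (Finset.mem_powerset.1 hS hq)
            positivity
      _ = ∏ q ∈ P, (1 + Real.exp 1 * a q) := (Finset.prod_one_add P).symm
      _ ≤ ∏ q ∈ P, Real.exp (3 * a q) := by
          refine Finset.prod_le_prod ?_ ?_
          · intro q hq
            have := h0 q hq
            positivity
          · intro q hq
            have := h0 q hq
            have e := Real.exp_one_lt_d9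
            have := Real.add_one_le_exp (3 * a q)
            nlinarith
      _ = _ := by rw [← Real.exp_sum, Finset.mul_sum]
  rw [Real.exp_sub, le_div_iff₀ (Real.exp_pos _)]
  exact h

lemma count_two (a b X : ℕ) (ha : 0 < a) (hb : 0 < b) (hab : Nat.Coprime a b) :
    |(((Finset.range X).filter (fun d => a ∣ d ∧ b ∣ d + 1)).card : ℝ) - X / (a * b)| ≤ 1 := by
  obtain ⟨v, hv1, hv2⟩ := Nat.chineseRemainder hab 0 (b - 1)
  have hbv : b ∣ v + 1 := by
    have h := Nat.ModEq.add_right 1 hv2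
    rw [Nat.sub_add_cancel hb] at h
    exact (Nat.modEq_zero_iff_dvd).1 (h.trans (by simp [Nat.ModEq]))
  have hiff : ∀ d, (a ∣ d ∧ b ∣ d + 1) ↔ d ≡ v [MOD a * b] := by
    intro d
    rw [← Nat.modEq_and_modEq_iff_modEq_mul hab]
    refine and_congr ?_ ?_
    · constructor
      · intro h; exact ((Nat.modEq_zero_iff_dvd).2 h).trans hv1.symm
      · intro h; exact (Nat.modEq_zero_iff_dvd).1 (h.trans hv1)
    · constructor
      · intro h
        exact Nat.ModEq.add_right_cancel' 1
          (((Nat.modEq_zero_iff_dvd).2 h).trans ((Nat.modEq_zero_iff_dvd).2 hbv).symm)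
      · intro h
        exact (Nat.modEq_zero_iff_dvd).1 ((h.add_right 1).trans ((Nat.modEq_zero_iff_dvd).2 hbv))
  have hab0 : 0 < a * b := Nat.mul_pos ha hb
  have hc := Nat.count_modEq_card X hab0 v
  rw [Nat.count_eq_card_filter_range] at hc
  simp_rw [hiff, hc]
  have hr : (0:ℝ) < a * b := by exact_mod_cast hab0
  have h1 : ((X / (a * b) : ℕ) : ℝ) ≤ X / (a * b) := by
    have := Nat.cast_div_le (α := ℝ) (m := X) (n := a * b)
    push_cast at this; exact this
  have h2 : (X : ℝ) / (a * b) < ((X / (a * b) : ℕ) : ℝ) + 1 := by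
    have := Nat.lt_floor_add_one ((X : ℝ) / ((a * b : ℕ) : ℝ))
    rw [Nat.floor_div_eq_div] at this
    push_cast at this ⊢; exact this
  rw [abs_le]
  split_ifs <;> push_cast at * <;> constructor <;> linarith

lemma count_prod (S : Finset ℕ) (hS : ∀ q ∈ S, q.Prime) (α β : ℝ) (ha0 : 0 ≤ α) (ha1 : α ≤ 1)
    (hb0 : 0 ≤ β) (hb1 : β ≤ 1) (X : ℕ) :
    |∑ d ∈ Finset.range X, ∏ q ∈ S, (α * (if q ∣ d then 1 else 0) + β * (if q ∣ d + 1 then 1 else 0))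
      - X * ∏ q ∈ S, ((α + β) / q)| ≤ 2 ^ S.card := by
  have hcop : ∀ A ⊆ S, Nat.Coprime (∏ q ∈ A, q) (∏ q ∈ S \ A, q) := by
    intro A hA
    refine Nat.Coprime.prod_left fun p hp => Nat.Coprime.prod_right fun q hq => ?_
    rw [Finset.mem_sdiff] at hq
    refine (Nat.coprime_primes (hS p (hA hp)) (hS q hq.1)).2 ?_
    rintro rfl; exact hq.2 hp
  have hdvd : ∀ A ⊆ S, ∀ d : ℕ, (∏ q ∈ A, (if q ∣ d then (1:ℝ) else 0)) = if (∏ q ∈ A, q) ∣ d then 1 else 0 := by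
    intro A hA d
    rw [Finset.prod_boole]
    congr 1
    refine propext ⟨fun h => ?_, fun h q hq => (Finset.dvd_prod_of_mem _ hq).trans h⟩
    exact Finset.prod_primes_dvd d (fun q hq => (hS q (hA hq)).prime) h
  have hpos : ∀ A ⊆ S, 0 < ∏ q ∈ A, q := fun A hA => Finset.prod_pos fun q hq => (hS q (hA hq)).pos
  simp_rw [add_div]
  simp_rw [Finset.prod_add]
  rw [Finset.sum_comm, Finset.mul_sum, ← Finset.sum_sub_distrib]
  refine (Finset.abs_sum_le_sum_abs _ _).trans ?_
  have hcard : (2:ℝ) ^ S.card = ∑ A ∈ S.powerset, (1:ℝ) := by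
    simp [Finset.card_powerset]
  rw [hcard]
  refine Finset.sum_le_sum fun A hA => ?_
  rw [Finset.mem_powerset] at hA
  have hA' : S \ A ⊆ S := Finset.sdiff_subset
  simp_rw [Finset.prod_mul_distrib, hdvd A hA, hdvd _ hA', Finset.prod_div_distrib, Finset.prod_const]
  have e : ∀ d : ℕ, (α ^ A.card * if (∏ q ∈ A, q) ∣ d then (1:ℝ) else 0) *
      (β ^ (S \ A).card * if (∏ q ∈ S \ A, q) ∣ d + 1 then (1:ℝ) else 0)
      = α ^ A.card * β ^ (S \ A).card *
        (if (∏ q ∈ A, q) ∣ d ∧ (∏ q ∈ S \ A, q) ∣ d + 1 then (1:ℝ) else 0) := by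
    intro d
    by_cases h1 : (∏ q ∈ A, q) ∣ d <;> by_cases h2 : (∏ q ∈ S \ A, q) ∣ d + 1 <;> simp [h1, h2]
  simp_rw [e]
  rw [← Finset.mul_sum, Finset.sum_boole]
  have hc := count_two (∏ q ∈ A, q) (∏ q ∈ S \ A, q) X (hpos A hA) (hpos _ hA') (hcop A hA)
  push_cast at hc
  have e2 : (X:ℝ) * (α ^ A.card / (∏ q ∈ A, (q:ℝ)) * (β ^ (S \ A).card / ∏ q ∈ S \ A, (q:ℝ)))
      = α ^ A.card * β ^ (S \ A).card * (X / ((∏ q ∈ A, (q:ℝ)) * ∏ q ∈ S \ A, (q:ℝ))) := by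
    rw [div_mul_div_comm]; ring
  rw [e2, ← mul_sub, abs_mul]
  have h3 : |α ^ A.card * β ^ (S \ A).card| ≤ 1 := by
    rw [abs_of_nonneg (by positivity)]
    exact mul_le_one₀ (pow_le_one₀ ha0 ha1) (by positivity) (pow_le_one₀ hb0 hb1)
  exact mul_le_one₀ h3 (abs_nonneg _) hc

/-- the sieve weight -/
noncomputable def wt (α β : ℝ) (P : Finset ℕ) (d : ℕ) : ℝ :=
  ∏ q ∈ P, (1 - (α * (if q ∣ d then 1 else 0) + β * (if q ∣ d + 1 then 1 else 0)))

lemma g_bounds (α β : ℝ) (ha0 : 0 ≤ α) (ha1 : α ≤ 1) (hb0 : 0 ≤ β) (hb1 : β ≤ 1) (q d : ℕ)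
    (hq : q.Prime) :
    0 ≤ α * (if q ∣ d then (1:ℝ) else 0) + β * (if q ∣ d + 1 then 1 else 0) ∧
    α * (if q ∣ d then (1:ℝ) else 0) + β * (if q ∣ d + 1 then 1 else 0) ≤ 1 := by
  by_cases h1 : q ∣ d <;> by_cases h2 : q ∣ d + 1
  · exfalso
    exact hq.one_lt.ne' (Nat.dvd_one.1 ((Nat.dvd_add_right h1).1 h2))
  all_goals simp [h1, h2, ha0, ha1, hb0, hb1]

lemma wt_nonneg (α β : ℝ) (ha0 : 0 ≤ α) (ha1 : α ≤ 1) (hb0 : 0 ≤ β) (hb1 : β ≤ 1)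
    (P : Finset ℕ) (hP : ∀ q ∈ P, q.Prime) (d : ℕ) : 0 ≤ wt α β P d :=
  Finset.prod_nonneg fun q hq => by
    have := (g_bounds α β ha0 ha1 hb0 hb1 q d (hP q hq)).2
    linarith

lemma brun (P : Finset ℕ) (hP : ∀ q ∈ P, q.Prime) (α β : ℝ) (ha0 : 0 ≤ α) (ha1 : α ≤ 1)
    (hb0 : 0 ≤ β) (hb1 : β ≤ 1) (r X : ℕ)
    (hr : 5 * ((α + β) * ∑ q ∈ P, (1:ℝ) / q) ≤ 2 * r + 1) :
    ∑ d ∈ Finset.range X, wt α β P d ≤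
      2 * X * Real.exp (- ((α + β) * ∑ q ∈ P, (1:ℝ) / q)) + (2 * r + 1) * (2 * (P.card + 1)) ^ (2 * r) := by
  set a : ℕ → ℝ := fun q => (α + β) / q with ha
  set g : ℕ → ℕ → ℝ := fun d q => α * (if q ∣ d then 1 else 0) + β * (if q ∣ d + 1 then 1 else 0) with hg
  have hA : (α + β) * ∑ q ∈ P, (1:ℝ) / q = ∑ q ∈ P, a q := by
    rw [Finset.mul_sum]; exact Finset.sum_congr rfl fun q _ => by simp [ha, div_eq_mul_inv]
  rw [hA] at hr ⊢
  have ha0' : ∀ q ∈ P, 0 ≤ a q := fun q _ => by simp only [ha]; positivity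
  have ha1' : ∀ q ∈ P, a q ≤ 1 := fun q hq => by
    have h2 : (2:ℝ) ≤ q := by exact_mod_cast (hP q hq).two_le
    simp only [ha]
    rw [div_le_one (by linarith)]; linarith
  -- step 1
  have s1 : ∑ d ∈ Finset.range X, wt α β P d ≤ ∑ d ∈ Finset.range X, ies (g d) P (2 * r) := by
    refine Finset.sum_le_sum fun d _ => ?_
    have := bonferroni (g d) P (fun q hq => (g_bounds α β ha0 ha1 hb0 hb1 q d (hP q hq)).1)
      (fun q hq => (g_bounds α β ha0 ha1 hb0 hb1 q d (hP q hq)).2) (2 * r)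
    rw [pow_mul] at this
    simp only [even_two, Even.neg_pow, one_pow, one_mul] at this
    unfold wt
    linarith
  have s2 : ∑ d ∈ Finset.range X, ies (g d) P (2 * r) ≤ X * ies a P (2 * r)
      + (2 * r + 1) * (2 * (P.card + 1)) ^ (2 * r) := by
    have : ∑ d ∈ Finset.range X, ies (g d) P (2 * r) - X * ies a P (2 * r) =
        ∑ j ∈ Finset.range (2 * r + 1), ∑ S ∈ P.powersetCard j,
          (-1) ^ j * (∑ d ∈ Finset.range X, ∏ q ∈ S, g d q - X * ∏ q ∈ S, a q) := by
      unfold ies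
      rw [Finset.sum_comm, Finset.mul_sum, ← Finset.sum_sub_distrib]
      refine Finset.sum_congr rfl fun j _ => ?_
      rw [← Finset.mul_sum, Finset.sum_comm, mul_left_comm, ← mul_sub, Finset.mul_sum (a := (X:ℝ)),
        ← Finset.sum_sub_distrib, Finset.mul_sum]
    have h2 : ∑ j ∈ Finset.range (2 * r + 1), ∑ S ∈ P.powersetCard j,
          (-1) ^ j * (∑ d ∈ Finset.range X, ∏ q ∈ S, g d q - X * ∏ q ∈ S, a q)
          ≤ ∑ j ∈ Finset.range (2 * r + 1), (2 * ((P.card : ℝ) + 1)) ^ (2 * r) := by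
      refine Finset.sum_le_sum fun j hj => ?_
      calc _ ≤ ∑ S ∈ P.powersetCard j, (2:ℝ) ^ j := by
            refine Finset.sum_le_sum fun S hS => ?_
            rw [Finset.mem_powersetCard] at hS
            refine (le_abs_self _).trans ?_
            rw [abs_mul, abs_pow, abs_neg, abs_one, one_pow, one_mul, ← hS.2]
            exact count_prod S (fun q hq => hP q (hS.1 hq)) α β ha0 ha1 hb0 hb1 X
        _ = (P.card.choose j) * 2 ^ j := by simp
        _ ≤ (P.card + 1) ^ j * 2 ^ j := by
            gcongr
            have : P.card.choose j ≤ P.card ^ j := Nat.choose_le_pow _ _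
            calc (P.card.choose j : ℝ) ≤ (P.card : ℝ) ^ j := by exact_mod_cast this
              _ ≤ _ := by gcongr; linarith
        _ = (2 * ((P.card : ℝ) + 1)) ^ j := by rw [mul_pow]; ring
        _ ≤ _ := by
            refine pow_le_pow_right₀ ?_ (by simp at hj; omega)
            have : (0:ℝ) ≤ P.card := by positivity
            linarith
    simp only [Finset.sum_const, Finset.card_range, nsmul_eq_mul] at h2
    push_cast at h2
    linarith
  have s3 : ies a P (2 * r) ≤ 2 * Real.exp (- ∑ q ∈ P, a q) := by
    have h1 := bonferroni a P ha0' ha1' (2 * r + 1)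
    have h2 : ies a P (2 * r + 1) = ies a P (2 * r) - ∑ S ∈ P.powersetCard (2 * r + 1), ∏ q ∈ S, a q := by
      unfold ies
      rw [Finset.sum_range_succ _ (2 * r + 1), pow_succ (-1 : ℝ) (2 * r), pow_mul]
      simp; ring
    have h3 := esym_bound a P ha0' (2 * r + 1)
    have h4 : ∏ q ∈ P, (1 - a q) ≤ Real.exp (- ∑ q ∈ P, a q) := by
      rw [← Finset.sum_neg_distrib, Real.exp_sum]
      refine Finset.prod_le_prod (fun q hq => by linarith [ha1' q hq]) fun q _ => ?_
      have := Real.add_one_le_exp (- a q)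
      linarith
    have h5 : Real.exp (3 * (∑ q ∈ P, a q) - (2 * r + 1 : ℕ)) ≤ Real.exp (- ∑ q ∈ P, a q) := by
      rw [Real.exp_le_exp]
      push_cast
      have : 0 ≤ ∑ q ∈ P, a q := Finset.sum_nonneg ha0'
      linarith
    rw [pow_succ, pow_mul, h2] at h1
    simp only [even_two, Even.neg_pow, one_pow, one_mul] at h1
    linarith
  have hX : (0:ℝ) ≤ X := by positivity
  have := mul_le_mul_of_nonneg_left s3 hX
  linarith

/-- the sum of reciprocals of the sieving primes -/
noncomputable def SP (W : ℕ) : ℝ := ∑ q ∈ Nat.primesBelow (2 ^ W), (1:ℝ) / q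

lemma SP_nonneg (W : ℕ) : 0 ≤ SP W := Finset.sum_nonneg fun q _ => by positivity

lemma telescoping (N : ℕ) : ∑ q ∈ Nat.primesBelow N, (1:ℝ) / (q * (q - 1)) ≤ 1 := by
  have h1 : ∀ n : ℕ, ∑ q ∈ Finset.Ico 2 (n + 2), (1:ℝ) / (q * (q - 1)) = 1 - 1 / (n + 1) := by
    intro n
    induction n with
    | zero => simp
    | succ n ih =>
      rw [Finset.sum_Ico_succ_top (by omega), ih]
      push_cast
      have : (n:ℝ) + 1 ≠ 0 := by positivity
      have : (n:ℝ) + 2 ≠ 0 := by positivity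
      have : (n:ℝ) + 1 + 1 ≠ 0 := by positivity
      rw [show (n:ℝ) + 2 - 1 = n + 1 by ring]
      field_simp
      ring
  calc _ ≤ ∑ q ∈ Finset.Ico 2 (N + 2), (1:ℝ) / (q * (q - 1)) := by
        refine Finset.sum_le_sum_of_subset_of_nonneg ?_ ?_
        · intro q hq
          have := (Nat.prime_of_mem_primesBelow hq).two_le
          have := Nat.lt_of_mem_primesBelow hq
          simp; omega
        · intro q hq _
          have : (2:ℝ) ≤ q := by exact_mod_cast (Finset.mem_Ico.1 hq).1
          have : (0:ℝ) ≤ q - 1 := by linarith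
          positivity
    _ ≤ 1 := by
        rw [h1]
        have : (0:ℝ) ≤ 1 / (N + 1) := by positivity
        linarith

/-- `n ↦ 1/n` as a monoid hom. -/
noncomputable def recipHom : ℕ →* ℝ where
  toFun n := (n:ℝ)⁻¹
  map_one' := by simp
  map_mul' a b := by push_cast; rw [mul_inv]

lemma mertens_lower (N : ℕ) (hN : 1 ≤ N) :
    Real.log N ≤ Real.exp (∑ q ∈ Nat.primesBelow N, (1:ℝ) / q + 1) := by
  have hlt : ∀ {p : ℕ}, p.Prime → ‖recipHom p‖ < 1 := by
    intro p hp
    have : (1:ℝ) < p := by exact_mod_cast hp.one_lt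
    simp only [recipHom, MonoidHom.coe_mk, OneHom.coe_mk, norm_inv, Real.norm_natCast]
    exact inv_lt_one_of_one_lt₀ this
  have h := EulerProduct.summable_and_hasSum_smoothNumbers_prod_primesBelow_geometric
    (f := recipHom) hlt N
  have hs := h.2
  have hlow : ∑ m ∈ Finset.Ico 1 N, ((m:ℝ))⁻¹ ≤ ∏ p ∈ N.primesBelow, (1 - recipHom p)⁻¹ := by
    rw [← hs.tsum_eq]
    have hs' := (hasSum_subtype_iff_indicator (f := fun m : ℕ => recipHom m)
      (s := N.smoothNumbers)).1 hs
    rw [hs.tsum_eq]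
    calc _ = ∑ m ∈ Finset.Ico 1 N, (N.smoothNumbers.indicator (fun m : ℕ => recipHom m)) m := by
          refine Finset.sum_congr rfl fun m hm => ?_
          rw [Finset.mem_Ico] at hm
          rw [Set.indicator_of_mem (Nat.mem_smoothNumbers_of_lt hm.1 hm.2)]
          rfl
      _ ≤ _ := by
          refine sum_le_hasSum _ ?_ hs'
          intro m _
          refine Set.indicator_nonneg ?_ _
          intro m _
          change 0 ≤ (m:ℝ)⁻¹
          positivity
  have hharm : Real.log N ≤ ∑ m ∈ Finset.Ico 1 N, ((m:ℝ))⁻¹ := by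
    have := log_add_one_le_harmonic (N - 1)
    rw [harmonic] at this
    push_cast at this
    rw [Nat.cast_sub hN] at this
    rw [Finset.sum_Ico_eq_sum_range]
    push_cast at this ⊢
    rw [sub_add_cancel] at this
    refine this.trans (le_of_eq (Finset.sum_congr rfl fun i _ => by rw [add_comm]))
  refine (hharm.trans hlow).trans ?_
  have hup : ∏ p ∈ N.primesBelow, (1 - recipHom p)⁻¹
      ≤ ∏ p ∈ N.primesBelow, Real.exp ((1:ℝ) / p + 1 / (p * (p - 1))) := by
    refine Finset.prod_le_prod ?_ ?_
    · intro p hp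
      have := hlt (Nat.prime_of_mem_primesBelow hp)
      rw [inv_nonneg]
      have := (abs_lt.1 (by rwa [Real.norm_eq_abs] at this)).2
      linarith
    · intro p hp
      have h2 : (2:ℝ) ≤ p := by exact_mod_cast (Nat.prime_of_mem_primesBelow hp).two_le
      have h1 : (0:ℝ) < p - 1 := by linarith
      have h0 : (0:ℝ) < p := by linarith
      have e : (1 - recipHom p)⁻¹ = ((1:ℝ) / p + 1 / (p * (p - 1))) + 1 := by
        change (1 - (p:ℝ)⁻¹)⁻¹ = _
        have : 1 - (p:ℝ)⁻¹ = (p - 1) / p := by field_simp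
        rw [this]
        field_simp
        ring
      rw [e]
      exact Real.add_one_le_exp _
  refine hup.trans ?_
  rw [← Real.exp_sum, Real.exp_le_exp, Finset.sum_add_distrib]
  have := telescoping N
  linarith

lemma SP_lower (W : ℕ) (hW : 1 ≤ W) : Real.log W - 2 ≤ SP W := by
  have h := mertens_lower (2 ^ W) Nat.one_le_two_pow
  push_cast at h
  rw [Real.log_pow] at h
  have hW' : (0:ℝ) < W := by exact_mod_cast hW
  have hl2 : 0 < Real.log 2 := Real.log_pos (by norm_num)
  have h2 := Real.log_le_log (by positivity) h
  rw [Real.log_exp, Real.log_mul hW'.ne' hl2.ne'] at h2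
  have h3 : -1 ≤ Real.log (Real.log 2) := by
    rw [Real.le_log_iff_exp_le hl2]
    have : Real.exp (-1) = 1 / Real.exp 1 := by rw [Real.exp_neg, one_div]
    rw [this]
    have e := Real.exp_one_gt_d9
    have l := Real.log_two_gt_d9
    rw [div_le_iff₀ (Real.exp_pos 1)]
    nlinarith
  unfold SP
  linarith

lemma SP_upper (W i : ℕ) (hW : W ≤ 2 ^ i) : SP W ≤ 24 * (i + 1) := by
  refine le_trans ?_ (shp_recip i)
  unfold SP shp
  have : ∑ d ∈ Finset.Ico 1 (2 ^ 2 ^ i), (if Nat.Prime (d + 1) then (1:ℝ) else 0) / d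
      = ∑ d ∈ (Finset.Ico 1 (2 ^ 2 ^ i)).filter (fun d => Nat.Prime (d + 1)), (1:ℝ) / d := by
    rw [Finset.sum_filter]
    refine Finset.sum_congr rfl fun d _ => ?_
    split_ifs <;> simp
  rw [this]
  calc ∑ q ∈ Nat.primesBelow (2 ^ W), (1:ℝ) / q
      ≤ ∑ q ∈ Nat.primesBelow (2 ^ W), (1:ℝ) / ((q - 1 : ℕ) : ℝ) := by
        refine Finset.sum_le_sum fun q hq => ?_
        have h2 := (Nat.prime_of_mem_primesBelow hq).two_le
        have : (0:ℝ) < ((q - 1 : ℕ) : ℝ) := by exact_mod_cast (by omega)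
        refine one_div_le_one_div_of_le this ?_
        exact_mod_cast Nat.sub_le q 1
    _ = ∑ d ∈ (Nat.primesBelow (2 ^ W)).image (fun q : ℕ => q - 1), (1:ℝ) / (d : ℕ) := by
        rw [Finset.sum_image]
        intro a ha b hb hab
        have h2 := (Nat.prime_of_mem_primesBelow ha).two_le
        have h3 := (Nat.prime_of_mem_primesBelow hb).two_le
        simp only at hab
        omega
    _ ≤ _ := by
        refine Finset.sum_le_sum_of_subset_of_nonneg ?_ (fun _ _ _ => by positivity)
        intro d hd
        obtain ⟨q, hq, rfl⟩ := Finset.mem_image.1 hd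
        have hp := Nat.prime_of_mem_primesBelow hq
        have h2 := hp.two_le
        have h3 := Nat.lt_of_mem_primesBelow hq
        have h4 : 2 ^ W ≤ 2 ^ 2 ^ i := Nat.pow_le_pow_right two_pos hW
        simp only [Finset.mem_filter, Finset.mem_Ico]
        rw [Nat.sub_add_cancel (by omega)]
        exact ⟨⟨by omega, by omega⟩, hp⟩

/-- number of `q ∈ P` with `q^e ∣ n` -/
def om (e : ℕ) (P : Finset ℕ) (n : ℕ) : ℕ := (P.filter (fun q => q ^ e ∣ n)).card

lemma om_add (P : Finset ℕ) (d m : ℕ) : om 1 P d + om 1 P m ≤ om 1 P (d * m) + om 2 P (d * m) := by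
  unfold om
  simp only [Finset.card_filter]
  rw [← Finset.sum_add_distrib, ← Finset.sum_add_distrib]
  refine Finset.sum_le_sum fun q _ => ?_
  by_cases h1 : q ∣ d <;> by_cases h2 : q ∣ m
  · have h3 : q ∣ d * m := h1.mul_right m
    have h4 : q ^ 2 ∣ d * m := by rw [pow_two]; exact mul_dvd_mul h1 h2
    simp [h1, h2, h3, h4]
  · have h3 : q ∣ d * m := h1.mul_right m
    simp [h1, h2, h3]
  · have h3 : q ∣ d * m := h2.mul_left d
    simp [h1, h2, h3]
  · simp [h1, h2]

lemma rankin (e : ℕ) (P : Finset ℕ) (hP : ∀ q ∈ P, q.Prime) (t : ℝ) (ht : 0 ≤ t) (N : ℕ) :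
    ∑ n ∈ Finset.Icc 1 N, (1 + t) ^ (om e P n) ≤ N * Real.exp (t * ∑ q ∈ P, (1:ℝ) / (q:ℝ) ^ e) := by
  have h1 : ∀ n, (1 + t) ^ (om e P n) = ∑ S ∈ P.powerset, ∏ q ∈ S, (if q ^ e ∣ n then t else 0) := by
    intro n
    rw [← Finset.prod_one_add]
    unfold om
    rw [← Finset.prod_const, Finset.prod_filter]
    refine Finset.prod_congr rfl fun q _ => ?_
    split_ifs <;> simp
  simp_rw [h1]
  rw [Finset.sum_comm]
  calc _ ≤ ∑ S ∈ P.powerset, (N:ℝ) * ∏ q ∈ S, (t * (1 / (q:ℝ) ^ e)) := by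
        refine Finset.sum_le_sum fun S hS => ?_
        rw [Finset.mem_powerset] at hS
        have hb : ∀ n, (∏ q ∈ S, (if q ^ e ∣ n then t else 0)) ≤
            t ^ S.card * (if (∏ q ∈ S, q ^ e) ∣ n then 1 else 0) := by
          intro n
          by_cases hall : ∀ q ∈ S, q ^ e ∣ n
          · have hd : (∏ q ∈ S, q ^ e) ∣ n := by
              refine Finset.prod_dvd_of_isRelPrime ?_ hall
              intro p hp q hq hpq
              rw [Function.onFun, ← Nat.coprime_iff_isRelPrime]
              exact Nat.Coprime.pow _ _ ((Nat.coprime_primes (hP p (hS hp)) (hP q (hS hq))).2 hpq)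
            rw [if_pos hd, mul_one, ← Finset.prod_const]
            refine le_of_eq (Finset.prod_congr rfl fun q hq => if_pos (hall q hq))
          · push Not at hall
            obtain ⟨q, hq, hqn⟩ := hall
            rw [Finset.prod_eq_zero hq (if_neg hqn)]
            split_ifs <;> positivity
        refine (Finset.sum_le_sum fun n _ => hb n).trans ?_
        rw [← Finset.mul_sum, Finset.sum_boole, Finset.prod_mul_distrib, Finset.prod_const]
        have hc : ((Finset.Icc 1 N).filter (fun n => (∏ q ∈ S, q ^ e) ∣ n)).card = N / (∏ q ∈ S, q ^ e) := by
          have := Nat.Ioc_filter_dvd_card_eq_div N (∏ q ∈ S, q ^ e)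
          rw [← this]; rfl
        rw [hc]
        have : ((N / (∏ q ∈ S, q ^ e) : ℕ) : ℝ) ≤ (N:ℝ) * ∏ q ∈ S, (1 / (q:ℝ) ^ e) := by
          refine Nat.cast_div_le.trans (le_of_eq ?_)
          push_cast
          rw [Finset.prod_div_distrib, Finset.prod_const_one]
          ring
        calc _ ≤ t ^ S.card * ((N:ℝ) * ∏ q ∈ S, (1 / (q:ℝ) ^ e)) := by gcongr
          _ = _ := by ring
    _ = N * ∏ q ∈ P, (1 + t * (1 / (q:ℝ) ^ e)) := by
        rw [← Finset.mul_sum, Finset.prod_one_add]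
    _ ≤ _ := by
        gcongr
        rw [Finset.mul_sum]
        rw [Real.exp_sum]
        refine Finset.prod_le_prod (fun q _ => by positivity) fun q _ => ?_
        rw [add_comm]
        exact Real.add_one_le_exp _

lemma markov_om (e : ℕ) (P : Finset ℕ) (hP : ∀ q ∈ P, q.Prime) (t : ℝ) (ht : 0 ≤ t) (N : ℕ) (B : ℝ) :
    (((Finset.Icc 1 N).filter (fun n => B < om e P n)).card : ℝ) ≤
      N * Real.exp (t * ∑ q ∈ P, (1:ℝ) / (q:ℝ) ^ e - B * Real.log (1 + t)) := by
  have h := rankin e P hP t ht N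
  have hl : 0 ≤ Real.log (1 + t) := Real.log_nonneg (by linarith)
  have h2 : (((Finset.Icc 1 N).filter (fun n => B < om e P n)).card : ℝ) * Real.exp (B * Real.log (1 + t))
      ≤ ∑ n ∈ Finset.Icc 1 N, (1 + t) ^ (om e P n) := by
    rw [← nsmul_eq_mul, ← Finset.sum_const]
    calc _ ≤ ∑ n ∈ (Finset.Icc 1 N).filter (fun n => B < om e P n), (1 + t) ^ (om e P n) := by
          refine Finset.sum_le_sum fun n hn => ?_
          have hB := (Finset.mem_filter.1 hn).2
          calc Real.exp (B * Real.log (1 + t)) ≤ Real.exp (om e P n * Real.log (1 + t)) := by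
                rw [Real.exp_le_exp]; gcongr
            _ = _ := by rw [Real.exp_nat_mul, Real.exp_log (by linarith)]
      _ ≤ _ := Finset.sum_le_sum_of_subset_of_nonneg (Finset.filter_subset _ _)
          (fun _ _ _ => by positivity)
  rw [Real.exp_sub, mul_div_assoc', le_div_iff₀ (Real.exp_pos _)]
  exact h2.trans h

/-- exceptional integers -/
def Bad (W n : ℕ) : Prop :=
  9 / 8 * SP W < om 1 (Nat.primesBelow (2 ^ W)) n ∨ 1 / 8 * SP W < om 2 (Nat.primesBelow (2 ^ W)) n

open Classical in
lemma bad_count (W N : ℕ) :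
    (((Finset.Icc 1 N).filter (fun n => Bad W n)).card : ℝ) ≤ 8 * N * Real.exp (- (7 / 1000) * SP W) := by
  have hP : ∀ q ∈ Nat.primesBelow (2 ^ W), q.Prime := fun q hq => Nat.prime_of_mem_primesBelow hq
  have hS := SP_nonneg W
  have h1 := markov_om 1 _ hP (1 / 8) (by norm_num) N (9 / 8 * SP W)
  have h2 := markov_om 2 _ hP 1 (by norm_num) N (1 / 8 * SP W)
  have hsub : (((Finset.Icc 1 N).filter (fun n => Bad W n)).card : ℝ) ≤
     (((Finset.Icc 1 N).filter (fun n => 9 / 8 * SP W < om 1 (Nat.primesBelow (2 ^ W)) n)).card : ℝ) +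
     (((Finset.Icc 1 N).filter (fun n => 1 / 8 * SP W < om 2 (Nat.primesBelow (2 ^ W)) n)).card : ℝ) := by
    norm_cast
    refine le_trans (Finset.card_le_card ?_) (Finset.card_union_le _ _)
    intro n hn
    rw [Finset.mem_filter] at hn
    obtain ⟨hn1, hn2⟩ := hn
    rw [Finset.mem_union, Finset.mem_filter, Finset.mem_filter]
    rcases hn2 with h | h
    · exact Or.inl ⟨hn1, h⟩
    · exact Or.inr ⟨hn1, h⟩
  have e1 : (1:ℝ) / 8 * ∑ q ∈ Nat.primesBelow (2 ^ W), (1:ℝ) / (q:ℝ) ^ 1 - 9 / 8 * SP W * Real.log (1 + 1 / 8)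
      ≤ - (7 / 1000) * SP W := by
    have hl : 2 / 17 ≤ Real.log (1 + 1 / 8) := by
      have := Real.le_log_one_add_of_nonneg (x := 1 / 8) (by norm_num)
      norm_num at this ⊢
      exact this
    simp only [pow_one]
    change 1 / 8 * SP W - _ ≤ _
    nlinarith
  have e2 : (1:ℝ) * ∑ q ∈ Nat.primesBelow (2 ^ W), (1:ℝ) / (q:ℝ) ^ 2 - 1 / 8 * SP W * Real.log (1 + 1)
      ≤ 1 - (7 / 1000) * SP W := by
    have h3 : ∑ q ∈ Nat.primesBelow (2 ^ W), (1:ℝ) / (q:ℝ) ^ 2 ≤ 1 := by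
      refine le_trans (Finset.sum_le_sum fun q hq => ?_) (telescoping (2 ^ W))
      have : (2:ℝ) ≤ q := by exact_mod_cast (hP q hq).two_le
      refine one_div_le_one_div_of_le ?_ ?_ <;> nlinarith
    have hl := Real.log_two_gt_d9
    rw [show (1:ℝ) + 1 = 2 by norm_num]
    nlinarith
  have hN : (0:ℝ) ≤ N := by positivity
  have f1 := h1.trans (mul_le_mul_of_nonneg_left (Real.exp_le_exp.2 e1) hN)
  have f2 := h2.trans (mul_le_mul_of_nonneg_left (Real.exp_le_exp.2 e2) hN)
  rw [sub_eq_add_neg, Real.exp_add, ← neg_mul] at f2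
  have e3 := Real.exp_one_lt_d9
  have hx : 0 ≤ N * Real.exp (- (7 / 1000) * SP W) := by positivity
  nlinarith

/-- sieving level exponent -/
def Wi (i : ℕ) : ℕ := 2 ^ (i - i / 20)

lemma Wi_le (i : ℕ) : Wi i ≤ 2 ^ i := Nat.pow_le_pow_right two_pos (Nat.sub_le _ _)

lemma Wi_pos (i : ℕ) : 1 ≤ Wi i := Nat.one_le_two_pow

lemma growth (i : ℕ) (hi : 360 ≤ i) : 441 * (i + 1) ≤ 2 ^ (i / 20) := by
  have h : ∀ j : ℕ, 18 ≤ j → 8820 * (j + 1) ≤ 2 ^ j := by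
    intro j hj
    induction j, hj using Nat.le_induction with
    | base => norm_num
    | succ j hj ih => rw [pow_succ]; omega
  have := h (i / 20) (by omega)
  omega

lemma sieve_i (i : ℕ) (hi : 360 ≤ i) (X : ℕ) (hX : 2 ^ 2 ^ i ≤ X) (β : ℝ) (hb0 : 0 ≤ β) (hb1 : β ≤ 1) :
    ∑ d ∈ Finset.range X, wt (1 / 2) β (Nat.primesBelow (2 ^ Wi i)) d
      ≤ 3 * Real.exp (- ((1 / 2 + β) * SP (Wi i))) * X := by
  have hP : ∀ q ∈ Nat.primesBelow (2 ^ Wi i), q.Prime := fun q hq => Nat.prime_of_mem_primesBelow hq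
  have hS0 := SP_nonneg (Wi i)
  have hS1 := SP_upper (Wi i) i (Wi_le i)
  have hA : (1 / 2 + β) * SP (Wi i) ≤ 36 * (i + 1) := by nlinarith
  have h := brun _ hP (1 / 2) β (by norm_num) (by norm_num) hb0 hb1 (90 * (i + 1)) X (by
    change 5 * ((1 / 2 + β) * SP (Wi i)) ≤ _
    push_cast; linarith)
  change _ ≤ 2 * X * Real.exp (- ((1 / 2 + β) * SP (Wi i))) + _ at h
  refine h.trans ?_
  clear h
  have hcard : (Nat.primesBelow (2 ^ Wi i)).card + 1 ≤ 2 ^ Wi i := by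
    have : Nat.primesBelow (2 ^ Wi i) ⊆ Finset.Ico 1 (2 ^ Wi i) := by
      intro q hq
      rw [Finset.mem_Ico]
      exact ⟨(hP q hq).one_lt.le, Nat.lt_of_mem_primesBelow hq⟩
    have := Finset.card_le_card this
    rw [Nat.card_Ico] at this
    have : 1 ≤ 2 ^ Wi i := Nat.one_le_two_pow
    omega
  have herr : (2 * ((90 * (i + 1) : ℕ) : ℝ) + 1) *
      (2 * (((Nat.primesBelow (2 ^ Wi i)).card : ℝ) + 1)) ^ (2 * (90 * (i + 1)))
      ≤ Real.exp (- ((1 / 2 + β) * SP (Wi i))) * X := by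
    have hb : (2 * (((Nat.primesBelow (2 ^ Wi i)).card : ℝ) + 1)) ≤ 2 ^ (Wi i + 1) := by
      have : (((Nat.primesBelow (2 ^ Wi i)).card : ℝ) + 1) ≤ 2 ^ Wi i := by exact_mod_cast hcard
      rw [pow_succ]; linarith
    have hc : (2 * ((90 * (i + 1) : ℕ) : ℝ) + 1) ≤ 2 ^ (9 * (i + 1)) := by
      have h1 : 2 * (90 * (i + 1)) + 1 ≤ 2 ^ (9 * (i + 1)) := by
        have h2 : i + 1 < 2 ^ (i + 1) := Nat.lt_two_pow_self
        have h3 : 2 ^ 8 ≤ 2 ^ (8 * (i + 1)) := Nat.pow_le_pow_right two_pos (by omega)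
        calc 2 * (90 * (i + 1)) + 1 ≤ 2 ^ 8 * (i + 1) := by omega
          _ ≤ 2 ^ (8 * (i + 1)) * 2 ^ (i + 1) := Nat.mul_le_mul h3 h2.le
          _ = _ := by rw [← pow_add]; congr 1; ring
      exact_mod_cast h1
    have he : Real.exp ((1 / 2 + β) * SP (Wi i)) ≤ 2 ^ (72 * (i + 1)) := by
      calc Real.exp ((1 / 2 + β) * SP (Wi i)) ≤ Real.exp ((36 * (i + 1) : ℕ) * 1) := by
            rw [Real.exp_le_exp]; push_cast; linarith
        _ = Real.exp 1 ^ (36 * (i + 1)) := by rw [Real.exp_nat_mul]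
        _ ≤ (2 ^ 2) ^ (36 * (i + 1)) := by
            gcongr
            have := Real.exp_one_lt_d9
            linarith
        _ = _ := by rw [← pow_mul]; congr 1; ring
    have hexp : 9 * (i + 1) + (Wi i + 1) * (2 * (90 * (i + 1))) + 72 * (i + 1) ≤ 2 ^ i := by
      have h1 : Wi i * 2 ^ (i / 20) = 2 ^ i := by
        unfold Wi; rw [← pow_add]; congr 1; omega
      have h2 := Nat.mul_le_mul_left (Wi i) (growth i hi)
      rw [h1] at h2
      have h3 := Wi_pos i
      refine le_trans ?_ h2
      nlinarith [Nat.mul_le_mul_right (i + 1) h3]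
    rw [Real.exp_neg, ← div_eq_inv_mul, le_div_iff₀ (Real.exp_pos _)]
    calc _ ≤ (2:ℝ) ^ (9 * (i + 1)) * (2 ^ (Wi i + 1)) ^ (2 * (90 * (i + 1))) * 2 ^ (72 * (i + 1)) := by
          gcongr
      _ = (2:ℝ) ^ (9 * (i + 1) + (Wi i + 1) * (2 * (90 * (i + 1))) + 72 * (i + 1)) := by
          rw [← pow_mul, ← pow_add, ← pow_add]
      _ ≤ (2:ℝ) ^ (2 ^ i) := pow_le_pow_right₀ (by norm_num) hexp
      _ ≤ X := by exact_mod_cast hX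
  refine (add_le_add le_rfl herr).trans (le_of_eq ?_)
  ring

lemma wt_zero (P : Finset ℕ) (m : ℕ) : wt (1 / 2) 0 P m = (1 / 2) ^ (om 1 P m) := by
  unfold wt om
  rw [← Finset.prod_const, Finset.prod_filter]
  refine Finset.prod_congr rfl fun q _ => ?_
  rw [pow_one]
  split_ifs <;> norm_num

lemma wt_one (P : Finset ℕ) (d : ℕ) (h : ∀ q ∈ P, ¬ q ∣ d + 1) :
    wt (1 / 2) 1 P d = (1 / 2) ^ (om 1 P d) := by
  rw [← wt_zero]
  unfold wt
  refine Finset.prod_congr rfl fun q hq => ?_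
  rw [if_neg (h q hq)]
  ring

open Classical in
/-- the set of relevant pairs in window `i` -/
noncomputable def Gset (i N : ℕ) : Finset (ℕ × ℕ) :=
  (Finset.Icc 1 N ×ˢ Finset.Icc 1 N).filter (fun p => p.1 * p.2 ≤ N ∧ Nat.Prime (p.1 + 1) ∧
    ¬ Bad (Wi i) (p.1 * p.2) ∧ 2 ^ 2 ^ i ≤ p.1 ∧ 2 ^ 2 ^ i ≤ p.2 ∧
      (p.1 < 2 ^ 2 ^ (i + 1) ∨ p.2 < 2 ^ 2 ^ (i + 1)))

lemma Gset_card (i N : ℕ) (hi : 360 ≤ i) :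
    ((Gset i N).card : ℝ) ≤ 72 * 2 ^ i * N *
      Real.exp (-2 * SP (Wi i) + 5 / 4 * SP (Wi i) * Real.log 2) := by
  set P := Nat.primesBelow (2 ^ Wi i) with hPdef
  set S := SP (Wi i) with hSdef
  have hP : ∀ q ∈ P, q.Prime := fun q hq => Nat.prime_of_mem_primesBelow hq
  set H := wt (1 / 2) 1 P with hH
  set h := wt (1 / 2) 0 P with hh
  have H0 : ∀ d, 0 ≤ H d := wt_nonneg _ _ (by norm_num) (by norm_num) (by norm_num) (by norm_num) P hP
  have h0 : ∀ d, 0 ≤ h d := wt_nonneg _ _ (by norm_num) (by norm_num) (by norm_num) (by norm_num) P hP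
  set bH := 3 * Real.exp (- ((1 / 2 + 1) * S)) with hbH
  set bh := 3 * Real.exp (- ((1 / 2 + 0) * S)) with hbh
  have sH : ∀ X : ℕ, 2 ^ 2 ^ i ≤ X → ∑ d ∈ Finset.range X, H d ≤ bH * X :=
    fun X hX => sieve_i i hi X hX 1 (by norm_num) (by norm_num)
  have sh : ∀ X : ℕ, 2 ^ 2 ^ i ≤ X → ∑ d ∈ Finset.range X, h d ≤ bh * X :=
    fun X hX => sieve_i i hi X hX 0 (by norm_num) (by norm_num)
  have b1 := bilinear H h H0 h0 bH bh (by positivity) (2 ^ i) N sH sh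
  have b2 := bilinear h H h0 H0 bh bH (by positivity) (2 ^ i) N sh sH
  set A := (Finset.Ico (2 ^ 2 ^ i) (2 ^ (2 * 2 ^ i)) ×ˢ Finset.Icc (2 ^ 2 ^ i) N).filter
      (fun p => p.1 * p.2 ≤ N) with hA
  have hone : ∀ p ∈ Gset i N, (1:ℝ) ≤ Real.exp (5 / 4 * S * Real.log 2) * (H p.1 * h p.2) := by
    intro p hp
    simp only [Gset, Finset.mem_filter] at hp
    obtain ⟨_, _, hpr, hbad, hd, _, _⟩ := hp
    have hnd : ∀ q ∈ P, ¬ q ∣ p.1 + 1 := by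
      intro q hq hdvd
      have hlt := Nat.lt_of_mem_primesBelow hq
      have := (Nat.prime_dvd_prime_iff_eq (hP q hq) hpr).1 hdvd
      have : 2 ^ Wi i ≤ 2 ^ 2 ^ i := Nat.pow_le_pow_right two_pos (Wi_le i)
      omega
    rw [hH, hh, wt_one P _ hnd, wt_zero, ← pow_add]
    unfold Bad at hbad
    push Not at hbad
    have ho : ((om 1 P p.1 + om 1 P p.2 : ℕ) : ℝ) ≤ 5 / 4 * S := by
      have h1 : ((om 1 P p.1 + om 1 P p.2 : ℕ) : ℝ) ≤ ((om 1 P (p.1 * p.2) + om 2 P (p.1 * p.2) : ℕ) : ℝ) := by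
        exact_mod_cast om_add P p.1 p.2
      push_cast at h1 ⊢
      have h2 := hbad.1
      have h3 := hbad.2
      linarith
    have hl2 : 0 ≤ Real.log 2 := Real.log_nonneg (by norm_num)
    have h4 : (2:ℝ) ^ (om 1 P p.1 + om 1 P p.2) ≤ Real.exp (5 / 4 * S * Real.log 2) := by
      calc (2:ℝ) ^ (om 1 P p.1 + om 1 P p.2) = Real.exp ((om 1 P p.1 + om 1 P p.2 : ℕ) * Real.log 2) := by
            rw [Real.exp_nat_mul, Real.exp_log (by norm_num)]
        _ ≤ _ := by rw [Real.exp_le_exp]; gcongr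
    rw [one_div, inv_pow, ← div_eq_mul_inv, le_div_iff₀ (by positivity), one_mul]
    exact h4
  have hsub : Gset i N ⊆ A ∪ A.image Prod.swap := by
    intro p hp
    simp only [Gset, Finset.mem_filter, Finset.mem_product, Finset.mem_Icc] at hp
    obtain ⟨⟨⟨_, h1⟩, ⟨_, h2⟩⟩, hN, _, _, hd, hm, hor⟩ := hp
    have e : 2 ^ (i + 1) = 2 * 2 ^ i := by rw [pow_succ]; ring
    rw [e] at hor
    rw [Finset.mem_union]
    rcases hor with ho | ho
    · left
      simp only [hA, Finset.mem_filter, Finset.mem_product, Finset.mem_Icc, Finset.mem_Ico]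
      exact ⟨⟨⟨hd, ho⟩, ⟨hm, h2⟩⟩, hN⟩
    · right
      refine Finset.mem_image.2 ⟨p.swap, ?_, Prod.swap_swap p⟩
      simp only [hA, Finset.mem_filter, Finset.mem_product, Finset.mem_Icc, Finset.mem_Ico,
        Prod.fst_swap, Prod.snd_swap]
      exact ⟨⟨⟨hm, ho⟩, ⟨hd, h1⟩⟩, by rw [mul_comm]; exact hN⟩
  have hf0 : ∀ p : ℕ × ℕ, 0 ≤ H p.1 * h p.2 := fun p => mul_nonneg (H0 _) (h0 _)
  have hsum : ∑ p ∈ Gset i N, H p.1 * h p.2 ≤ 8 * 2 ^ i * bH * bh * N := by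
    calc _ ≤ ∑ p ∈ A ∪ A.image Prod.swap, H p.1 * h p.2 :=
          Finset.sum_le_sum_of_subset_of_nonneg hsub (fun p _ _ => hf0 p)
      _ ≤ ∑ p ∈ A, H p.1 * h p.2 + ∑ p ∈ A.image Prod.swap, H p.1 * h p.2 := by
          have := Finset.sum_union_inter (s₁ := A) (s₂ := A.image Prod.swap) (f := fun p => H p.1 * h p.2)
          have h2 : 0 ≤ ∑ p ∈ A ∩ A.image Prod.swap, H p.1 * h p.2 := Finset.sum_nonneg fun p _ => hf0 p
          linarith
      _ = ∑ p ∈ A, H p.1 * h p.2 + ∑ p ∈ A, h p.1 * H p.2 := by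
          congr 1
          rw [Finset.sum_image (fun a _ b _ hab => Prod.swap_injective hab)]
          refine Finset.sum_congr rfl fun p _ => ?_
          rw [Prod.fst_swap, Prod.snd_swap, mul_comm]
      _ ≤ _ := by
          push_cast at b1 b2
          linarith
  calc ((Gset i N).card : ℝ) = ∑ p ∈ Gset i N, (1:ℝ) := by simp
    _ ≤ ∑ p ∈ Gset i N, Real.exp (5 / 4 * S * Real.log 2) * (H p.1 * h p.2) := Finset.sum_le_sum hone
    _ = Real.exp (5 / 4 * S * Real.log 2) * ∑ p ∈ Gset i N, (H p.1 * h p.2) := by rw [Finset.mul_sum]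
    _ ≤ Real.exp (5 / 4 * S * Real.log 2) * (8 * 2 ^ i * bH * bh * N) := by gcongr
    _ = _ := by
        rw [Real.exp_add, show -2 * S = - ((1 / 2 + 1) * S) + - ((1 / 2 + 0) * S) by ring, Real.exp_add]
        rw [hbH, hbh]
        ring

lemma SP_Wi (i : ℕ) : 19 / 20 * i * Real.log 2 - 2 ≤ SP (Wi i) := by
  refine le_trans ?_ (SP_lower (Wi i) (Wi_pos i))
  unfold Wi
  push_cast
  rw [Real.log_pow]
  have hl2 : 0 ≤ Real.log 2 := Real.log_nonneg (by norm_num)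
  have h1 : (19:ℝ) / 20 * i ≤ ((i - i / 20 : ℕ) : ℝ) := by
    have : 19 * i ≤ 20 * (i - i / 20) := by omega
    have : (19:ℝ) * i ≤ 20 * ((i - i / 20 : ℕ) : ℝ) := by exact_mod_cast this
    linarith
  nlinarith

lemma Gset_card' (i N : ℕ) (hi : 360 ≤ i) :
    ((Gset i N).card : ℝ) ≤ 2000 * N * Real.exp (- (1 / 250) * i) := by
  refine (Gset_card i N hi).trans ?_
  have hS := SP_Wi i
  have l1 := Real.log_two_gt_d9
  have l2 := Real.log_two_lt_d9
  have hS0 := SP_nonneg (Wi i)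
  set S := SP (Wi i)
  have hi0 : (0:ℝ) ≤ i := by positivity
  have h2 : (2:ℝ) ^ i = Real.exp (i * Real.log 2) := by
    rw [Real.exp_nat_mul, Real.exp_log (by norm_num)]
  have key : i * Real.log 2 + (-2 * S + 5 / 4 * S * Real.log 2) ≤ 3 + - (1 / 250) * i := by
    have a1 : -2 * S + 5 / 4 * S * Real.log 2 ≤ - (1133 / 1000) * S := by nlinarith
    have a2 : 19 / 20 * (6931 / 10000) * i - 2 ≤ S := by nlinarith
    nlinarith
  have e3 : Real.exp 3 ≤ 27 := by
    have : Real.exp 3 = Real.exp 1 ^ 3 := by rw [← Real.exp_nat_mul]; norm_num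
    rw [this]
    have e := Real.exp_one_lt_d9
    calc Real.exp 1 ^ 3 ≤ 3 ^ 3 := by gcongr; linarith
      _ = 27 := by norm_num
  have hx := Real.exp_pos (- (1 / 250) * (i:ℝ))
  calc 72 * 2 ^ i * N * Real.exp (-2 * S + 5 / 4 * S * Real.log 2)
      = 72 * N * Real.exp (i * Real.log 2 + (-2 * S + 5 / 4 * S * Real.log 2)) := by
        rw [Real.exp_add (i * Real.log 2), h2]; ring
    _ ≤ 72 * N * Real.exp (3 + - (1 / 250) * i) := by gcongr
    _ = 72 * N * (Real.exp 3 * Real.exp (- (1 / 250) * i)) := by rw [Real.exp_add]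
    _ ≤ 72 * N * (27 * Real.exp (- (1 / 250) * i)) := by gcongr
    _ ≤ _ := by
        have : (0:ℝ) ≤ N * Real.exp (- (1 / 250) * i) := by positivity
        linarith

open Classical in
lemma bad_count' (i N : ℕ) :
    (((Finset.Icc 1 N).filter (fun n => Bad (Wi i) n)).card : ℝ) ≤ 24 * N * Real.exp (- (1 / 250) * i) := by
  refine (bad_count (Wi i) N).trans ?_
  have hS := SP_Wi i
  have l1 := Real.log_two_gt_d9
  have hi0 : (0:ℝ) ≤ i := by positivity
  set S := SP (Wi i)
  have key : - (7 / 1000) * S ≤ 1 + - (1 / 250) * i := by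
    have a2 : 19 / 20 * (6931 / 10000) * i - 2 ≤ S := by nlinarith
    nlinarith
  have e := Real.exp_one_lt_d9
  calc 8 * N * Real.exp (- (7 / 1000) * S) ≤ 8 * N * Real.exp (1 + - (1 / 250) * i) := by gcongr
    _ = 8 * N * (Real.exp 1 * Real.exp (- (1 / 250) * i)) := by rw [Real.exp_add]
    _ ≤ 8 * N * (3 * Real.exp (- (1 / 250) * i)) := by gcongr; linarith
    _ = _ := by ring

/-- pairs with small shifted prime -/
def Bset (k N : ℕ) : Finset (ℕ × ℕ) :=
  (Finset.Icc 1 N ×ˢ Finset.Icc 1 N).filter (fun p => p.1 * p.2 ≤ N ∧ Nat.Prime (p.1 + 1) ∧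
    p.1 < 2 ^ 2 ^ k)

/-- pairs with small cofactor -/
def Cset (k N : ℕ) : Finset (ℕ × ℕ) :=
  (Finset.Icc 1 N ×ˢ Finset.Icc 1 N).filter (fun p => p.1 * p.2 ≤ N ∧ Nat.Prime (p.1 + 1) ∧
    2 ^ 2 ^ k ≤ p.1 ∧ p.2 < 2 ^ 2 ^ k)

lemma Bset_card (k N : ℕ) : ((Bset k N).card : ℝ) ≤ 24 * (k + 1) * N := by
  generalize hZ : 2 ^ 2 ^ k = Z
  have hr := shp_recip k
  rw [hZ] at hr
  have hsub : Bset k N ⊆ ((Finset.Ico 1 Z).filter (fun d => Nat.Prime (d + 1))).biUnion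
      (fun d => (Finset.Icc 1 (N / d)).image (fun m => (d, m))) := by
    intro p hp
    simp only [Bset, hZ, Finset.mem_filter, Finset.mem_product, Finset.mem_Icc] at hp
    obtain ⟨⟨⟨h1, h2⟩, h3, h4⟩, h5, h6, h7⟩ := hp
    refine Finset.mem_biUnion.2 ⟨p.1, ?_, ?_⟩
    · simp only [Finset.mem_filter, Finset.mem_Ico]; exact ⟨⟨h1, h7⟩, h6⟩
    · refine Finset.mem_image.2 ⟨p.2, ?_, rfl⟩
      rw [Finset.mem_Icc]
      exact ⟨h3, (Nat.le_div_iff_mul_le h1).2 (by rw [mul_comm]; exact h5)⟩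
  have hc := (Finset.card_le_card hsub).trans Finset.card_biUnion_le
  have hc' : ((Bset k N).card : ℝ) ≤ ∑ d ∈ (Finset.Ico 1 Z).filter (fun d => Nat.Prime (d + 1)),
      (N : ℝ) / d := by
    refine le_trans (Nat.cast_le.2 hc) ?_
    push_cast
    refine Finset.sum_le_sum fun d _ => ?_
    refine le_trans (Nat.cast_le.2 Finset.card_image_le) ?_
    rw [Nat.card_Icc, Nat.add_sub_cancel]
    exact Nat.cast_div_le
  refine hc'.trans ?_
  rw [Finset.sum_filter]
  calc _ = N * ∑ d ∈ Finset.Ico 1 Z, shp d / d := by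
        rw [Finset.mul_sum]
        refine Finset.sum_congr rfl fun d _ => ?_
        unfold shp
        split_ifs <;> ring
    _ ≤ N * (24 * (k + 1)) := by gcongr
    _ = _ := by ring

lemma harm (Z : ℕ) : ∑ m ∈ Finset.Ico 1 Z, (1:ℝ) / m ≤ 1 + Real.log Z := by
  have h := harmonic_le_one_add_log Z
  refine le_trans ?_ h
  unfold harmonic
  push_cast
  calc ∑ m ∈ Finset.Ico 1 Z, (1:ℝ) / m ≤ ∑ m ∈ Finset.Ico 1 (Z + 1), (1:ℝ) / m := by
        refine Finset.sum_le_sum_of_subset_of_nonneg ?_ (fun _ _ _ => by positivity)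
        exact Finset.Ico_subset_Ico_right (Nat.le_succ Z)
    _ = _ := by
        rw [Finset.sum_Ico_eq_sum_range]
        simp only [Nat.add_sub_cancel]
        refine Finset.sum_congr rfl fun m _ => ?_
        push_cast
        rw [one_div, add_comm]

lemma pcount (Z n : ℕ) (hZ : 2 ≤ Z) :
    (((Finset.Icc 1 n).filter (fun d => Nat.Prime (d + 1) ∧ Z ≤ d)).card : ℝ)
      ≤ 16 * n / Real.log Z := by
  have hZ2 : (2:ℝ) ≤ Z := by exact_mod_cast hZ
  have hl : 0 < Real.log Z := Real.log_pos (by linarith)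
  by_cases hn : n < Z
  · have : (Finset.Icc 1 n).filter (fun d => Nat.Prime (d + 1) ∧ Z ≤ d) = ∅ := by
      refine Finset.filter_eq_empty_iff.2 fun d hd => ?_
      rw [Finset.mem_Icc] at hd
      rintro ⟨_, h⟩
      omega
    rw [this]
    simp only [Finset.card_empty, Nat.cast_zero]
    positivity
  · push Not at hn
    have hn2 : (Z:ℝ) ≤ n := by exact_mod_cast hn
    have h1 : (((Finset.Icc 1 n).filter (fun d => Nat.Prime (d + 1) ∧ Z ≤ d)).card : ℝ)
        ≤ ∑ d ∈ Finset.range (n + 1), shp d := by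
      unfold shp
      rw [Finset.sum_boole]
      refine Nat.cast_le.2 (Finset.card_le_card ?_)
      intro d hd
      simp only [Finset.mem_filter, Finset.mem_Icc, Finset.mem_range] at hd ⊢
      exact ⟨by omega, hd.2.1⟩
    refine h1.trans ((shp_sum _).trans ((pi_bound (n + 1) (by omega)).trans ?_))
    push_cast
    have h2 : Real.log Z ≤ Real.log (n + 1) := Real.log_le_log (by linarith) (by linarith)
    exact div_le_div₀ (by positivity) (by linarith) hl h2

lemma Cset_card (k N : ℕ) : ((Cset k N).card : ℝ) ≤ 48 * N := by
  have hZ2 : 2 ≤ 2 ^ 2 ^ k := by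
    calc 2 = 2 ^ 1 := rfl
      _ ≤ _ := Nat.pow_le_pow_right two_pos Nat.one_le_two_pow
  generalize hZ : 2 ^ 2 ^ k = Z at hZ2
  have hsub : Cset k N ⊆ (Finset.Ico 1 Z).biUnion
      (fun m => ((Finset.Icc 1 (N / m)).filter (fun d => Nat.Prime (d + 1) ∧ Z ≤ d)).image
        (fun d => (d, m))) := by
    intro p hp
    simp only [Cset, hZ, Finset.mem_filter, Finset.mem_product, Finset.mem_Icc] at hp
    obtain ⟨⟨⟨h1, h2⟩, h3, h4⟩, h5, h6, h7, h8⟩ := hp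
    refine Finset.mem_biUnion.2 ⟨p.2, ?_, ?_⟩
    · rw [Finset.mem_Ico]; exact ⟨h3, h8⟩
    · refine Finset.mem_image.2 ⟨p.1, ?_, rfl⟩
      rw [Finset.mem_filter, Finset.mem_Icc]
      exact ⟨⟨h1, (Nat.le_div_iff_mul_le h3).2 h5⟩, h6, h7⟩
  have hc := (Finset.card_le_card hsub).trans Finset.card_biUnion_le
  have hZ3 : (2:ℝ) ≤ Z := by exact_mod_cast hZ2
  have hl : 1 / 2 ≤ Real.log Z := by
    have h1 := Real.log_le_log (by norm_num) hZ3
    have h2 := Real.log_two_gt_d9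
    linarith
  have hl0 : 0 < Real.log Z := by linarith
  have hc' : ((Cset k N).card : ℝ) ≤ ∑ m ∈ Finset.Ico 1 Z, 16 * (N : ℝ) / Real.log Z * (1 / m) := by
    refine le_trans (Nat.cast_le.2 hc) ?_
    push_cast
    refine Finset.sum_le_sum fun m _ => ?_
    refine le_trans (Nat.cast_le.2 Finset.card_image_le) ?_
    refine (pcount Z (N / m) hZ2).trans ?_
    have : ((N / m : ℕ) : ℝ) ≤ N / m := Nat.cast_div_le
    calc _ ≤ 16 * ((N : ℝ) / m) / Real.log Z := by gcongr
      _ = _ := by ring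
  refine hc'.trans ?_
  rw [← Finset.mul_sum]
  calc _ ≤ 16 * (N : ℝ) / Real.log Z * (1 + Real.log Z) := by
        gcongr; exact harm Z
    _ ≤ 16 * (N : ℝ) / Real.log Z * (3 * Real.log Z) := by gcongr; linarith
    _ = _ := by field_simp; ring

lemma geo (k M : ℕ) (h : k ≤ M) :
    ∑ i ∈ Finset.Ico k M, Real.exp (- (1 / 250) * (i : ℝ)) ≤ 251 * Real.exp (- (1 / 250) * (k : ℝ)) := by
  have h1 : ∑ i ∈ Finset.Ico k M, Real.exp (- (1 / 250) * (i : ℝ))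
      ≤ 251 * (Real.exp (- (1 / 250) * (k : ℝ)) - Real.exp (- (1 / 250) * (M : ℝ))) := by
    induction M, h using Nat.le_induction with
    | base => simp
    | succ M hM ih =>
      rw [Finset.sum_Ico_succ_top hM]
      have e : Real.exp (- (1 / 250) * (M : ℝ)) =
          Real.exp (- (1 / 250) * ((M + 1 : ℕ) : ℝ)) * Real.exp (1 / 250) := by
        rw [← Real.exp_add]; congr 1; push_cast; ring
      have e2 := Real.add_one_le_exp (1 / 250 : ℝ)
      have e3 := Real.exp_pos (- (1 / 250) * ((M + 1 : ℕ) : ℝ))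
      nlinarith
  have := Real.exp_pos (- (1 / 250) * (M : ℝ))
  linarith

/-- `n` is good in all windows -/
def Good (k N n : ℕ) : Prop := ∀ i ∈ Finset.Ico k (N + 1), ¬ Bad (Wi i) n

open Classical in
lemma cover (k N : ℕ) :
    ∑ n ∈ (Finset.Icc 1 N).filter (fun n => Good k N n), omegaStar n
      ≤ (Bset k N).card + (Cset k N).card + ∑ i ∈ Finset.Ico k (N + 1), (Gset i N).card := by
  set T := (Finset.Icc 1 N).filter (fun n => Good k N n) with hT
  have h1 : ∑ n ∈ T, omegaStar n
      = (T.sigma (fun n => n.divisors.filter (fun d => Nat.Prime (d + 1)))).card := by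
    rw [Finset.card_sigma]; rfl
  rw [h1]
  have h2 : (T.sigma (fun n => n.divisors.filter (fun d => Nat.Prime (d + 1)))).card
      ≤ ((Bset k N ∪ Cset k N) ∪ (Finset.Ico k (N + 1)).biUnion (fun i => Gset i N)).card := by
    refine Finset.card_le_card_of_injOn (fun q => (q.2, q.1 / q.2)) ?_ ?_
    · rintro ⟨n, d⟩ hq
      rw [Finset.mem_coe, Finset.mem_sigma, Finset.mem_filter (s := Nat.divisors _), Nat.mem_divisors] at hq
      obtain ⟨hn, ⟨hd, hn0⟩, hp⟩ := hq
      simp only at hn hd hn0 hp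
      obtain ⟨m, rfl⟩ := hd
      have hd0 : 0 < d := Nat.pos_of_ne_zero (by rintro rfl; simp at hn0)
      have hm0 : 0 < m := Nat.pos_of_ne_zero (by rintro rfl; simp at hn0)
      simp only [Nat.mul_div_cancel_left m hd0]
      rw [hT, Finset.mem_filter, Finset.mem_Icc] at hn
      obtain ⟨⟨_, hN⟩, hbad⟩ := hn
      have hdN : d ≤ N := le_trans (Nat.le_mul_of_pos_right d hm0) hN
      have hmN : m ≤ N := le_trans (Nat.le_mul_of_pos_left m hd0) hN
      have hmem : (d, m) ∈ Finset.Icc 1 N ×ˢ Finset.Icc 1 N := by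
        rw [Finset.mem_product, Finset.mem_Icc, Finset.mem_Icc]
        exact ⟨⟨hd0, hdN⟩, hm0, hmN⟩
      rw [Finset.mem_coe, Finset.mem_union, Finset.mem_union]
      by_cases hdZ : d < 2 ^ 2 ^ k
      · left; left
        exact Finset.mem_filter.2 ⟨hmem, hN, hp, hdZ⟩
      push Not at hdZ
      by_cases hmZ : m < 2 ^ 2 ^ k
      · left; right
        exact Finset.mem_filter.2 ⟨hmem, hN, hp, hdZ, hmZ⟩
      push Not at hmZ
      right
      obtain ⟨μ, hμ⟩ : ∃ μ, μ = min d m := ⟨_, rfl⟩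
      have hμZ : 2 ^ 2 ^ k ≤ μ := by rw [hμ]; exact le_min hdZ hmZ
      have hμd : μ ≤ d := by rw [hμ]; exact min_le_left _ _
      have hμm : μ ≤ m := by rw [hμ]; exact min_le_right _ _
      have hμ0 : μ ≠ 0 := by
        have : 0 < 2 ^ 2 ^ k := by positivity
        omega
      have hl0 : 2 ^ k ≤ Nat.log 2 μ := Nat.le_log_of_pow_le one_lt_two hμZ
      have hl1 : Nat.log 2 μ ≠ 0 := by
        have : 0 < 2 ^ k := by positivity
        omega
      obtain ⟨i, hi⟩ : ∃ i, i = Nat.log 2 (Nat.log 2 μ) := ⟨_, rfl⟩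
      have hik : k ≤ i := by rw [hi]; exact Nat.le_log_of_pow_le one_lt_two hl0
      have hiN : i < N + 1 := by
        have a1 : i ≤ Nat.log 2 μ := by rw [hi]; exact Nat.log_le_self _ _
        have a2 : Nat.log 2 μ ≤ μ := Nat.log_le_self _ _
        omega
      have hlo : 2 ^ 2 ^ i ≤ μ := by
        have a1 : 2 ^ i ≤ Nat.log 2 μ := by rw [hi]; exact Nat.pow_log_le_self 2 hl1
        exact (Nat.pow_le_pow_right two_pos a1).trans (Nat.pow_log_le_self 2 hμ0)
      have hhi : μ < 2 ^ 2 ^ (i + 1) := by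
        have a1 : Nat.log 2 μ < 2 ^ (i + 1) := by
          rw [hi]; exact Nat.lt_pow_succ_log_self one_lt_two _
        exact (Nat.lt_pow_succ_log_self one_lt_two μ).trans_le (Nat.pow_le_pow_right two_pos a1)
      have himem : i ∈ Finset.Ico k (N + 1) := Finset.mem_Ico.2 ⟨hik, hiN⟩
      refine Finset.mem_biUnion.2 ⟨i, himem, ?_⟩
      refine Finset.mem_filter.2 ⟨hmem, hN, hp, hbad i himem, hlo.trans hμd, hlo.trans hμm, ?_⟩
      rcases min_choice d m with h | h
      · left; rw [hμ, h] at hhi; exact hhi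
      · right; rw [hμ, h] at hhi; exact hhi
    · rintro ⟨n, d⟩ hq ⟨n', d'⟩ hq' heq
      rw [Finset.mem_coe, Finset.mem_sigma, Finset.mem_filter (s := Nat.divisors _), Nat.mem_divisors] at hq hq'
      have b1 : d ∣ n := hq.2.1.1
      have b2 : d' ∣ n' := hq'.2.1.1
      simp only [Prod.mk.injEq] at heq
      obtain ⟨e1, e2⟩ := heq
      have c1 := Nat.mul_div_cancel' b1
      have c2 := Nat.mul_div_cancel' b2
      subst e1
      rw [← c1, ← c2, e2]
  refine h2.trans ((Finset.card_union_le _ _).trans ?_)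
  exact Nat.add_le_add (Finset.card_union_le _ _) Finset.card_biUnion_le

theorem N_upper_bound :
    ∃ C : ℝ, C > 0 ∧ ∃ y₀ : ℝ, ∀ x y : ℝ, x ≥ 1 → y ≥ y₀ →
      (((Finset.Icc 1 ⌊x⌋₊).filter (fun n => y ≤ (omegaStar n : ℝ))).card : ℝ)
        ≤ C * x * Real.log y / y := by
  classical
  refine ⟨300000, by norm_num, Real.exp 2, fun x y hx hy => ?_⟩
  have hy1 : 1 ≤ y := by
    have := Real.add_one_le_exp (2:ℝ)
    linarith
  have hy0 : 0 < y := by linarith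
  have hNx : (⌊x⌋₊ : ℝ) ≤ x := Nat.floor_le (by linarith)
  generalize ⌊x⌋₊ = N at hNx ⊢
  have hL : 2 ≤ Real.log y := (Real.le_log_iff_exp_le hy0).2 hy
  set L := Real.log y with hLdef
  obtain ⟨k, hk⟩ : ∃ k, k = ⌈250 * L⌉₊ := ⟨_, rfl⟩
  have hk1 : 250 * L ≤ k := by rw [hk]; exact Nat.le_ceil _
  have hk2 : (k:ℝ) ≤ 250 * L + 1 := by rw [hk]; exact (Nat.ceil_lt_add_one (by linarith)).le
  have hk3 : 360 ≤ k := by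
    have : (360:ℝ) ≤ k := by linarith
    exact_mod_cast this
  have hek : Real.exp (- (1 / 250) * (k:ℝ)) ≤ 1 / y := by
    calc Real.exp (- (1 / 250) * (k:ℝ)) ≤ Real.exp (- L) := by
          rw [Real.exp_le_exp]; linarith
      _ = 1 / y := by rw [Real.exp_neg, hLdef, Real.exp_log hy0, one_div]
  have hgeo : ∑ i ∈ Finset.Ico k (N + 1), Real.exp (- (1 / 250) * (i : ℝ)) ≤ 251 / y := by
    rcases le_total k (N + 1) with h | h
    · refine (geo k (N + 1) h).trans ?_
      calc _ ≤ 251 * (1 / y) := by gcongr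
        _ = _ := by ring
    · rw [Finset.Ico_eq_empty_of_le h]
      simp only [Finset.sum_empty]
      positivity
  set T := (Finset.Icc 1 N).filter (fun n => Good k N n) with hT
  have hsub : (Finset.Icc 1 N).filter (fun n => y ≤ (omegaStar n : ℝ)) ⊆
      T.filter (fun n => y ≤ (omegaStar n : ℝ)) ∪
      (Finset.Ico k (N + 1)).biUnion (fun i => (Finset.Icc 1 N).filter (fun n => Bad (Wi i) n)) := by
    intro n hn
    rw [Finset.mem_filter] at hn
    rw [Finset.mem_union]
    by_cases h : Good k N n
    · left
      exact Finset.mem_filter.2 ⟨Finset.mem_filter.2 ⟨hn.1, h⟩, hn.2⟩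
    · right
      unfold Good at h
      push Not at h
      obtain ⟨i, hi, hb⟩ := h
      exact Finset.mem_biUnion.2 ⟨i, hi, Finset.mem_filter.2 ⟨hn.1, hb⟩⟩
  have hN0 : (0:ℝ) ≤ N := Nat.cast_nonneg N
  have hbad : (((Finset.Ico k (N + 1)).biUnion
      (fun i => (Finset.Icc 1 N).filter (fun n => Bad (Wi i) n))).card : ℝ) ≤ 6024 * N / y := by
    refine le_trans (Nat.cast_le.2 Finset.card_biUnion_le) ?_
    push_cast
    calc _ ≤ ∑ i ∈ Finset.Ico k (N + 1), 24 * (N:ℝ) * Real.exp (- (1 / 250) * (i : ℝ)) :=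
          Finset.sum_le_sum fun i _ => bad_count' i N
      _ = 24 * N * ∑ i ∈ Finset.Ico k (N + 1), Real.exp (- (1 / 250) * (i : ℝ)) := by
          rw [Finset.mul_sum]
      _ ≤ 24 * N * (251 / y) := by gcongr
      _ = _ := by ring
  have hG : ((∑ i ∈ Finset.Ico k (N + 1), (Gset i N).card : ℕ) : ℝ) ≤ 502000 * N := by
    push_cast
    calc _ ≤ ∑ i ∈ Finset.Ico k (N + 1), 2000 * (N:ℝ) * Real.exp (- (1 / 250) * (i : ℝ)) :=
          Finset.sum_le_sum fun i hi => Gset_card' i N (hk3.trans (Finset.mem_Ico.1 hi).1)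
      _ = 2000 * N * ∑ i ∈ Finset.Ico k (N + 1), Real.exp (- (1 / 250) * (i : ℝ)) := by
          rw [Finset.mul_sum]
      _ ≤ 2000 * N * (251 / y) := by gcongr
      _ ≤ 2000 * N * 251 := by
          gcongr
          exact div_le_self (by norm_num) hy1
      _ = _ := by ring
  have hsum : ((∑ n ∈ T, omegaStar n : ℕ) : ℝ) ≤ 280000 * L * N := by
    have h1 : ((∑ n ∈ T, omegaStar n : ℕ) : ℝ) ≤ (((Bset k N).card + (Cset k N).card
        + ∑ i ∈ Finset.Ico k (N + 1), (Gset i N).card : ℕ) : ℝ) := Nat.cast_le.2 (cover k N)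
    rw [Nat.cast_add, Nat.cast_add] at h1
    have h2 := Bset_card k N
    have h3 := Cset_card k N
    have h4 : 24 * ((k:ℝ) + 1) * N ≤ 24 * (250 * L + 1 + 1) * N := by gcongr
    have h5 : 2 * (N:ℝ) ≤ L * N := by gcongr
    linarith
  have hmark : ((T.filter (fun n => y ≤ (omegaStar n : ℝ))).card : ℝ) * y ≤ 280000 * L * N := by
    refine le_trans ?_ hsum
    push_cast
    calc ((T.filter (fun n => y ≤ (omegaStar n : ℝ))).card : ℝ) * y
        = ∑ n ∈ T.filter (fun n => y ≤ (omegaStar n : ℝ)), y := by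
          rw [Finset.sum_const, nsmul_eq_mul]
      _ ≤ ∑ n ∈ T.filter (fun n => y ≤ (omegaStar n : ℝ)), (omegaStar n : ℝ) :=
          Finset.sum_le_sum fun n hn => (Finset.mem_filter.1 hn).2
      _ ≤ _ := Finset.sum_le_sum_of_subset_of_nonneg (Finset.filter_subset _ _)
          (fun _ _ _ => Nat.cast_nonneg _)
  have hfin := (Finset.card_le_card hsub).trans (Finset.card_union_le _ _)
  have hfin' : (((Finset.Icc 1 N).filter (fun n => y ≤ (omegaStar n : ℝ))).card : ℝ) ≤
      ((T.filter (fun n => y ≤ (omegaStar n : ℝ))).card : ℝ) + (((Finset.Ico k (N + 1)).biUnion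
      (fun i => (Finset.Icc 1 N).filter (fun n => Bad (Wi i) n))).card : ℝ) := by
    exact_mod_cast hfin
  rw [le_div_iff₀ hy0]
  rw [le_div_iff₀ hy0] at hbad
  have h6 := mul_le_mul_of_nonneg_right hfin' hy0.le
  rw [add_mul] at h6
  have h7 : 2 * (N:ℝ) ≤ L * N := by gcongr
  have h8 : L * N ≤ L * x := by gcongr
  have h9 : 0 ≤ L * x := by positivity
  linarith
end

section
/- There is a constant c > 0 and a real number y₀ such that for all x ≥ 1 and all y ≥ y₀, the number N(x,y) of positive integers n ≤ x with ω*(n) ≥ y satisfies N(x,y) ≥ ⌊x / y^{c·log log y}⌋. -/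
open Filter Real

/-- the centred weight `d * 1_{n ≡ 1 (d)} - 1` -/
noncomputable def Wt (d n : ℕ) : ℝ := (if n ≡ 1 [MOD d] then (d : ℝ) else 0) - 1

lemma cnt_modEq (d a b c : ℕ) (hd : 0 < d) (hab : a ≤ b) :
    |(d : ℝ) * ((Finset.Ioc a b).filter (fun n => n ≡ c [MOD d])).card - ((b : ℝ) - a)| ≤ d := by
  have h := Nat.Ioc_filter_modEq_card a b hd c
  have hd' : (0 : ℚ) < d := by exact_mod_cast hd
  have h1 := Int.floor_le (((b : ℚ) - c) / d)
  have h2 := Int.lt_floor_add_one (((b : ℚ) - c) / d)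
  have h3 := Int.floor_le (((a : ℚ) - c) / d)
  have h4 := Int.lt_floor_add_one (((a : ℚ) - c) / d)
  have hmono : ⌊((a : ℚ) - c) / d⌋ ≤ ⌊((b : ℚ) - c) / d⌋ := by
    apply Int.floor_le_floor
    have : (a : ℚ) ≤ b := by exact_mod_cast hab
    gcongr
  rw [max_eq_left (by omega)] at h
  set k := ((Finset.Ioc a b).filter (fun n => n ≡ c [MOD d])).card with hk
  have hq : (k : ℚ) = ⌊((b : ℚ) - c) / d⌋ - ⌊((a : ℚ) - c) / d⌋ := by exact_mod_cast h
  have e1 : ((b : ℚ) - c) / d - (((a : ℚ) - c) / d) = (b - a) / d := by ring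
  have key : |(d : ℚ) * k - ((b : ℚ) - a)| ≤ d := by
    have e2 : (d : ℚ) * ((b - a) / d) = b - a := by field_simp
    have e3 : |(k : ℚ) - (b - a) / d| ≤ 1 := by
      rw [abs_le]; constructor <;> linarith
    calc |(d : ℚ) * k - ((b : ℚ) - a)| = |(d : ℚ) * ((k : ℚ) - ((b : ℚ) - a) / d)| := by rw [mul_sub, e2]
      _ = d * |(k : ℚ) - (b - a) / d| := by rw [abs_mul, abs_of_pos hd']
      _ ≤ d * 1 := by gcongr
      _ = d := by ring
  exact_mod_cast key

lemma cnt_mul_modEq (d m a b : ℕ) (hd : 1 < d) (hm : m.Coprime d) (hab : a ≤ b) :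
    |(d : ℝ) * ((Finset.Ioc a b).filter (fun n => m * n ≡ 1 [MOD d])).card - ((b : ℝ) - a)|
      ≤ d := by
  obtain ⟨c, hc⟩ : ∃ c, m * c ≡ 1 [MOD d] := by
    obtain ⟨c, -, hc⟩ := Nat.exists_mul_mod_eq_one_of_coprime hm hd
    exact ⟨c, by rw [Nat.ModEq, hc, Nat.mod_eq_of_lt hd]⟩
  have : (Finset.Ioc a b).filter (fun n => m * n ≡ 1 [MOD d]) =
      (Finset.Ioc a b).filter (fun n => n ≡ c [MOD d]) := by
    apply Finset.filter_congr
    intro n _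
    constructor
    · intro h
      exact Nat.ModEq.cancel_left_of_coprime (by rwa [Nat.coprime_iff_gcd_eq_one, Nat.gcd_comm] at hm) (h.trans hc.symm)
    · intro h
      exact (h.mul_left m).trans hc
  rw [this]
  exact cnt_modEq d a b c (by omega) hab

lemma coprime_of_mul_modEq_one {d m n : ℕ} (h : m * n ≡ 1 [MOD d]) : m.Coprime d := by
  have h1 : (m * n).gcd d = 1 := by rw [h.gcd_eq]; simp
  exact Nat.Coprime.coprime_dvd_left (Dvd.intro n rfl) h1

lemma Wt_of_not_coprime {d m n : ℕ} (h : ¬ m.Coprime d) : Wt d (m * n) = -1 := by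
  have : ¬ (m * n ≡ 1 [MOD d]) := fun h' => h (coprime_of_mul_modEq_one h')
  simp [Wt, this]

lemma sumWt_eq (d m a b : ℕ) (hab : a ≤ b) :
    ∑ n ∈ Finset.Ioc a b, Wt d (m * n) =
      (d : ℝ) * ((Finset.Ioc a b).filter (fun n => m * n ≡ 1 [MOD d])).card - ((b : ℝ) - a) := by
  simp only [Wt]
  rw [Finset.sum_sub_distrib, ← Finset.sum_filter]
  simp [Nat.cast_sub hab]
  ring

lemma sumWt_coprime (d m a b : ℕ) (hd : 1 < d) (hm : m.Coprime d) (hab : a ≤ b) :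
    |∑ n ∈ Finset.Ioc a b, Wt d (m * n)| ≤ d := by
  rw [sumWt_eq d m a b hab]
  exact cnt_mul_modEq d m a b hd hm hab

lemma sumWt_le (d m a b : ℕ) (hd : 1 < d) (hab : a ≤ b) :
    |∑ n ∈ Finset.Ioc a b, Wt d (m * n)| ≤ d + (if m.Coprime d then 0 else ((b : ℝ) - a)) := by
  split_ifs with h
  · simpa using sumWt_coprime d m a b hd h hab
  · have : (a : ℝ) ≤ b := by exact_mod_cast hab
    simp only [Wt_of_not_coprime h]
    simp [Nat.cast_sub hab]
    rw [abs_sub_comm, abs_of_nonneg (by linarith)]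
    linarith [Nat.cast_nonneg (α := ℝ) d]

lemma sumWt2_eq (d e m k a b : ℕ) (hab : a ≤ b) :
    ∑ n ∈ Finset.Ioc a b, Wt d (m * n) * Wt e (k * n) =
      (d : ℝ) * e * ((Finset.Ioc a b).filter
        (fun n => m * n ≡ 1 [MOD d] ∧ k * n ≡ 1 [MOD e])).card
      - ((b : ℝ) - a)
      - ∑ n ∈ Finset.Ioc a b, Wt d (m * n) - ∑ n ∈ Finset.Ioc a b, Wt e (k * n) := by
  have h1 : ∀ n, Wt d (m * n) * Wt e (k * n) =
      (if m * n ≡ 1 [MOD d] ∧ k * n ≡ 1 [MOD e] then (d : ℝ) * e else 0) - 1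
        - Wt d (m * n) - Wt e (k * n) := by
    intro n
    simp only [Wt]
    by_cases h1 : m * n ≡ 1 [MOD d] <;> by_cases h2 : k * n ≡ 1 [MOD e] <;> simp [h1, h2] <;> ring
  simp only [h1]
  rw [Finset.sum_sub_distrib, Finset.sum_sub_distrib, Finset.sum_sub_distrib, ← Finset.sum_filter]
  simp [Nat.cast_sub hab]
  ring

lemma sumWt2_coprime (d e m k a b : ℕ) (hd : 1 < d) (he : 1 < e) (hde : d.Coprime e)
    (hm : m.Coprime d) (hk : k.Coprime e) (hab : a ≤ b) :
    |∑ n ∈ Finset.Ioc a b, Wt d (m * n) * Wt e (k * n)| ≤ 3 * (d * e) := by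
  rw [sumWt2_eq d e m k a b hab]
  have h1 := sumWt_coprime d m a b hd hm hab
  have h2 := sumWt_coprime e k a b he hk hab
  obtain ⟨c, hc⟩ : ∃ c, m * c ≡ 1 [MOD d] := by
    obtain ⟨c, -, hc⟩ := Nat.exists_mul_mod_eq_one_of_coprime hm hd
    exact ⟨c, by rw [Nat.ModEq, hc, Nat.mod_eq_of_lt hd]⟩
  obtain ⟨c', hc'⟩ : ∃ c, k * c ≡ 1 [MOD e] := by
    obtain ⟨c, -, hc⟩ := Nat.exists_mul_mod_eq_one_of_coprime hk he
    exact ⟨c, by rw [Nat.ModEq, hc, Nat.mod_eq_of_lt he]⟩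
  obtain ⟨z, hz1, hz2⟩ := Nat.chineseRemainder hde c c'
  have hset : (Finset.Ioc a b).filter (fun n => m * n ≡ 1 [MOD d] ∧ k * n ≡ 1 [MOD e]) =
      (Finset.Ioc a b).filter (fun n => n ≡ z [MOD (d * e)]) := by
    apply Finset.filter_congr
    intro n _
    rw [← Nat.modEq_and_modEq_iff_modEq_mul hde]
    constructor
    · rintro ⟨h, h'⟩
      refine ⟨Nat.ModEq.trans ?_ hz1.symm, Nat.ModEq.trans ?_ hz2.symm⟩
      · exact Nat.ModEq.cancel_left_of_coprime
          (by rwa [Nat.coprime_iff_gcd_eq_one, Nat.gcd_comm] at hm) (h.trans hc.symm)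
      · exact Nat.ModEq.cancel_left_of_coprime
          (by rwa [Nat.coprime_iff_gcd_eq_one, Nat.gcd_comm] at hk) (h'.trans hc'.symm)
    · rintro ⟨h, h'⟩
      exact ⟨((h.trans hz1).mul_left m).trans hc, ((h'.trans hz2).mul_left k).trans hc'⟩
  rw [hset]
  have h3 := cnt_modEq (d * e) a b z (by positivity) hab
  push_cast at h3
  have hd' : (1 : ℝ) ≤ d := by exact_mod_cast hd.le
  have he' : (1 : ℝ) ≤ e := by exact_mod_cast he.le
  have i1 : (d : ℝ) ≤ d * e := by nlinarith
  have i2 : (e : ℝ) ≤ d * e := by nlinarith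
  rw [abs_le] at *
  constructor <;> linarith

lemma sumWt2_gcd (d e m k a b : ℕ) (hd : 1 < d) (he : 1 < e) (hab : a ≤ b) :
    |∑ n ∈ Finset.Ioc a b, Wt d (m * n) * Wt e (k * n)| ≤ 3 * (d * e) +
      ((b : ℝ) - a) * ((if m ≡ k [MOD d.gcd e] then (d.gcd e : ℝ) else 0) + 3) := by
  rw [sumWt2_eq d e m k a b hab]
  have h1 := sumWt_le d m a b hd hab
  have h2 := sumWt_le e k a b he hab
  have hab' : (0 : ℝ) ≤ (b : ℝ) - a := by
    have : (a : ℝ) ≤ b := by exact_mod_cast hab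
    linarith
  have h1' : |∑ n ∈ Finset.Ioc a b, Wt d (m * n)| ≤ d + ((b : ℝ) - a) := by
    refine h1.trans ?_
    split_ifs <;> linarith
  have h2' : |∑ n ∈ Finset.Ioc a b, Wt e (k * n)| ≤ e + ((b : ℝ) - a) := by
    refine h2.trans ?_
    split_ifs <;> linarith
  have hd' : (1 : ℝ) ≤ d := by exact_mod_cast hd.le
  have he' : (1 : ℝ) ≤ e := by exact_mod_cast he.le
  have i1 : (d : ℝ) ≤ d * e := by nlinarith
  have i2 : (e : ℝ) ≤ d * e := by nlinarith
  set S := (Finset.Ioc a b).filter (fun n => m * n ≡ 1 [MOD d] ∧ k * n ≡ 1 [MOD e]) with hS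
  have hcnt : (d : ℝ) * e * S.card ≤ d * e +
      ((b : ℝ) - a) * (if m ≡ k [MOD d.gcd e] then (d.gcd e : ℝ) else 0) := by
    rcases S.eq_empty_or_nonempty with h0 | ⟨z, hz⟩
    · rw [h0]
      have : (0:ℝ) ≤ (if m ≡ k [MOD d.gcd e] then (d.gcd e : ℝ) else 0) := by
        split_ifs <;> positivity
      simp only [Finset.card_empty, Nat.cast_zero, mul_zero]
      positivity
    · obtain ⟨-, hz1, hz2⟩ := Finset.mem_filter.1 hz
      have hmk : m ≡ k [MOD d.gcd e] := by
        have hcz : z.Coprime (d.gcd e) := by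
          rw [mul_comm] at hz1
          exact (coprime_of_mul_modEq_one hz1).coprime_dvd_right (Nat.gcd_dvd_left d e)
        have : m * z ≡ k * z [MOD d.gcd e] :=
          (hz1.of_dvd (Nat.gcd_dvd_left d e)).trans (hz2.of_dvd (Nat.gcd_dvd_right d e)).symm
        exact Nat.ModEq.cancel_right_of_coprime
          (by rwa [Nat.coprime_iff_gcd_eq_one, Nat.gcd_comm] at hcz) this
      rw [if_pos hmk]
      have hsub : S ⊆ (Finset.Ioc a b).filter (fun n => n ≡ z [MOD (d.lcm e)]) := by
        intro n hn
        obtain ⟨hn0, hn1, hn2⟩ := Finset.mem_filter.1 hn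
        refine Finset.mem_filter.2 ⟨hn0, ?_⟩
        have a1 : n ≡ z [MOD d] := Nat.ModEq.cancel_left_of_coprime
          (by have := coprime_of_mul_modEq_one hz1
              rwa [Nat.coprime_iff_gcd_eq_one, Nat.gcd_comm] at this) (hn1.trans hz1.symm)
        have a2 : n ≡ z [MOD e] := Nat.ModEq.cancel_left_of_coprime
          (by have := coprime_of_mul_modEq_one hz2
              rwa [Nat.coprime_iff_gcd_eq_one, Nat.gcd_comm] at this) (hn2.trans hz2.symm)
        rw [Nat.modEq_iff_dvd] at a1 a2 ⊢
        rw [Int.natCast_dvd] at a1 a2 ⊢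
        exact Nat.lcm_dvd a1 a2
      have hc := Finset.card_le_card hsub
      have hl : 0 < d.lcm e := Nat.lcm_pos (by omega) (by omega)
      have h3 := (abs_le.1 (cnt_modEq (d.lcm e) a b z hl hab)).2
      have hg : (d : ℝ) * e = d.gcd e * d.lcm e := by exact_mod_cast (Nat.gcd_mul_lcm d e).symm
      have hc' : (S.card : ℝ) ≤
        ((Finset.Ioc a b).filter (fun n => n ≡ z [MOD (d.lcm e)])).card := by exact_mod_cast hc
      have hl' : (0:ℝ) ≤ d.lcm e := by positivity
      have h4 : (d.lcm e : ℝ) * S.card ≤ d.lcm e + ((b : ℝ) - a) := by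
        have := mul_le_mul_of_nonneg_left hc' hl'
        linarith
      have h5 := mul_le_mul_of_nonneg_left h4 (Nat.cast_nonneg (α := ℝ) (d.gcd e))
      rw [hg]
      nlinarith
  have hpos : (0 : ℝ) ≤ (d : ℝ) * e * S.card := by positivity
  have hI : (0 : ℝ) ≤ ((b : ℝ) - a) * (if m ≡ k [MOD d.gcd e] then (d.gcd e : ℝ) else 0) := by
    apply mul_nonneg hab'
    split_ifs <;> positivity
  rw [mul_add]
  rw [abs_le] at *
  constructor <;> linarith

/-- the full bound for the correlation of two weights -/
lemma sumWt2_le (d e m k a b : ℕ) (hd : 1 < d) (he : 1 < e) (hab : a ≤ b) :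
    |∑ n ∈ Finset.Ioc a b, Wt d (m * n) * Wt e (k * n)| ≤ 3 * (d * e) +
      ((b : ℝ) - a) * ((if d.Coprime e then 0 else
          (if m ≡ k [MOD d.gcd e] then (d.gcd e : ℝ) else 0) + 3)
        + (if m.Coprime d then 0 else 1) * (if k.Coprime e then 0 else 1)) := by
  have hab' : (0 : ℝ) ≤ (b : ℝ) - a := by
    have : (a : ℝ) ≤ b := by exact_mod_cast hab
    linarith
  have hd' : (1 : ℝ) ≤ d := by exact_mod_cast hd.le
  have he' : (1 : ℝ) ≤ e := by exact_mod_cast he.le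
  have i1 : (d : ℝ) ≤ d * e := by nlinarith
  have i2 : (e : ℝ) ≤ d * e := by nlinarith
  by_cases hde : d.Coprime e
  · rw [if_pos hde]
    by_cases hm : m.Coprime d <;> by_cases hk : k.Coprime e
    · rw [if_pos hm, if_pos hk]
      have := sumWt2_coprime d e m k a b hd he hde hm hk hab
      linarith
    · simp only [Wt_of_not_coprime hk]
      rw [if_pos hm, if_neg hk]
      rw [← Finset.sum_mul, mul_neg_one, abs_neg]
      have := sumWt_coprime d m a b hd hm hab
      linarith
    · simp only [Wt_of_not_coprime hm]
      rw [if_neg hm, if_pos hk]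
      rw [← Finset.mul_sum, neg_one_mul, abs_neg]
      have := sumWt_coprime e k a b he hk hab
      linarith
    · simp only [Wt_of_not_coprime hm, Wt_of_not_coprime hk, hm, hk, if_false]
      simp [Nat.cast_sub hab]
      rw [abs_of_nonneg hab']
      nlinarith
  · rw [if_neg hde]
    refine (sumWt2_gcd d e m k a b hd he hab).trans ?_
    have : (0 : ℝ) ≤ (if m.Coprime d then (0:ℝ) else 1) * (if k.Coprime e then 0 else 1) := by
      split_ifs <;> simp
    have := mul_nonneg hab' this
    rw [mul_add (_ - _) (_ + 3)]
    linarith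


noncomputable def harm_s2 (N : ℕ) : ℝ := ∑ n ∈ Finset.Ioc 0 N, (1 : ℝ) / n

lemma harm_nonneg (N : ℕ) : 0 ≤ harm_s2 N := Finset.sum_nonneg (fun _ _ => by positivity)

lemma harm_mono {M N : ℕ} (h : M ≤ N) : harm_s2 M ≤ harm_s2 N := by
  apply Finset.sum_le_sum_of_subset_of_nonneg (Finset.Ioc_subset_Ioc_right h)
  intros; positivity

lemma harm_le (N : ℕ) : harm_s2 N ≤ 1 + Real.log N := by
  have h := harmonic_le_one_add_log N
  have : harm_s2 N = (harmonic N : ℝ) := by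
    rw [harmonic_eq_sum_Icc, harm_s2]
    push_cast
    apply Finset.sum_congr
    · ext; simp; omega
    · intros; simp
  rw [this]; exact h

/-- indicator of non-coprimality -/
noncomputable def nc (d v : ℕ) : ℝ := if v.Coprime d then 0 else 1

lemma nc_nonneg (d v : ℕ) : 0 ≤ nc d v := by unfold nc; split_ifs <;> simp

lemma nc_le_one (d v : ℕ) : nc d v ≤ 1 := by unfold nc; split_ifs <;> simp

lemma nc_mul_le (d u v : ℕ) : nc d (u * v) ≤ nc d u + nc d v := by
  by_cases h1 : u.Coprime d <;> by_cases h2 : v.Coprime d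
  · have : (u * v).Coprime d := Nat.Coprime.mul_left h1 h2
    unfold nc
    rw [if_pos h1, if_pos h2, if_pos this]; simp
  all_goals
    have := nc_le_one d (u * v)
    have h3 := nc_nonneg d u
    have h4 := nc_nonneg d v
  · have : nc d v = 1 := by unfold nc; rw [if_neg h2]
    linarith
  · have : nc d u = 1 := by unfold nc; rw [if_neg h1]
    linarith
  · have : nc d u = 1 := by unfold nc; rw [if_neg h1]
    linarith

lemma sum_dvd_inv (q N : ℕ) (hq : 0 < q) :
    ∑ v ∈ (Finset.Ioc 0 N).filter (fun v => q ∣ v), (1 : ℝ) / v ≤ (1 / q) * harm_s2 N := by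
  have hsub : (Finset.Ioc 0 N).filter (fun v => q ∣ v) ⊆ (Finset.Ioc 0 N).image (fun k => q * k) := by
    intro v hv
    obtain ⟨hv, k, rfl⟩ := by simpa using hv
    simp only [Finset.mem_image, Finset.mem_Ioc]
    refine ⟨k, ⟨?_, ?_⟩, rfl⟩
    · exact Nat.pos_of_mul_pos_left hv.1
    · nlinarith [hv.2]
  refine (Finset.sum_le_sum_of_subset_of_nonneg hsub (fun _ _ _ => by positivity)).trans ?_
  rw [Finset.sum_image]
  · rw [harm_s2, Finset.mul_sum]
    apply le_of_eq
    apply Finset.sum_congr rfl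
    intro k _
    push_cast
    rw [one_div_mul_one_div]
  · intro a _ b _ h
    exact Nat.eq_of_mul_eq_mul_left hq h

lemma nc_le_sum (s : Finset ℕ) (hs : ∀ q ∈ s, q.Prime) (v : ℕ) :
    nc (∏ q ∈ s, q) v ≤ ∑ q ∈ s, (if q ∣ v then (1:ℝ) else 0) := by
  unfold nc
  split_ifs with h
  · apply Finset.sum_nonneg; intros; split_ifs <;> simp
  · rw [Nat.coprime_prod_right_iff] at h
    push Not at h
    obtain ⟨q, hq, hqv⟩ := h
    have : q ∣ v := by
      by_contra hc
      exact hqv ((Nat.coprime_comm.1 ((hs q hq).coprime_iff_not_dvd.2 hc)))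
    calc (1:ℝ) = (if q ∣ v then (1:ℝ) else 0) := by rw [if_pos this]
      _ ≤ _ := Finset.single_le_sum (f := fun q => (if q ∣ v then (1:ℝ) else 0))
        (fun _ _ => by split_ifs <;> simp) hq

lemma sum_nc_inv (s : Finset ℕ) (w : ℝ) (hw : 0 < w) (hs : ∀ q ∈ s, q.Prime)
    (hsw : ∀ q ∈ s, w ≤ q) (N : ℕ) :
    ∑ v ∈ Finset.Ioc 0 N, nc (∏ q ∈ s, q) v / v ≤ (s.card / w) * harm_s2 N := by
  calc ∑ v ∈ Finset.Ioc 0 N, nc (∏ q ∈ s, q) v / v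
      ≤ ∑ v ∈ Finset.Ioc 0 N, ∑ q ∈ s, (if q ∣ v then (1:ℝ) / v else 0) := by
        apply Finset.sum_le_sum
        intro v _
        have := div_le_div_of_nonneg_right (nc_le_sum s hs v) (Nat.cast_nonneg (α := ℝ) v)
        refine this.trans (le_of_eq ?_)
        rw [Finset.sum_div]
        apply Finset.sum_congr rfl
        intros; split_ifs <;> simp
    _ = ∑ q ∈ s, ∑ v ∈ (Finset.Ioc 0 N).filter (fun v => q ∣ v), (1:ℝ) / v := by
        rw [Finset.sum_comm]
        simp only [Finset.sum_filter]
    _ ≤ ∑ q ∈ s, (1 / w) * harm_s2 N := by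
        apply Finset.sum_le_sum
        intro q hq
        refine (sum_dvd_inv q N (hs q hq).pos).trans ?_
        have := hsw q hq
        have := harm_nonneg N
        gcongr
    _ = _ := by simp; ring

lemma sum_nc (s : Finset ℕ) (w : ℝ) (hw : 0 < w) (hs : ∀ q ∈ s, q.Prime)
    (hsw : ∀ q ∈ s, w ≤ q) (N : ℕ) :
    ∑ v ∈ Finset.Ioc 0 N, nc (∏ q ∈ s, q) v ≤ (s.card / w) * N := by
  calc ∑ v ∈ Finset.Ioc 0 N, nc (∏ q ∈ s, q) v
      ≤ ∑ v ∈ Finset.Ioc 0 N, ∑ q ∈ s, (if q ∣ v then (1:ℝ) else 0) := by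
        apply Finset.sum_le_sum
        intro v _
        exact (nc_le_sum s hs v)
    _ = ∑ q ∈ s, (((Finset.Ioc 0 N).filter (fun v => q ∣ v)).card : ℝ) := by
        rw [Finset.sum_comm]
        simp
    _ ≤ ∑ q ∈ s, (1 / w) * N := by
        apply Finset.sum_le_sum
        intro q hq
        rw [Nat.Ioc_filter_dvd_card_eq_div]
        refine Nat.cast_div_le.trans ?_
        have := hsw q hq
        rw [div_eq_mul_one_div, mul_comm]
        gcongr
    _ = _ := by simp; ring

/-- Abel summation with a monotone weight -/
lemma mono_weight (c f : ℕ → ℝ) (B : ℝ) (hf : ∀ n, 1 ≤ n → f n ≤ f (n + 1)) (hf1 : 0 ≤ f 1)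
    (y : ℕ) (hS : ∀ t ≤ y, |∑ k ∈ Finset.Ioc 0 t, c k| ≤ B) :
    |∑ k ∈ Finset.Ioc 0 (y), f k * c k| ≤ 2 * f y * B ∨ y = 0 := by
  rcases Nat.eq_zero_or_pos y with h0 | hy
  · right; exact h0
  left
  have hB : 0 ≤ B := (abs_nonneg _).trans (hS 0 (by omega))
  have key : ∀ t, 1 ≤ t → t ≤ y → 0 ≤ f t ∧
      |∑ k ∈ Finset.Ioc 0 t, f k * c k - f t * ∑ k ∈ Finset.Ioc 0 t, c k| ≤ f t * B := by
    intro t ht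
    induction t, ht using Nat.le_induction with
    | base => intro _; simp; exact ⟨hf1, by positivity⟩
    | succ t ht ih =>
      intro hty
      obtain ⟨h0, h1⟩ := ih (by omega)
      have h2 := hf t ht
      refine ⟨h0.trans h2, ?_⟩
      rw [Finset.sum_Ioc_succ_top (by omega), Finset.sum_Ioc_succ_top (by omega)]
      have h3 := hS t (by omega)
      have e : ∑ k ∈ Finset.Ioc 0 t, f k * c k + f (t + 1) * c (t + 1) -
          f (t + 1) * (∑ k ∈ Finset.Ioc 0 t, c k + c (t + 1)) =
          (∑ k ∈ Finset.Ioc 0 t, f k * c k - f t * ∑ k ∈ Finset.Ioc 0 t, c k)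
           - (f (t+1) - f t) * ∑ k ∈ Finset.Ioc 0 t, c k := by ring
      rw [e]
      refine (abs_sub _ _).trans ?_
      rw [abs_mul, abs_of_nonneg (by linarith : 0 ≤ f (t+1) - f t)]
      have := mul_le_mul_of_nonneg_left h3 (by linarith : 0 ≤ f (t+1) - f t)
      linarith
  obtain ⟨h0, h1⟩ := key y hy le_rfl
  have h2 := hS y le_rfl
  have h3 : |f y * ∑ k ∈ Finset.Ioc 0 y, c k| ≤ f y * B := by
    rw [abs_mul, abs_of_nonneg h0]; gcongr
  have := abs_add_le (∑ k ∈ Finset.Ioc 0 y, f k * c k - f y * ∑ k ∈ Finset.Ioc 0 y, c k)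
    (f y * ∑ k ∈ Finset.Ioc 0 y, c k)
  rw [sub_add_cancel] at this
  linarith

lemma tau_sq_sum (N : ℕ) :
    ∑ n ∈ Finset.Ioc 0 N, ((n.divisors.card : ℝ)) ^ 2 ≤ N * harm_s2 N ^ 3 := by
  have h1 : ∀ n ∈ Finset.Ioc 0 N, ((n.divisors.card : ℝ)) ^ 2 =
      ∑ a ∈ Finset.Ioc 0 N, ∑ b ∈ Finset.Ioc 0 N, (if a ∣ n ∧ b ∣ n then (1:ℝ) else 0) := by
    intro n hn
    rw [Finset.mem_Ioc] at hn
    have : (n.divisors.card : ℝ) = ∑ a ∈ Finset.Ioc 0 N, (if a ∣ n then (1:ℝ) else 0) := by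
      rw [← Finset.sum_filter]
      simp only [Finset.sum_const, nsmul_eq_mul, mul_one]
      congr 2
      ext a
      simp only [Nat.mem_divisors, Finset.mem_filter, Finset.mem_Ioc]
      constructor
      · rintro ⟨h, _⟩
        exact ⟨⟨Nat.pos_of_dvd_of_pos h hn.1, (Nat.le_of_dvd hn.1 h).trans hn.2⟩, h⟩
      · rintro ⟨_, h⟩
        exact ⟨h, by omega⟩
    rw [this, sq, Finset.sum_mul_sum]
    refine Finset.sum_congr rfl fun a _ => Finset.sum_congr rfl fun b _ => ?_
    by_cases h1 : a ∣ n <;> by_cases h2 : b ∣ n <;> simp [h1, h2]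
  rw [Finset.sum_congr rfl h1, Finset.sum_comm]
  have h2 : ∀ a ∈ Finset.Ioc 0 N, ∀ b ∈ Finset.Ioc 0 N,
      ∑ n ∈ Finset.Ioc 0 N, (if a ∣ n ∧ b ∣ n then (1:ℝ) else 0) ≤
      ∑ g ∈ Finset.Ioc 0 N, N * ((g : ℝ) * ((if g ∣ a then (1:ℝ) / a else 0) *
        (if g ∣ b then (1:ℝ) / b else 0))) := by
    intro a ha b hb
    rw [Finset.mem_Ioc] at ha hb
    have e : ∑ n ∈ Finset.Ioc 0 N, (if a ∣ n ∧ b ∣ n then (1:ℝ) else 0) = ((N / a.lcm b : ℕ) : ℝ) := by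
      rw [← Nat.Ioc_filter_dvd_card_eq_div, ← Finset.sum_filter]
      simp [Nat.lcm_dvd_iff]
    rw [e]
    have hg : a.gcd b ∈ Finset.Ioc 0 N := by
      rw [Finset.mem_Ioc]
      exact ⟨Nat.gcd_pos_of_pos_left b ha.1, (Nat.le_of_dvd ha.1 (Nat.gcd_dvd_left a b)).trans ha.2⟩
    refine le_trans ?_ (Finset.single_le_sum (f := fun g : ℕ => (N:ℝ) * ((g : ℝ) * ((if g ∣ a then (1:ℝ) / a else 0) *
        (if g ∣ b then (1:ℝ) / b else 0)))) ?_ hg)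
    · simp only [Nat.gcd_dvd_left, Nat.gcd_dvd_right, if_true]
      refine Nat.cast_div_le.trans (le_of_eq ?_)
      have hgl : (a.gcd b : ℝ) * a.lcm b = a * b := by exact_mod_cast Nat.gcd_mul_lcm a b
      have p1 : (0:ℝ) < a := by exact_mod_cast ha.1
      have p2 : (0:ℝ) < b := by exact_mod_cast hb.1
      have p3 : (0:ℝ) < a.lcm b := by exact_mod_cast Nat.lcm_pos ha.1 hb.1
      rw [div_eq_iff p3.ne']
      have : (N:ℝ) * (a.gcd b * (1 / a * (1 / b))) * a.lcm b
        = N * (a.gcd b * a.lcm b) * (1 / a * (1 / b)) := by ring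
      rw [this, hgl]
      field_simp
    · intro g _
      split_ifs <;> positivity
  calc _ = ∑ a ∈ Finset.Ioc 0 N, ∑ b ∈ Finset.Ioc 0 N, ∑ n ∈ Finset.Ioc 0 N,
          (if a ∣ n ∧ b ∣ n then (1:ℝ) else 0) := by
        refine Finset.sum_congr rfl fun a _ => ?_
        rw [Finset.sum_comm]
    _ ≤ ∑ a ∈ Finset.Ioc 0 N, ∑ b ∈ Finset.Ioc 0 N, ∑ g ∈ Finset.Ioc 0 N, N * ((g : ℝ) *
        ((if g ∣ a then (1:ℝ) / a else 0) * (if g ∣ b then (1:ℝ) / b else 0))) :=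
        Finset.sum_le_sum fun a ha => Finset.sum_le_sum fun b hb => h2 a ha b hb
    _ = ∑ g ∈ Finset.Ioc 0 N, N * ((g : ℝ) *
        (∑ a ∈ (Finset.Ioc 0 N).filter (fun a => g ∣ a), (1:ℝ) / a) ^ 2) := by
        simp only [sq, Finset.sum_filter]
        rw [Finset.sum_comm_cycle]
        refine Finset.sum_congr rfl fun g _ => ?_
        rw [Finset.sum_mul_sum]
        simp only [Finset.mul_sum]
    _ ≤ ∑ g ∈ Finset.Ioc 0 N, N * ((1 : ℝ) / g * harm_s2 N ^ 2) := by
        refine Finset.sum_le_sum fun g hg => ?_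
        rw [Finset.mem_Ioc] at hg
        have h3 := sum_dvd_inv g N hg.1
        have h4 : 0 ≤ ∑ a ∈ (Finset.Ioc 0 N).filter (fun a => g ∣ a), (1:ℝ) / a :=
          Finset.sum_nonneg fun _ _ => by positivity
        have h5 := pow_le_pow_left₀ h4 h3 2
        have p1 : (0:ℝ) < g := by exact_mod_cast hg.1
        refine mul_le_mul_of_nonneg_left ?_ (Nat.cast_nonneg N)
        calc (g:ℝ) * _ ≤ g * (1 / g * harm_s2 N) ^ 2 := by gcongr
          _ = _ := by field_simp
    _ = N * harm_s2 N ^ 3 := by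
        rw [← Finset.mul_sum, ← Finset.sum_mul, ← harm_s2]; ring


/-- `Λ` restricted to `n > U` -/
noncomputable def Lbig (U : ℕ) : ArithmeticFunction ℝ :=
  ⟨fun n => if U < n then ArithmeticFunction.vonMangoldt n else 0, by simp⟩

/-- `Λ` restricted to `n ≤ U` -/
noncomputable def Lsmall (U : ℕ) : ArithmeticFunction ℝ :=
  ⟨fun n => if n ≤ U then ArithmeticFunction.vonMangoldt n else 0, by simp⟩

/-- `μ` restricted to `n ≤ V` -/
noncomputable def Msmall (V : ℕ) : ArithmeticFunction ℝ :=
  ⟨fun n => if n ≤ V then (ArithmeticFunction.moebius n : ℝ) else 0, by simp⟩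

noncomputable def bcoef (V : ℕ) : ArithmeticFunction ℝ :=
  1 - Msmall V * (ArithmeticFunction.zeta : ArithmeticFunction ℝ)

lemma af_sub_apply (f g : ArithmeticFunction ℝ) (n : ℕ) : (f - g) n = f n - g n := by
  rw [sub_eq_add_neg, ArithmeticFunction.add_apply, ArithmeticFunction.neg_apply, sub_eq_add_neg]

lemma sum_conv (f g : ArithmeticFunction ℝ) (N : ℕ) (c : ℕ → ℝ) :
    ∑ n ∈ Finset.Ioc 0 N, (f * g) n * c n =
      ∑ a ∈ Finset.Ioc 0 N, ∑ b ∈ Finset.Ioc 0 (N / a), f a * g b * c (a * b) := by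
  have h1 : ∀ n ∈ Finset.Ioc 0 N, (f * g) n * c n =
      ∑ a ∈ Finset.Ioc 0 N, ∑ b ∈ Finset.Ioc 0 N,
        (if a * b = n then f a * g b * c (a * b) else 0) := by
    intro n hn
    rw [Finset.mem_Ioc] at hn
    rw [ArithmeticFunction.mul_apply, Nat.divisorsAntidiagonal_eq_prod_filter_of_le hn.1.ne' hn.2,
      ← Finset.sum_product', ← Finset.sum_filter, Finset.sum_mul]
    apply Finset.sum_congr rfl
    intro p hp
    rw [(Finset.mem_filter.1 hp).2]
  rw [Finset.sum_congr rfl h1, Finset.sum_comm]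
  refine Finset.sum_congr rfl fun a ha => ?_
  rw [Finset.mem_Ioc] at ha
  rw [Finset.sum_comm]
  have h2 : ∀ b ∈ Finset.Ioc 0 N, ∑ n ∈ Finset.Ioc 0 N,
      (if a * b = n then f a * g b * c (a * b) else 0) =
      if b ∈ Finset.Ioc 0 (N / a) then f a * g b * c (a * b) else 0 := by
    intro b hb
    rw [Finset.mem_Ioc] at hb
    rw [Finset.sum_ite_eq]
    congr 1
    simp only [Finset.mem_Ioc, Nat.le_div_iff_mul_le ha.1, eq_iff_iff]
    constructor
    · rintro ⟨_, h⟩; exact ⟨hb.1, by linarith [mul_comm a b]⟩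
    · rintro ⟨_, h⟩; exact ⟨Nat.mul_pos ha.1 hb.1, by linarith [mul_comm a b]⟩
  rw [Finset.sum_congr rfl h2, ← Finset.sum_filter]
  apply Finset.sum_congr _ (fun _ _ => rfl)
  ext b
  simp only [Finset.mem_filter, Finset.mem_Ioc]
  constructor
  · exact fun h => h.2
  · exact fun h => ⟨⟨h.1, h.2.trans (Nat.div_le_self _ _)⟩, h⟩

lemma Lbig_add_Lsmall (U : ℕ) : Lbig U + Lsmall U = ArithmeticFunction.vonMangoldt := by
  ext n
  rw [ArithmeticFunction.add_apply]
  simp only [Lbig, Lsmall, ArithmeticFunction.coe_mk]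
  split_ifs <;> first | omega | simp

lemma vaughan (U V x : ℕ) (c : ℕ → ℝ) :
    ∑ n ∈ Finset.Ioc 0 x, Lbig U n * c n =
      (∑ v ∈ Finset.Ioc 0 x, ∑ k ∈ Finset.Ioc 0 (x / v), Msmall V v * Real.log k * c (v * k))
      - (∑ v ∈ Finset.Ioc 0 x, ∑ u ∈ Finset.Ioc 0 (x / v), ∑ k ∈ Finset.Ioc 0 (x / v / u),
          Msmall V v * Lsmall U u * c (v * u * k))
      + ∑ n ∈ Finset.Ioc 0 x, ∑ m ∈ Finset.Ioc 0 (x / n), bcoef V n * Lbig U m * c (n * m) := by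
  have h1 : Lbig U = Msmall V * ArithmeticFunction.log
      - Msmall V * (Lsmall U * (ArithmeticFunction.zeta : ArithmeticFunction ℝ))
      + bcoef V * Lbig U := by
    rw [← ArithmeticFunction.vonMangoldt_mul_zeta, ← Lbig_add_Lsmall U, bcoef]
    ring
  conv_lhs => rw [h1]
  have h2 : ∀ n, (Msmall V * ArithmeticFunction.log
      - Msmall V * (Lsmall U * (ArithmeticFunction.zeta : ArithmeticFunction ℝ))
      + bcoef V * Lbig U) n * c n = (Msmall V * ArithmeticFunction.log) n * c n
      - (Msmall V * (Lsmall U * (ArithmeticFunction.zeta : ArithmeticFunction ℝ))) n * c n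
      + (bcoef V * Lbig U) n * c n := by
    intro n
    rw [ArithmeticFunction.add_apply, af_sub_apply]
    ring
  simp only [h2]
  rw [Finset.sum_add_distrib, Finset.sum_sub_distrib, sum_conv, sum_conv, sum_conv]
  congr 2
  refine Finset.sum_congr rfl fun v _ => ?_
  have h3 := sum_conv (Lsmall U) (ArithmeticFunction.zeta : ArithmeticFunction ℝ) (x / v)
    (fun t => Msmall V v * c (v * t))
  have h4 : ∀ b ∈ Finset.Ioc 0 (x / v), Msmall V v * (Lsmall U * (ArithmeticFunction.zeta : ArithmeticFunction ℝ)) b * c (v * b) = (Lsmall U * (ArithmeticFunction.zeta : ArithmeticFunction ℝ)) b * (Msmall V v * c (v * b)) := by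
    intros; ring
  rw [Finset.sum_congr rfl h4, h3]
  refine Finset.sum_congr rfl fun u _ => Finset.sum_congr rfl fun k hk => ?_
  rw [Finset.mem_Ioc] at hk
  rw [ArithmeticFunction.natCoe_apply, ArithmeticFunction.zeta_apply_ne hk.1.ne', mul_assoc v u k]
  push_cast
  ring

lemma bcoef_eq_zero (V n : ℕ) (hn : n ≤ V) : bcoef V n = 0 := by
  rcases Nat.eq_zero_or_pos n with rfl | hn0
  · simp
  rw [bcoef, af_sub_apply, ArithmeticFunction.coe_mul_zeta_apply]
  have h : ∑ i ∈ n.divisors, Msmall V i = ∑ i ∈ n.divisors, (ArithmeticFunction.moebius i : ℝ) := by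
    refine Finset.sum_congr rfl fun i hi => ?_
    have : i ≤ V := (Nat.divisor_le hi).trans hn
    simp [Msmall, this]
  have h2 := ArithmeticFunction.coe_moebius_mul_coe_zeta (R := ℝ)
  have h3 := congrArg (fun f : ArithmeticFunction ℝ => f n) h2
  simp only [ArithmeticFunction.coe_mul_zeta_apply, ArithmeticFunction.intCoe_apply] at h3
  rw [h, h3, sub_self]

lemma abs_Msmall_le (V n : ℕ) : |Msmall V n| ≤ if n ≤ V then 1 else 0 := by
  simp only [Msmall, ArithmeticFunction.coe_mk]
  split_ifs
  · exact_mod_cast ArithmeticFunction.abs_moebius_le_one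
  · simp

lemma abs_bcoef_le (V n : ℕ) (hV : 1 ≤ V) : |bcoef V n| ≤ n.divisors.card := by
  by_cases hn : n ≤ V
  · rw [bcoef_eq_zero V n hn]; simp
  rw [bcoef, af_sub_apply, ArithmeticFunction.coe_mul_zeta_apply,
    ArithmeticFunction.one_apply_ne (by omega), zero_sub, abs_neg]
  refine (Finset.abs_sum_le_sum_abs _ _).trans ?_
  calc _ ≤ ∑ i ∈ n.divisors, (1:ℝ) := by
        refine Finset.sum_le_sum fun i _ => (abs_Msmall_le V i).trans ?_
        split_ifs <;> simp
    _ = _ := by simp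

lemma sum_ite_le_card (V x : ℕ) : ∑ v ∈ Finset.Ioc 0 x, (if v ≤ V then (1:ℝ) else 0) ≤ V := by
  rw [← Finset.sum_filter]
  simp only [Finset.sum_const, nsmul_eq_mul, mul_one]
  have : (Finset.Ioc 0 x).filter (fun v => v ≤ V) ⊆ Finset.Ioc 0 V := by
    intro v; simp; omega
  have := Finset.card_le_card this
  simp at this
  exact_mod_cast this

lemma typeI_log (V x d : ℕ) (h κ : ℝ) (hd : 1 < d) (hh : Real.log x ≤ h) (hh0 : 0 ≤ h)
    (hκ : ∑ v ∈ Finset.Ioc 0 x, nc d v / v ≤ κ) :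
    |∑ v ∈ Finset.Ioc 0 x, ∑ k ∈ Finset.Ioc 0 (x / v), Msmall V v * Real.log k * Wt d (v * k)|
      ≤ 2 * h * (V * d + x * κ) := by
  have h1 : ∀ v ∈ Finset.Ioc 0 x,
      |∑ k ∈ Finset.Ioc 0 (x / v), Msmall V v * Real.log k * Wt d (v * k)| ≤
      2 * h * (d * (if v ≤ V then 1 else 0) + x * (nc d v / v)) := by
    intro v hv
    rw [Finset.mem_Ioc] at hv
    have hnn := nc_nonneg d v
    have e : ∑ k ∈ Finset.Ioc 0 (x / v), Msmall V v * Real.log k * Wt d (v * k) =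
        Msmall V v * ∑ k ∈ Finset.Ioc 0 (x / v), Real.log k * Wt d (v * k) := by
      rw [Finset.mul_sum]; refine Finset.sum_congr rfl fun _ _ => by ring
    have hS : ∀ t ≤ x / v, |∑ k ∈ Finset.Ioc 0 t, Wt d (v * k)| ≤ d + x * (nc d v / v) := by
      intro t ht
      refine (sumWt_le d v 0 t hd (by omega)).trans ?_
      gcongr
      unfold nc
      split_ifs
      · simp
      · simp only [Nat.cast_zero, sub_zero]
        have : (t : ℝ) ≤ (x / v : ℕ) := by exact_mod_cast ht
        refine this.trans (Nat.cast_div_le.trans (le_of_eq ?_))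
        ring
    have hm := mono_weight (fun k => Wt d (v * k)) (fun k => Real.log k) (d + x * (nc d v / v))
      (by intro n hn
          have : (0:ℝ) < n := by exact_mod_cast hn
          apply Real.log_le_log this; push_cast; linarith) (by simp) (x / v) hS
    have hlog : Real.log ((x / v : ℕ)) ≤ h := by
      refine le_trans ?_ hh
      rcases Nat.eq_zero_or_pos (x / v) with h0 | h0
      · rw [h0]; simp; exact Real.log_natCast_nonneg x
      · apply Real.log_le_log (by exact_mod_cast h0)
        exact_mod_cast Nat.div_le_self _ _
    have hB : 0 ≤ d + x * (nc d v / v) := by positivity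
    have hfin : |∑ k ∈ Finset.Ioc 0 (x / v), Real.log k * Wt d (v * k)| ≤
        2 * h * (d + x * (nc d v / v)) := by
      rcases hm with hm | hm
      · refine hm.trans ?_
        gcongr
      · rw [hm]; simp; positivity
    rw [e, abs_mul]
    have hM := abs_Msmall_le V v
    split_ifs at hM ⊢
    · calc _ ≤ 1 * (2 * h * (d + x * (nc d v / v))) := by gcongr
        _ = _ := by ring
    · have : |Msmall V v| = 0 := le_antisymm hM (abs_nonneg _)
      rw [this]; simp; positivity
  calc _ ≤ ∑ v ∈ Finset.Ioc 0 x, 2 * h * (d * (if v ≤ V then 1 else 0) + x * (nc d v / v)) :=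
        (Finset.abs_sum_le_sum_abs _ _).trans (Finset.sum_le_sum h1)
    _ = 2 * h * (d * ∑ v ∈ Finset.Ioc 0 x, (if v ≤ V then (1:ℝ) else 0) +
          x * ∑ v ∈ Finset.Ioc 0 x, nc d v / v) := by
        rw [← Finset.mul_sum, Finset.sum_add_distrib, ← Finset.mul_sum, ← Finset.mul_sum]
    _ ≤ 2 * h * (d * V + x * κ) := by
        have := sum_ite_le_card V x
        gcongr
    _ = _ := by ring

lemma abs_Lsmall_le (U x n : ℕ) (h : ℝ) (hn : 0 < n) (hnx : n ≤ x) (hh : Real.log x ≤ h) :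
    |Lsmall U n| ≤ if n ≤ U then h else 0 := by
  simp only [Lsmall, ArithmeticFunction.coe_mk]
  split_ifs
  · rw [abs_of_nonneg ArithmeticFunction.vonMangoldt_nonneg]
    refine ArithmeticFunction.vonMangoldt_le_log.trans (le_trans ?_ hh)
    apply Real.log_le_log (by exact_mod_cast hn)
    exact_mod_cast hnx
  · simp

lemma typeI_L (U V x d : ℕ) (h κ : ℝ) (hd : 1 < d) (hh : Real.log x ≤ h) (hh0 : 0 ≤ h)
    (hharm : harm_s2 x ≤ h) (hκ : ∑ v ∈ Finset.Ioc 0 x, nc d v / v ≤ κ) :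
    |∑ v ∈ Finset.Ioc 0 x, ∑ u ∈ Finset.Ioc 0 (x / v), ∑ k ∈ Finset.Ioc 0 (x / v / u),
          Msmall V v * Lsmall U u * Wt d (v * u * k)|
      ≤ h * (U * V * d + 2 * x * h * κ) := by
  have hκ0 : 0 ≤ κ := le_trans (Finset.sum_nonneg fun v _ => by
    have := nc_nonneg d v; positivity) hκ
  set B : ℕ → ℕ → ℝ := fun v u => h * (d * ((if v ≤ V then (1:ℝ) else 0) * (if u ≤ U then (1:ℝ) else 0))
    + x * ((nc d v / v) * (1 / u)) + x * ((1 / v) * (nc d u / u))) with hBdef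
  have hB0 : ∀ v u, 0 ≤ B v u := by
    intro v u
    have := nc_nonneg d v
    have := nc_nonneg d u
    simp only [hBdef]
    split_ifs <;> positivity
  have h1 : ∀ v ∈ Finset.Ioc 0 x, ∀ u ∈ Finset.Ioc 0 (x / v),
      |∑ k ∈ Finset.Ioc 0 (x / v / u), Msmall V v * Lsmall U u * Wt d (v * u * k)| ≤ B v u := by
    intro v hv u hu
    rw [Finset.mem_Ioc] at hv hu
    have hux : u ≤ x := hu.2.trans (Nat.div_le_self _ _)
    rw [← Finset.mul_sum, abs_mul, abs_mul]
    have hM := abs_Msmall_le V v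
    have hL := abs_Lsmall_le U x u h hu.1 hux hh
    by_cases hvV : v ≤ V
    swap
    · rw [if_neg hvV] at hM
      have : |Msmall V v| = 0 := le_antisymm hM (abs_nonneg _)
      rw [this]; simp; exact hB0 v u
    by_cases huU : u ≤ U
    swap
    · rw [if_neg huU] at hL
      have : |Lsmall U u| = 0 := le_antisymm hL (abs_nonneg _)
      rw [this]; simp; exact hB0 v u
    rw [if_pos hvV] at hM
    rw [if_pos huU] at hL
    have n1 := nc_nonneg d v
    have n2 := nc_nonneg d u
    have n3 := nc_mul_le d v u
    have p1 : (0:ℝ) < v := by exact_mod_cast hv.1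
    have p2 : (0:ℝ) < u := by exact_mod_cast hu.1
    have hS : |∑ k ∈ Finset.Ioc 0 (x / v / u), Wt d (v * u * k)| ≤
        d + x * ((nc d v / v) * (1 / u)) + x * ((1 / v) * (nc d u / u)) := by
      refine (sumWt_le d (v * u) 0 (x / v / u) hd (Nat.zero_le _)).trans ?_
      have e : (if (v * u).Coprime d then (0:ℝ) else (((x / v / u : ℕ) : ℝ) - (0 : ℕ)))
          = nc d (v * u) * ((x / v / u : ℕ) : ℝ) := by
        unfold nc; split_ifs <;> simp
      rw [e, add_assoc]
      gcongr
      have : ((x / v / u : ℕ) : ℝ) ≤ x / (v * u) := by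
        rw [Nat.div_div_eq_div_mul]
        refine Nat.cast_div_le.trans ?_
        push_cast; exact le_rfl
      calc _ ≤ (nc d v + nc d u) * (x / (v * u)) := by gcongr
        _ = _ := by field_simp
    calc _ ≤ 1 * h * (d + x * ((nc d v / v) * (1 / u)) + x * ((1 / v) * (nc d u / u))) := by gcongr
      _ = B v u := by simp only [hBdef, if_pos hvV, if_pos huU]; ring
  calc _ ≤ ∑ v ∈ Finset.Ioc 0 x, ∑ u ∈ Finset.Ioc 0 x, B v u := by
        refine (Finset.abs_sum_le_sum_abs _ _).trans (Finset.sum_le_sum fun v hv => ?_)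
        refine (Finset.abs_sum_le_sum_abs _ _).trans ?_
        refine (Finset.sum_le_sum (h1 v hv)).trans ?_
        exact Finset.sum_le_sum_of_subset_of_nonneg
          (Finset.Ioc_subset_Ioc_right (Nat.div_le_self _ _)) (fun u _ _ => hB0 v u)
    _ = h * (d * ((∑ v ∈ Finset.Ioc 0 x, (if v ≤ V then (1:ℝ) else 0)) *
            ∑ u ∈ Finset.Ioc 0 x, (if u ≤ U then (1:ℝ) else 0))
          + x * ((∑ v ∈ Finset.Ioc 0 x, nc d v / v) * harm_s2 x)
          + x * (harm_s2 x * (∑ v ∈ Finset.Ioc 0 x, nc d v / v))) := by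
        simp only [hBdef, harm_s2]
        rw [Finset.sum_mul_sum, Finset.sum_mul_sum, Finset.sum_mul_sum]
        simp only [Finset.mul_sum, ← Finset.sum_add_distrib]
    _ ≤ h * (d * (V * U) + x * (κ * h) + x * (h * κ)) := by
        have a1 := sum_ite_le_card V x
        have a2 := sum_ite_le_card U x
        have a3 : 0 ≤ ∑ u ∈ Finset.Ioc 0 x, (if u ≤ U then (1:ℝ) else 0) :=
          Finset.sum_nonneg fun _ _ => by split_ifs <;> simp
        have a4 := harm_nonneg x
        have a5 : 0 ≤ ∑ v ∈ Finset.Ioc 0 x, nc d v / v := Finset.sum_nonneg fun v _ => by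
          have := nc_nonneg d v; positivity
        gcongr
    _ = _ := by ring


/-- the modulus attached to a finite set -/
def dd (s : Finset ℕ) : ℕ := ∏ q ∈ s, q

/-- correlation density -/
noncomputable def rho (d e m k : ℕ) : ℝ :=
  (if d.Coprime e then 0 else (if m ≡ k [MOD d.gcd e] then (d.gcd e : ℝ) else 0) + 3)
    + nc d m * nc e k

lemma rho_nonneg (d e m k : ℕ) : 0 ≤ rho d e m k := by
  unfold rho
  have := nc_nonneg d m
  have := nc_nonneg e k
  split_ifs <;> positivity

lemma corr_le (d e m k N x F : ℕ) (hd : 1 < d) (he : 1 < e) (hdF : d ≤ F) (heF : e ≤ F)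
    (hm : 0 < m) (hk : 0 < k) :
    |∑ n ∈ Finset.Ioc N (2 * N), (if m * n ≤ x ∧ k * n ≤ x then
      Wt d (m * n) * Wt e (k * n) else 0)| ≤ 3 * (F:ℝ) ^ 2 + N * rho d e m k := by
  have hr := rho_nonneg d e m k
  rw [← Finset.sum_filter]
  have hset : (Finset.Ioc N (2 * N)).filter (fun n => m * n ≤ x ∧ k * n ≤ x) =
      Finset.Ioc N (min (2 * N) (min (x / m) (x / k))) := by
    ext n
    simp only [Finset.mem_filter, Finset.mem_Ioc, le_min_iff, Nat.le_div_iff_mul_le hm,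
      Nat.le_div_iff_mul_le hk, mul_comm n]
    tauto
  rw [hset]
  set B := min (2 * N) (min (x / m) (x / k)) with hB
  rcases le_or_gt N B with h | h
  · refine (sumWt2_le d e m k N B hd he h).trans ?_
    have hBN : (B:ℝ) - N ≤ N := by
      have : B ≤ 2 * N := min_le_left _ _
      have : (B:ℝ) ≤ 2 * N := by exact_mod_cast this
      linarith
    have h1 : (d:ℝ) ≤ F := by exact_mod_cast hdF
    have h2 : (e:ℝ) ≤ F := by exact_mod_cast heF
    have h3 : (d:ℝ) * e ≤ F ^ 2 := by rw [sq]; gcongr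
    have h4 := mul_le_mul_of_nonneg_right hBN hr
    unfold rho nc at h4 ⊢
    linarith
  · rw [Finset.Ioc_eq_empty (by omega)]
    simp; positivity

lemma sum_rho_le (d e M F : ℕ) (ε : ℝ) (hd : 1 < d) (hdF : d ≤ F)
    (hFM : F ≤ M) (h1 : ∑ v ∈ Finset.Ioc 0 M, nc d v ≤ ε * M)
    (h2 : ∑ v ∈ Finset.Ioc 0 M, nc e v ≤ ε * M) :
    ∑ m ∈ Finset.Ioc 0 M, ∑ k ∈ Finset.Ioc 0 M, rho d e m k ≤
      (M:ℝ) ^ 2 * (5 * (if d.Coprime e then 0 else 1) + ε ^ 2) := by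
  have hA : ∑ m ∈ Finset.Ioc 0 M, ∑ k ∈ Finset.Ioc 0 M, nc d m * nc e k ≤ (M:ℝ) ^ 2 * ε ^ 2 := by
    rw [← Finset.sum_mul_sum]
    have p1 : 0 ≤ ∑ v ∈ Finset.Ioc 0 M, nc d v := Finset.sum_nonneg fun v _ => nc_nonneg d v
    have p2 : 0 ≤ ∑ v ∈ Finset.Ioc 0 M, nc e v := Finset.sum_nonneg fun v _ => nc_nonneg e v
    calc _ ≤ (ε * M) * (ε * M) := by gcongr; exact p1.trans h1
      _ = _ := by ring
  unfold rho
  simp only [Finset.sum_add_distrib]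
  by_cases hde : d.Coprime e
  · simp only [if_pos hde]
    simp only [Finset.sum_const_zero]
    linarith
  · simp only [if_neg hde, Finset.sum_add_distrib]
    have hB : ∑ m ∈ Finset.Ioc 0 M, ∑ k ∈ Finset.Ioc 0 M,
        (if m ≡ k [MOD d.gcd e] then (d.gcd e : ℝ) else 0) ≤ 2 * (M:ℝ) ^ 2 := by
      have hg : 0 < d.gcd e := Nat.gcd_pos_of_pos_left e (by omega)
      have hgM : d.gcd e ≤ M := ((Nat.le_of_dvd (by omega) (Nat.gcd_dvd_left d e)).trans hdF).trans hFM
      have hgM' : (d.gcd e : ℝ) ≤ M := by exact_mod_cast hgM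
      calc _ ≤ ∑ m ∈ Finset.Ioc 0 M, (2 * (M:ℝ)) := by
            refine Finset.sum_le_sum fun m _ => ?_
            rw [← Finset.sum_filter]
            simp only [Finset.sum_const, nsmul_eq_mul]
            have := (abs_le.1 (cnt_modEq (d.gcd e) 0 M m hg (Nat.zero_le _))).2
            have e1 : (Finset.Ioc 0 M).filter (fun k => m ≡ k [MOD d.gcd e]) =
              (Finset.Ioc 0 M).filter (fun k => k ≡ m [MOD d.gcd e]) :=
              Finset.filter_congr fun k _ => ⟨Nat.ModEq.symm, Nat.ModEq.symm⟩
            rw [e1, mul_comm]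
            push_cast at this
            linarith
        _ = _ := by simp; ring
    have hC : ∑ m ∈ Finset.Ioc 0 M, ∑ k ∈ Finset.Ioc 0 M, (3:ℝ) = 3 * (M:ℝ)^2 := by
      simp; ring
    rw [hC]
    linarith

lemma Lbig_nonneg (U n : ℕ) : 0 ≤ Lbig U n := by
  simp only [Lbig, ArithmeticFunction.coe_mk]
  split_ifs
  · exact ArithmeticFunction.vonMangoldt_nonneg
  · exact le_rfl

lemma Lbig_le (U x n : ℕ) (h : ℝ) (hn : 0 < n) (hnx : n ≤ x) (hh : Real.log x ≤ h) :
    Lbig U n ≤ h := by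
  have h0 : 0 ≤ h := (Real.log_natCast_nonneg x).trans hh
  simp only [Lbig, ArithmeticFunction.coe_mk]
  split_ifs
  · refine ArithmeticFunction.vonMangoldt_le_log.trans (le_trans ?_ hh)
    apply Real.log_le_log (by exact_mod_cast hn)
    exact_mod_cast hnx
  · exact h0

lemma typeII_block (D : Finset (Finset ℕ)) (U V x N F : ℕ) (h ε η : ℝ)
    (hD : ∀ s ∈ D, 1 < dd s ∧ dd s ≤ F) (hFU : F ≤ U) (hU : 1 ≤ U)
    (hε : ∀ s ∈ D, ∀ M : ℕ, ∑ v ∈ Finset.Ioc 0 M, nc (dd s) v ≤ ε * M)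
    (hη : ∑ s ∈ D, ∑ t ∈ D, (if (dd s).Coprime (dd t) then (0:ℝ) else 1) ≤ η * (D.card : ℝ) ^ 2)
    (hη0 : 0 ≤ η)
    (hh : Real.log x ≤ h) (hharm : harm_s2 x ≤ h) (hV : 1 ≤ V) (hVN : V ≤ N) :
    |∑ n ∈ Finset.Ioc N (2 * N), ∑ m ∈ Finset.Ioc 0 (x / n),
        bcoef V n * Lbig U m * ∑ s ∈ D, Wt (dd s) (n * m)| ≤
      √(2 * h ^ 5 * (3 * (F:ℝ) ^ 2 / V + 5 * η + ε ^ 2)) * D.card * x := by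
  have h0 : 0 ≤ h := (Real.log_natCast_nonneg x).trans hh
  have hN0 : 0 < N := by omega
  set M := x / N with hM
  set J : ℝ := (D.card : ℝ) with hJ
  have hbig : ∀ m, m ≤ U → Lbig U m = 0 := by
    intro m hm
    simp only [Lbig, ArithmeticFunction.coe_mk]
    rw [if_neg (by omega)]
  rcases le_or_gt M U with hMU | hMU
  · rw [Finset.sum_eq_zero]
    · simp; positivity
    · intro n hn
      apply Finset.sum_eq_zero
      intro m hm
      rw [Finset.mem_Ioc] at hn hm
      have : m ≤ M := hm.2.trans (Nat.div_le_div_left hn.1.le hN0)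
      rw [hbig m (by omega)]
      ring
  have hMN : M * N ≤ x := Nat.div_mul_le_self x N
  have hMx : M ≤ x := Nat.div_le_self _ _
  have h2N : 2 * N ≤ x := by
    have : 2 ≤ M := by omega
    nlinarith
  set Y : ℕ → ℝ := fun n => ∑ s ∈ D, ∑ m ∈ Finset.Ioc 0 M,
    (if m * n ≤ x then Lbig U m * Wt (dd s) (m * n) else 0) with hY
  have e1 : ∑ n ∈ Finset.Ioc N (2 * N), ∑ m ∈ Finset.Ioc 0 (x / n),
        bcoef V n * Lbig U m * ∑ s ∈ D, Wt (dd s) (n * m) =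
      ∑ n ∈ Finset.Ioc N (2 * N), bcoef V n * Y n := by
    refine Finset.sum_congr rfl fun n hn => ?_
    rw [Finset.mem_Ioc] at hn
    have hn0 : 0 < n := by omega
    simp only [hY]
    rw [Finset.sum_comm, Finset.mul_sum]
    have hs : Finset.Ioc 0 (x / n) = (Finset.Ioc 0 M).filter (fun m => m * n ≤ x) := by
      ext m
      simp only [Finset.mem_filter, Finset.mem_Ioc, ← Nat.le_div_iff_mul_le hn0]
      constructor
      · rintro ⟨a, b⟩; exact ⟨⟨a, b.trans (Nat.div_le_div_left hn.1.le hN0)⟩, b⟩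
      · rintro ⟨⟨a, _⟩, b⟩; exact ⟨a, b⟩
    rw [hs, Finset.sum_filter]
    refine Finset.sum_congr rfl fun m _ => ?_
    split_ifs
    · rw [← Finset.mul_sum, mul_comm n m]; ring
    · simp
  rw [e1]
  -- second moment
  have hYY : ∑ n ∈ Finset.Ioc N (2 * N), Y n ^ 2 ≤
      h ^ 2 * J ^ 2 * (M:ℝ) ^ 2 * (3 * (F:ℝ)^2 + N * (5 * η + ε ^ 2)) := by
    have e2 : ∀ n, Y n ^ 2 = ∑ s ∈ D, ∑ t ∈ D, ∑ m ∈ Finset.Ioc 0 M, ∑ k ∈ Finset.Ioc 0 M,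
        Lbig U m * Lbig U k * (if m * n ≤ x ∧ k * n ≤ x then
          Wt (dd s) (m * n) * Wt (dd t) (k * n) else 0) := by
      intro n
      rw [sq]
      simp only [hY]
      rw [Finset.sum_mul_sum]
      refine Finset.sum_congr rfl fun s _ => Finset.sum_congr rfl fun t _ => ?_
      rw [Finset.sum_mul_sum]
      refine Finset.sum_congr rfl fun m _ => Finset.sum_congr rfl fun k _ => ?_
      by_cases a1 : m * n ≤ x <;> by_cases a2 : k * n ≤ x <;> simp [a1, a2]
      ring
    have e3 : ∑ n ∈ Finset.Ioc N (2 * N), Y n ^ 2 =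
        ∑ s ∈ D, ∑ t ∈ D, ∑ m ∈ Finset.Ioc 0 M, ∑ k ∈ Finset.Ioc 0 M,
        Lbig U m * Lbig U k * ∑ n ∈ Finset.Ioc N (2 * N), (if m * n ≤ x ∧ k * n ≤ x then
          Wt (dd s) (m * n) * Wt (dd t) (k * n) else 0) := by
      simp only [e2]
      rw [Finset.sum_comm]
      refine Finset.sum_congr rfl fun s _ => ?_
      rw [Finset.sum_comm]
      refine Finset.sum_congr rfl fun t _ => ?_
      rw [Finset.sum_comm]
      refine Finset.sum_congr rfl fun m _ => ?_
      rw [Finset.sum_comm]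
      refine Finset.sum_congr rfl fun k _ => ?_
      rw [Finset.mul_sum]
    rw [e3]
    calc _ ≤ ∑ s ∈ D, ∑ t ∈ D, h ^ 2 * (M:ℝ) ^ 2 * (3 * (F:ℝ)^2 +
          N * (5 * (if (dd s).Coprime (dd t) then 0 else 1) + ε ^ 2)) := by
          refine Finset.sum_le_sum fun s hs => Finset.sum_le_sum fun t ht => ?_
          obtain ⟨s1, s2⟩ := hD s hs
          obtain ⟨t1, t2⟩ := hD t ht
          have hr := sum_rho_le (dd s) (dd t) M F ε s1 s2 (by omega) (hε s hs M) (hε t ht M)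
          calc _ ≤ ∑ m ∈ Finset.Ioc 0 M, ∑ k ∈ Finset.Ioc 0 M,
                h ^ 2 * (3 * (F:ℝ) ^ 2 + N * rho (dd s) (dd t) m k) := by
                refine Finset.sum_le_sum fun m hm => Finset.sum_le_sum fun k hk => ?_
                rw [Finset.mem_Ioc] at hm hk
                have c1 := corr_le (dd s) (dd t) m k N x F s1 t1 s2 t2 hm.1 hk.1
                have l1 := Lbig_le U x m h hm.1 (hm.2.trans hMx) hh
                have l2 := Lbig_le U x k h hk.1 (hk.2.trans hMx) hh
                have l3 := Lbig_nonneg U m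
                have l4 := Lbig_nonneg U k
                have hr := rho_nonneg (dd s) (dd t) m k
                refine (le_abs_self _).trans ?_
                rw [abs_mul, abs_of_nonneg (mul_nonneg l3 l4), sq h]
                gcongr
            _ = h ^ 2 * (3 * (F:ℝ)^2 * (M:ℝ)^2 + N * ∑ m ∈ Finset.Ioc 0 M,
                  ∑ k ∈ Finset.Ioc 0 M, rho (dd s) (dd t) m k) := by
                simp only [← Finset.mul_sum, Finset.sum_add_distrib]
                simp
                left; ring
            _ ≤ h ^ 2 * (3 * (F:ℝ)^2 * (M:ℝ)^2 + N * ((M:ℝ) ^ 2 *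
                  (5 * (if (dd s).Coprime (dd t) then 0 else 1) + ε ^ 2))) := by gcongr
            _ = _ := by ring
      _ = h ^ 2 * (M:ℝ) ^ 2 * (3 * (F:ℝ)^2 * J ^ 2 + N * (5 * (∑ s ∈ D, ∑ t ∈ D,
            (if (dd s).Coprime (dd t) then (0:ℝ) else 1)) + ε ^ 2 * J ^ 2)) := by
          simp only [← Finset.mul_sum, Finset.sum_add_distrib]
          simp
          left; ring
      _ ≤ h ^ 2 * (M:ℝ) ^ 2 * (3 * (F:ℝ)^2 * J ^ 2 + N * (5 * (η * J ^ 2) + ε ^ 2 * J ^ 2)) := by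
          gcongr
      _ = _ := by ring
  have hbb : ∑ n ∈ Finset.Ioc N (2 * N), bcoef V n ^ 2 ≤ 2 * N * h ^ 3 := by
    calc _ ≤ ∑ n ∈ Finset.Ioc 0 (2 * N), bcoef V n ^ 2 :=
          Finset.sum_le_sum_of_subset_of_nonneg (Finset.Ioc_subset_Ioc_left (Nat.zero_le _))
            (fun _ _ _ => sq_nonneg _)
      _ ≤ ∑ n ∈ Finset.Ioc 0 (2 * N), ((n.divisors.card : ℝ)) ^ 2 := by
          refine Finset.sum_le_sum fun n _ => ?_
          rw [← sq_abs]
          exact pow_le_pow_left₀ (abs_nonneg _) (abs_bcoef_le V n hV) 2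
      _ ≤ (2 * N : ℕ) * harm_s2 (2 * N) ^ 3 := tau_sq_sum _
      _ ≤ 2 * N * h ^ 3 := by
          push_cast
          have := harm_nonneg (2 * N)
          have := (harm_mono h2N).trans hharm
          gcongr
  have hCS := Finset.sum_mul_sq_le_sq_mul_sq (Finset.Ioc N (2 * N)) (fun n => bcoef V n) Y
  have hV' : (0:ℝ) < V := by exact_mod_cast hV
  have hN' : (0:ℝ) < N := by exact_mod_cast hN0
  have hVN' : (V:ℝ) ≤ N := by exact_mod_cast hVN
  have hMN' : (M:ℝ) * N ≤ x := by exact_mod_cast hMN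
  have hfin : (∑ n ∈ Finset.Ioc N (2 * N), bcoef V n * Y n) ^ 2 ≤
      (2 * h ^ 5 * (3 * (F:ℝ) ^ 2 / V + 5 * η + ε ^ 2)) * (J * x) ^ 2 := by
    have hb0 : 0 ≤ 3 * (F:ℝ)^2 + N * (5 * η + ε ^ 2) := by positivity
    calc _ ≤ (2 * N * h ^ 3) * (h ^ 2 * J ^ 2 * (M:ℝ) ^ 2 * (3 * (F:ℝ)^2 + N * (5 * η + ε ^ 2))) := by
          refine hCS.trans ?_
          gcongr
      _ = 2 * h ^ 5 * J ^ 2 * ((M:ℝ) * N) ^ 2 * (3 * (F:ℝ)^2 / N + 5 * η + ε ^ 2) := by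
          field_simp
          ring
      _ ≤ 2 * h ^ 5 * J ^ 2 * (x:ℝ) ^ 2 * (3 * (F:ℝ)^2 / V + 5 * η + ε ^ 2) := by gcongr
      _ = _ := by ring
  have hsq := Real.sqrt_le_sqrt hfin
  rw [Real.sqrt_sq_eq_abs, Real.sqrt_mul (by positivity), Real.sqrt_sq (by positivity)] at hsq
  linarith

lemma typeII (D : Finset (Finset ℕ)) (U V x I F : ℕ) (h ε η : ℝ)
    (hD : ∀ s ∈ D, 1 < dd s ∧ dd s ≤ F) (hFU : F ≤ U) (hU : 1 ≤ U)
    (hε : ∀ s ∈ D, ∀ M : ℕ, ∑ v ∈ Finset.Ioc 0 M, nc (dd s) v ≤ ε * M)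
    (hη : ∑ s ∈ D, ∑ t ∈ D, (if (dd s).Coprime (dd t) then (0:ℝ) else 1) ≤ η * (D.card : ℝ) ^ 2)
    (hη0 : 0 ≤ η)
    (hh : Real.log x ≤ h) (hharm : harm_s2 x ≤ h) (hV : 1 ≤ V) (hI : x = 2 ^ I * V) :
    |∑ n ∈ Finset.Ioc 0 x, ∑ m ∈ Finset.Ioc 0 (x / n),
        bcoef V n * Lbig U m * ∑ s ∈ D, Wt (dd s) (n * m)| ≤
      I * (√(2 * h ^ 5 * (3 * (F:ℝ) ^ 2 / V + 5 * η + ε ^ 2)) * D.card * x) := by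
  set f : ℕ → ℝ := fun n => ∑ m ∈ Finset.Ioc 0 (x / n),
        bcoef V n * Lbig U m * ∑ s ∈ D, Wt (dd s) (n * m) with hf
  have key : ∀ i : ℕ, |∑ n ∈ Finset.Ioc 0 (2 ^ i * V), f n| ≤
      i * (√(2 * h ^ 5 * (3 * (F:ℝ) ^ 2 / V + 5 * η + ε ^ 2)) * D.card * x) := by
    intro i
    induction i with
    | zero =>
      rw [Finset.sum_eq_zero]
      · simp
      · intro n hn
        rw [Finset.mem_Ioc] at hn
        simp only [hf]
        rw [bcoef_eq_zero V n (by simpa using hn.2)]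
        simp
    | succ i ih =>
      have e : ∑ n ∈ Finset.Ioc 0 (2 ^ (i + 1) * V), f n =
          ∑ n ∈ Finset.Ioc 0 (2 ^ i * V), f n + ∑ n ∈ Finset.Ioc (2 ^ i * V) (2 * (2 ^ i * V)), f n := by
        rw [show 2 ^ (i + 1) * V = 2 * (2 ^ i * V) by ring]
        exact (Finset.sum_Ioc_consecutive f (Nat.zero_le _) (by omega)).symm
      rw [e]
      refine (abs_add_le _ _).trans ?_
      have hb := typeII_block D U V x (2 ^ i * V) F h ε η hD hFU hU hε hη hη0 hh hharm hV
        (Nat.le_mul_of_pos_left V (by positivity))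
      push_cast
      linarith
  have := key I
  rwa [← hI] at this



set_option maxHeartbeats 1600000 in
lemma disc_bound (D : Finset (Finset ℕ)) (A : ℕ) (hA : 1 ≤ A) (δ h : ℝ) (hδ0 : 0 ≤ δ)
    (hh : h = 6 * A)
    (hD : ∀ s ∈ D, 1 < dd s ∧ dd s ≤ 2 ^ A)
    (hε : ∀ s ∈ D, ∀ M : ℕ, ∑ v ∈ Finset.Ioc 0 M, nc (dd s) v ≤ δ * M)
    (hε' : ∀ s ∈ D, ∀ M : ℕ, ∑ v ∈ Finset.Ioc 0 M, nc (dd s) v / v ≤ δ * harm_s2 M)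
    (hη : ∑ s ∈ D, ∑ t ∈ D, (if (dd s).Coprime (dd t) then (0:ℝ) else 1) ≤ δ * (D.card : ℝ) ^ 2)
    (hF : 1 ≤ δ * 2 ^ A) (hδ : 1800 * δ * h ^ 7 ≤ 1) :
    |∑ n ∈ Finset.Ioc 0 ((2 ^ A) ^ 6), Lbig (2 ^ A) n * ∑ s ∈ D, Wt (dd s) n| ≤
      (3 / 25) * (D.card * ((2:ℝ) ^ A) ^ 6) := by
  set F : ℕ := 2 ^ A with hFdef
  set x : ℕ := F ^ 6 with hx
  set J : ℝ := (D.card : ℝ) with hJ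
  have hA' : (1:ℝ) ≤ A := by exact_mod_cast hA
  have h6 : (6:ℝ) ≤ h := by rw [hh]; linarith
  have h0 : (0:ℝ) ≤ h := by linarith
  have hJ0 : 0 ≤ J := by positivity
  have hFr : ((F:ℕ):ℝ) = 2 ^ A := by rw [hFdef]; push_cast; rfl
  have hF1 : 1 ≤ F := Nat.one_le_two_pow
  have hF0 : (0:ℝ) < F := by exact_mod_cast hF1
  have hxr : (x:ℝ) = (F:ℝ) ^ 6 := by rw [hx]; push_cast; rfl
  have hlog1 : 1 + Real.log x ≤ h := by
    rw [hxr, hFr, ← pow_mul, Real.log_pow, hh]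
    have := Real.log_two_lt_d9
    push_cast
    nlinarith
  have hlog : Real.log x ≤ h := by linarith
  have hharm : harm_s2 x ≤ h := (harm_le x).trans hlog1
  have hδh : δ * h ≤ 1 := by
    have : h ≤ h ^ 7 := le_self_pow₀ (by linarith) (by norm_num)
    nlinarith
  have hδF : 1 ≤ δ * F := by rw [hFr]; exact hF
  have hκ : ∀ s ∈ D, ∑ v ∈ Finset.Ioc 0 x, nc (dd s) v / v ≤ δ * h := fun s hs =>
    (hε' s hs x).trans (by gcongr)
  rw [vaughan F (F ^ 3) x]
  have eI : ∀ (s : Finset ℕ), s ∈ D → ((F:ℝ) ^ 4 ≤ δ * x) ∧ ((F:ℝ) ^ 3 * dd s ≤ δ * x) ∧ ((F:ℝ) * F ^ 3 * dd s ≤ δ * x) := by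
    intro s hs
    have h1 : (dd s : ℝ) ≤ F := by exact_mod_cast (hD s hs).2
    have h1F : (1:ℝ) ≤ F := by exact_mod_cast hF1
    have a5 : (F:ℝ) ^ 5 ≤ δ * x := by
      rw [hxr]
      calc (F:ℝ) ^ 5 = F ^ 5 * 1 := by ring
        _ ≤ F ^ 5 * (δ * F) := by gcongr
        _ = _ := by ring
    have a4 : (F:ℝ) ^ 4 ≤ F ^ 5 := pow_le_pow_right₀ h1F (by norm_num)
    refine ⟨a4.trans a5, ?_, ?_⟩
    · calc (F:ℝ) ^ 3 * dd s ≤ (F:ℝ) ^ 3 * (F:ℝ) := by gcongr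
        _ = (F:ℝ) ^ 4 := by ring
        _ ≤ _ := a4.trans a5
    · calc (F:ℝ) * F ^ 3 * dd s ≤ (F:ℝ) * (F:ℝ) ^ 3 * (F:ℝ) := by gcongr
        _ = (F:ℝ) ^ 5 := by ring
        _ ≤ _ := a5
  have t1 : |∑ v ∈ Finset.Ioc 0 x, ∑ k ∈ Finset.Ioc 0 (x / v), Msmall (F ^ 3) v * Real.log k *
      ∑ s ∈ D, Wt (dd s) (v * k)| ≤ J * (4 * h ^ 2 * δ * x) := by
    have e : ∑ v ∈ Finset.Ioc 0 x, ∑ k ∈ Finset.Ioc 0 (x / v), Msmall (F ^ 3) v * Real.log k *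
      ∑ s ∈ D, Wt (dd s) (v * k) = ∑ s ∈ D, ∑ v ∈ Finset.Ioc 0 x, ∑ k ∈ Finset.Ioc 0 (x / v),
        Msmall (F ^ 3) v * Real.log k * Wt (dd s) (v * k) := by
      rw [Finset.sum_comm]
      refine Finset.sum_congr rfl fun v _ => ?_
      rw [Finset.sum_comm]
      refine Finset.sum_congr rfl fun k _ => ?_
      rw [Finset.mul_sum]
    rw [e]
    refine (Finset.abs_sum_le_sum_abs _ _).trans ?_
    rw [hJ, ← nsmul_eq_mul]
    refine Finset.sum_le_card_nsmul _ _ _ fun s hs => ?_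
    refine (typeI_log (F ^ 3) x (dd s) h (δ * h) (hD s hs).1 hlog h0 (hκ s hs)).trans ?_
    push_cast
    have := (eI s hs).2.1
    have hx0 : 0 ≤ δ * x := by positivity
    have : (F:ℝ) ^ 3 * dd s + x * (δ * h) ≤ 2 * h * (δ * x) := by nlinarith
    calc _ ≤ 2 * h * (2 * h * (δ * x)) := by gcongr
      _ = _ := by ring
  have t2 : |∑ v ∈ Finset.Ioc 0 x, ∑ u ∈ Finset.Ioc 0 (x / v), ∑ k ∈ Finset.Ioc 0 (x / v / u),
          Msmall (F ^ 3) v * Lsmall F u * ∑ s ∈ D, Wt (dd s) (v * u * k)| ≤ J * (3 * h ^ 3 * δ * x) := by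
    have e : ∑ v ∈ Finset.Ioc 0 x, ∑ u ∈ Finset.Ioc 0 (x / v), ∑ k ∈ Finset.Ioc 0 (x / v / u),
          Msmall (F ^ 3) v * Lsmall F u * ∑ s ∈ D, Wt (dd s) (v * u * k) =
        ∑ s ∈ D, ∑ v ∈ Finset.Ioc 0 x, ∑ u ∈ Finset.Ioc 0 (x / v), ∑ k ∈ Finset.Ioc 0 (x / v / u),
          Msmall (F ^ 3) v * Lsmall F u * Wt (dd s) (v * u * k) := by
      rw [Finset.sum_comm]
      refine Finset.sum_congr rfl fun v _ => ?_
      rw [Finset.sum_comm]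
      refine Finset.sum_congr rfl fun u _ => ?_
      rw [Finset.sum_comm]
      refine Finset.sum_congr rfl fun k _ => ?_
      rw [Finset.mul_sum]
    rw [e]
    refine (Finset.abs_sum_le_sum_abs _ _).trans ?_
    rw [hJ, ← nsmul_eq_mul]
    refine Finset.sum_le_card_nsmul _ _ _ fun s hs => ?_
    refine (typeI_L F (F ^ 3) x (dd s) h (δ * h) (hD s hs).1 hlog h0 hharm (hκ s hs)).trans ?_
    push_cast
    have := (eI s hs).2.2
    have hx0 : 0 ≤ δ * x := by positivity
    have : (F:ℝ) * F ^ 3 * dd s + 2 * x * h * (δ * h) ≤ 3 * h ^ 2 * (δ * x) := by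
      have : 1 ≤ h ^ 2 := by nlinarith
      nlinarith
    calc _ ≤ h * (3 * h ^ 2 * (δ * x)) := by gcongr
      _ = _ := by ring
  have t3 := typeII D F (F ^ 3) x (3 * A) F h δ δ hD le_rfl hF1 hε hη hδ0 hlog hharm
    (Nat.one_le_pow _ _ hF1) (by
      rw [hx, hFdef, ← pow_mul, ← pow_mul, ← pow_add]; congr 1; ring)
  have hsq : √(2 * h ^ 5 * (3 * (F:ℝ) ^ 2 / (F ^ 3 : ℕ) + 5 * δ + δ ^ 2)) * h ≤ 1 / 10 := by
    have hδ1 : δ ≤ 1 := by nlinarith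
    have : 3 * (F:ℝ) ^ 2 / (F ^ 3 : ℕ) ≤ 3 * δ := by
      push_cast
      rw [div_le_iff₀ (by positivity)]
      have : (F:ℝ) ^ 2 * 1 ≤ F ^ 2 * (δ * F) := by gcongr
      nlinarith
    have h2 : 3 * (F:ℝ) ^ 2 / (F ^ 3 : ℕ) + 5 * δ + δ ^ 2 ≤ 9 * δ := by nlinarith
    have h3 : h = √(h ^ 2) := (Real.sqrt_sq h0).symm
    nth_rewrite 2 [h3]
    rw [← Real.sqrt_mul' _ (by positivity)]
    apply Real.sqrt_le_iff.mpr
    refine ⟨by norm_num, ?_⟩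
    calc _ ≤ 2 * h ^ 5 * (9 * δ) * h ^ 2 := by gcongr
      _ ≤ _ := by nlinarith
  have hx0 : (0:ℝ) ≤ J * x := by positivity
  have t3' : ((3 * A : ℕ) : ℝ) * (√(2 * h ^ 5 * (3 * (F:ℝ) ^ 2 / (F ^ 3 : ℕ) + 5 * δ + δ ^ 2)) * D.card * x)
      ≤ (1 / 10) * (J * x) := by
    have h3A : ((3 * A : ℕ) : ℝ) ≤ h := by rw [hh]; push_cast; linarith
    calc _ ≤ h * (√(2 * h ^ 5 * (3 * (F:ℝ) ^ 2 / (F ^ 3 : ℕ) + 5 * δ + δ ^ 2)) * D.card * x) := by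
            gcongr
      _ = (√(2 * h ^ 5 * (3 * (F:ℝ) ^ 2 / (F ^ 3 : ℕ) + 5 * δ + δ ^ 2)) * h) * (J * x) := by ring
      _ ≤ _ := by gcongr
  have hp3 : δ * h ^ 3 ≤ 1 / 1800 := by
    have : h ^ 3 ≤ h ^ 7 := pow_le_pow_right₀ (by linarith) (by norm_num)
    nlinarith
  have hp2 : δ * h ^ 2 ≤ 1 / 1800 := by
    have : h ^ 2 ≤ h ^ 7 := pow_le_pow_right₀ (by linarith) (by norm_num)
    nlinarith
  have e1 : J * (4 * h ^ 2 * δ * x) ≤ 4 / 1800 * (J * x) := by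
    calc _ = 4 * (δ * h ^ 2) * (J * x) := by ring
      _ ≤ 4 * (1 / 1800) * (J * x) := by gcongr
      _ = _ := by ring
  have e2 : J * (3 * h ^ 3 * δ * x) ≤ 3 / 1800 * (J * x) := by
    calc _ = 3 * (δ * h ^ 3) * (J * x) := by ring
      _ ≤ 3 * (1 / 1800) * (J * x) := by gcongr
      _ = _ := by ring
  have hgoal : J * ((2:ℝ) ^ A) ^ 6 = J * x := by rw [hxr, hFr]
  rw [hgoal]
  rw [abs_le] at t1 t2 t3 ⊢
  constructor <;> linarith

set_option maxHeartbeats 1600000 in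
lemma main_lower (D : Finset (Finset ℕ)) (A : ℕ) (hA : 1 ≤ A) (δ h : ℝ) (hδ0 : 0 ≤ δ)
    (hh : h = 6 * A)
    (hD : ∀ s ∈ D, 1 < dd s ∧ dd s ≤ 2 ^ A)
    (hε : ∀ s ∈ D, ∀ M : ℕ, ∑ v ∈ Finset.Ioc 0 M, nc (dd s) v ≤ δ * M)
    (hε' : ∀ s ∈ D, ∀ M : ℕ, ∑ v ∈ Finset.Ioc 0 M, nc (dd s) v / v ≤ δ * harm_s2 M)
    (hη : ∑ s ∈ D, ∑ t ∈ D, (if (dd s).Coprime (dd t) then (0:ℝ) else 1) ≤ δ * (D.card : ℝ) ^ 2)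
    (hF : 1 ≤ δ * 2 ^ A) (hδ : 1800 * δ * h ^ 7 ≤ 1) :
    (3 / 10) * (D.card * ((2:ℝ) ^ A) ^ 6) ≤
      h * ∑ s ∈ D, (dd s : ℝ) * (((Finset.Ioc 0 ((2 ^ A) ^ 6)).filter
        (fun p => p.Prime ∧ p ≡ 1 [MOD dd s])).card : ℝ) := by
  have hdisc := disc_bound D A hA δ h hδ0 hh hD hε hε' hη hF hδ
  set F : ℕ := 2 ^ A with hFdef
  set x : ℕ := F ^ 6 with hx
  set J : ℝ := (D.card : ℝ) with hJ
  have hA' : (1:ℝ) ≤ A := by exact_mod_cast hA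
  have h6 : (6:ℝ) ≤ h := by rw [hh]; linarith
  have h0 : (0:ℝ) ≤ h := by linarith
  have hJ0 : 0 ≤ J := by positivity
  have hFr : ((F:ℕ):ℝ) = 2 ^ A := by rw [hFdef]; push_cast; rfl
  have hF1 : 1 ≤ F := Nat.one_le_two_pow
  have hF0 : (0:ℝ) < F := by exact_mod_cast hF1
  have hxr : (x:ℝ) = (F:ℝ) ^ 6 := by rw [hx]; push_cast; rfl
  have hlog1 : 1 + Real.log x ≤ h := by
    rw [hxr, hFr, ← pow_mul, Real.log_pow, hh]
    have := Real.log_two_lt_d9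
    push_cast
    nlinarith
  have hlog : Real.log x ≤ h := by linarith
  have hF1' : (1:ℝ) ≤ F := by exact_mod_cast hF1
  have hx1 : (1:ℝ) ≤ x := by rw [hxr]; exact one_le_pow₀ hF1'
  have hFh : 1800 * h ^ 7 ≤ F := by
    have h7 : 0 ≤ h ^ 7 := by positivity
    have : 1800 * h ^ 7 * 1 ≤ 1800 * h ^ 7 * (δ * F) := by
      rw [hFr]; gcongr
    have : 1800 * h ^ 7 * (δ * F) = (1800 * δ * h ^ 7) * F := by ring
    have : (1800 * δ * h ^ 7) * F ≤ 1 * F := by gcongr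
    linarith
  have hhF : 1800 * h ≤ F := by
    have : h ≤ h ^ 7 := le_self_pow₀ (by linarith) (by norm_num)
    linarith
  -- upper bound pointwise
  have hpt : ∑ n ∈ Finset.Ioc 0 x, Lbig F n * ∑ s ∈ D, Wt (dd s) n ≤
      h * (∑ s ∈ D, (dd s : ℝ) * (((Finset.Ioc 0 x).filter
        (fun p => p.Prime ∧ p ≡ 1 [MOD dd s])).card : ℝ))
      + J * F * (∑ n ∈ (Finset.Ioc 0 x).filter (fun n => ¬ n.Prime), ArithmeticFunction.vonMangoldt n)
      - J * ∑ n ∈ Finset.Ioc 0 x, Lbig F n := by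
    have e1 : ∀ n ∈ Finset.Ioc 0 x, Lbig F n * ∑ s ∈ D, Wt (dd s) n ≤
        (∑ s ∈ D, h * ((dd s : ℝ) * (if n.Prime ∧ n ≡ 1 [MOD dd s] then 1 else 0)))
        + J * F * (if ¬ n.Prime then ArithmeticFunction.vonMangoldt n else 0) - J * Lbig F n := by
      intro n hn
      rw [Finset.mem_Ioc] at hn
      have a1 : ∑ s ∈ D, Wt (dd s) n = (∑ s ∈ D, if n ≡ 1 [MOD dd s] then (dd s : ℝ) else 0) - J := by
        simp [Wt, Finset.sum_sub_distrib, hJ]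
      rw [a1, mul_sub]
      have hL0 := Lbig_nonneg F n
      have hLh := Lbig_le F x n h hn.1 hn.2 hlog
      have : Lbig F n * (∑ s ∈ D, if n ≡ 1 [MOD dd s] then (dd s : ℝ) else 0) ≤
        (∑ s ∈ D, h * ((dd s : ℝ) * (if n.Prime ∧ n ≡ 1 [MOD dd s] then 1 else 0)))
        + J * F * (if ¬ n.Prime then ArithmeticFunction.vonMangoldt n else 0) := by
        by_cases hp : n.Prime
        · simp only [hp, true_and, not_true_eq_false, if_false, mul_zero, add_zero]
          rw [Finset.mul_sum]
          refine Finset.sum_le_sum fun s _ => ?_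
          split_ifs
          · rw [mul_one]; gcongr
          · simp
        · simp only [hp, false_and, not_false_eq_true, if_true, if_false, mul_zero,
            Finset.sum_const_zero, zero_add]
          have b1 : Lbig F n ≤ ArithmeticFunction.vonMangoldt n := by
            simp only [Lbig, ArithmeticFunction.coe_mk]
            split_ifs
            · exact le_rfl
            · exact ArithmeticFunction.vonMangoldt_nonneg
          have b2 : (∑ s ∈ D, if n ≡ 1 [MOD dd s] then (dd s : ℝ) else 0) ≤ J * F := by
            rw [hJ, ← nsmul_eq_mul]
            refine Finset.sum_le_card_nsmul _ _ _ fun s hs => ?_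
            split_ifs
            · exact_mod_cast (hD s hs).2
            · exact hF0.le
          calc _ ≤ Lbig F n * (J * F) := by gcongr
            _ ≤ ArithmeticFunction.vonMangoldt n * (J * F) := by gcongr
            _ = _ := by ring
      linarith
    refine (Finset.sum_le_sum e1).trans (le_of_eq ?_)
    rw [Finset.sum_sub_distrib, Finset.sum_add_distrib, ← Finset.mul_sum, ← Finset.mul_sum,
      ← Finset.sum_filter, Finset.sum_comm, Finset.mul_sum]
    congr 2
    rw [Finset.mul_sum]
    refine Finset.sum_congr rfl fun s _ => ?_
    rw [← Finset.mul_sum, ← Finset.mul_sum]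
    simp
  -- Chebyshev bounds
  have hnp : (∑ n ∈ (Finset.Ioc 0 x).filter (fun n => ¬ n.Prime), ArithmeticFunction.vonMangoldt n)
      ≤ 2 * F ^ 3 * h := by
    have e := Chebyshev.psi_sub_theta_eq_sum_not_prime (x:ℝ)
    rw [Nat.floor_natCast] at e
    rw [← e]
    refine (Chebyshev.psi_sub_theta_le hx1).trans ?_
    have : √(x:ℝ) = F ^ 3 := by
      rw [hxr, show (F:ℝ) ^ 6 = (F ^ 3) ^ 2 by ring, Real.sqrt_sq (by positivity)]
    rw [this]
    gcongr
  have hsum : (x:ℝ) * Real.log 2 - Real.log (x + 1) - 6 * F ≤ ∑ n ∈ Finset.Ioc 0 x, Lbig F n := by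
    have e1 : ∑ n ∈ Finset.Ioc 0 x, Lbig F n = Chebyshev.psi x - Chebyshev.psi F := by
      rw [Chebyshev.psi, Chebyshev.psi, Nat.floor_natCast, Nat.floor_natCast]
      have hFx : F ≤ x := by rw [hx]; exact Nat.le_self_pow (by norm_num) F
      have : ∀ n ∈ Finset.Ioc 0 x, Lbig F n = ArithmeticFunction.vonMangoldt n - 
          (if n ≤ F then ArithmeticFunction.vonMangoldt n else 0) := by
        intro n _
        simp only [Lbig, ArithmeticFunction.coe_mk]
        split_ifs <;> first | omega | simp
      rw [Finset.sum_congr rfl this, Finset.sum_sub_distrib, ← Finset.sum_filter]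
      congr 2
      ext n
      simp only [Finset.mem_filter, Finset.mem_Ioc]
      omega
    rw [e1]
    have a := Chebyshev.psi_ge x
    have b := Chebyshev.psi_le_const_mul_self hF0.le
    have c : Real.log 4 + 4 ≤ 6 := by
      have : Real.log 4 = 2 * Real.log 2 := by
        rw [show (4:ℝ) = 2 ^ 2 by norm_num, Real.log_pow]; norm_num
      have := Real.log_two_lt_d9
      linarith
    have : (Real.log 4 + 4) * F ≤ 6 * F := by gcongr
    linarith
  have hlogx : Real.log (x + 1) ≤ 1 + h := by
    have : Real.log (x + 1) ≤ Real.log (2 * x) := Real.log_le_log (by positivity) (by linarith)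
    rw [Real.log_mul (by norm_num) (by linarith)] at this
    have := Real.log_two_lt_d9
    linarith
  have hJ0 : 0 ≤ J := by positivity
  have hFF : (F:ℝ) ≤ x / 100 := by
    rw [hxr]
    have h2 : (100:ℝ) ≤ F ^ 5 := le_trans (by linarith) (le_self_pow₀ hF1' (by norm_num))
    have : (F:ℝ) * 100 ≤ F * F ^ 5 := by gcongr
    rw [le_div_iff₀ (by norm_num)]
    linarith [show (F:ℝ) * F ^ 5 = F ^ 6 by ring]
  have hnp' : (F:ℝ) * (2 * F ^ 3 * h) ≤ x / 100 := by
    rw [hxr]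
    have : (F:ℝ) ^ 4 * h ≤ F ^ 4 * (F ^ 2 / 1800) := by
      have : (F:ℝ) ≤ F ^ 2 := le_self_pow₀ hF1' (by norm_num)
      gcongr
      linarith
    have hp : (0:ℝ) ≤ F ^ 6 := by positivity
    nlinarith [show (F:ℝ) ^ 4 * (F ^ 2 / 1800) = F ^ 6 / 1800 by ring]
  have hl2 := Real.log_two_gt_d9
  have hS : (6 / 10) * (x:ℝ) ≤ ∑ n ∈ Finset.Ioc 0 x, Lbig F n := by
    have : (x:ℝ) * 0.69 ≤ x * Real.log 2 := by gcongr; linarith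
    have : h ≤ F / 1800 := by linarith
    linarith
  have hgoal : J * ((2:ℝ) ^ A) ^ 6 = J * x := by rw [hxr, hFr]
  rw [hgoal] at hdisc ⊢
  have q1 := (abs_le.mp hdisc).1
  have q2 : J * ((6 / 10) * (x:ℝ)) ≤ J * ∑ n ∈ Finset.Ioc 0 x, Lbig F n := by gcongr
  have q3 : J * F * (∑ n ∈ (Finset.Ioc 0 x).filter (fun n => ¬ n.Prime), ArithmeticFunction.vonMangoldt n)
      ≤ J * (x / 100) := by
    rw [mul_assoc]
    gcongr
    refine le_trans ?_ hnp'
    gcongr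
  have hx0 : (0:ℝ) ≤ J * x := by positivity
  linarith


lemma exists_good_subset (P : Finset ℕ) (j K : ℕ) (hjK : j ≤ K) (hK : K ≤ P.card)
    (f : Finset ℕ → ℝ) (c : ℝ)
    (hf : c * (P.powersetCard j).card ≤ ∑ s ∈ P.powersetCard j, f s) :
    ∃ Q ∈ P.powersetCard K, c * (K.choose j : ℝ) ≤ ∑ s ∈ Q.powersetCard j, f s := by
  have h1 : ∑ Q ∈ P.powersetCard K, ∑ s ∈ Q.powersetCard j, f s =
      ((P.card - j).choose (K - j) : ℝ) * ∑ s ∈ P.powersetCard j, f s := by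
    have : ∀ Q ∈ P.powersetCard K, ∑ s ∈ Q.powersetCard j, f s =
        ∑ s ∈ P.powersetCard j, if s ⊆ Q then f s else 0 := by
      intro Q hQ
      rw [Finset.mem_powersetCard] at hQ
      rw [← Finset.sum_filter]
      refine Finset.sum_congr ?_ fun _ _ => rfl
      ext s
      simp only [Finset.mem_filter, Finset.mem_powersetCard]
      constructor
      · rintro ⟨a, b⟩; exact ⟨⟨a.trans hQ.1, b⟩, a⟩
      · rintro ⟨⟨_, b⟩, a⟩; exact ⟨a, b⟩
    rw [Finset.sum_congr rfl this, Finset.sum_comm, Finset.mul_sum]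
    refine Finset.sum_congr rfl fun s hs => ?_
    rw [Finset.mem_powersetCard] at hs
    rw [← Finset.sum_filter, Finset.sum_const, nsmul_eq_mul,
      Finset.card_filter_powersetCard_subset s P K hs.1 (hs.2.le.trans hjK), hs.2]
  apply Finset.exists_le_of_sum_le
  · exact Finset.powersetCard_nonempty.mpr hK
  · rw [h1, Finset.sum_const, nsmul_eq_mul, Finset.card_powersetCard]
    rw [Finset.card_powersetCard] at hf
    have hm : (P.card.choose K : ℝ) * K.choose j = P.card.choose j * (P.card - j).choose (K - j) := by
      exact_mod_cast Nat.choose_mul hjK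
    calc (P.card.choose K : ℝ) * (c * K.choose j) = c * (P.card.choose K * K.choose j) := by ring
      _ = (P.card - j).choose (K - j) * (c * P.card.choose j) := by rw [hm]; ring
      _ ≤ _ := by gcongr

lemma eta_bound (P : Finset ℕ) (j : ℕ) (hP : ∀ q ∈ P, q.Prime) (δ : ℝ) 
    (hδ : (j:ℝ) ^ 2 ≤ δ * P.card) (hj : 1 ≤ j) (hjP : j ≤ P.card) :
    ∑ s ∈ P.powersetCard j, ∑ t ∈ P.powersetCard j,
      (if (dd s).Coprime (dd t) then (0:ℝ) else 1) ≤ δ * ((P.powersetCard j).card : ℝ) ^ 2 := by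
  set D := P.powersetCard j with hDdef
  have hPc : (0:ℝ) < P.card := by exact_mod_cast lt_of_lt_of_le hj hjP
  have hin : ∀ s ∈ D, ∑ t ∈ D, (if (dd s).Coprime (dd t) then (0:ℝ) else 1) ≤ δ * D.card := by
    intro s hs
    have hs' := Finset.mem_powersetCard.mp hs
    have h1 : ∀ t ∈ D, (if (dd s).Coprime (dd t) then (0:ℝ) else 1) ≤
        ∑ q ∈ s, if {q} ⊆ t then (1:ℝ) else 0 := by
      intro t ht
      have ht' := Finset.mem_powersetCard.mp ht
      split_ifs with hc
      · exact Finset.sum_nonneg fun q _ => by split_ifs <;> norm_num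
      · obtain ⟨q, hq, hqs⟩ : ∃ q ∈ s, q ∈ t := by
          by_contra hcon
          push Not at hcon
          apply hc
          unfold dd
          refine Nat.Coprime.prod_left fun p hp => Nat.Coprime.prod_right fun r hr => ?_
          rw [Nat.coprime_primes (hP p (hs'.1 hp)) (hP r (ht'.1 hr))]
          rintro rfl
          exact hcon p hp hr
        have : (1:ℝ) = if {q} ⊆ t then (1:ℝ) else 0 := by simp [hqs]
        refine le_of_eq_of_le this ?_
        exact Finset.single_le_sum (f := fun q => if {q} ⊆ t then (1:ℝ) else 0)
          (fun q _ => by split_ifs <;> norm_num) hq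
    calc _ ≤ ∑ t ∈ D, ∑ q ∈ s, (if {q} ⊆ t then (1:ℝ) else 0) := Finset.sum_le_sum h1
      _ = ∑ q ∈ s, ((P.card - 1).choose (j - 1) : ℝ) := by
          rw [Finset.sum_comm]
          refine Finset.sum_congr rfl fun q hq => ?_
          rw [← Finset.sum_filter, Finset.sum_const, nsmul_eq_mul, mul_one, hDdef,
            Finset.card_filter_powersetCard_subset {q} P j (by simpa using hs'.1 hq) (by simpa using hj)]
          simp
      _ = j * ((P.card - 1).choose (j - 1) : ℝ) := by simp [hs'.2]
      _ ≤ δ * D.card := by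
          have hch : (P.card : ℝ) * (P.card - 1).choose (j - 1) = D.card * j := by
            rw [hDdef, Finset.card_powersetCard]
            have := Nat.add_one_mul_choose_eq (P.card - 1) (j - 1)
            rw [Nat.sub_add_cancel (hj.trans hjP), Nat.sub_add_cancel hj] at this
            exact_mod_cast this
          have : (P.card : ℝ) * (j * ((P.card - 1).choose (j - 1) : ℝ)) ≤ P.card * (δ * D.card) := by
            calc _ = D.card * (j:ℝ) ^ 2 := by rw [mul_left_comm, hch]; ring
              _ ≤ D.card * (δ * P.card) := by gcongr
              _ = _ := by ring
          exact le_of_mul_le_mul_left this hPc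
  calc _ ≤ ∑ s ∈ D, δ * (D.card : ℝ) := Finset.sum_le_sum hin
    _ = _ := by rw [Finset.sum_const, nsmul_eq_mul]; ring

lemma omegaStar_ge (Q : Finset ℕ) (hQ : ∀ q ∈ Q, q.Prime) (j m : ℕ) (hm : 0 < m) :
    ((Q.powersetCard j).filter (fun s => (dd s * m + 1).Prime)).card ≤ omegaStar (dd Q * m) := by
  unfold omegaStar
  have hpos : 0 < dd Q := Finset.prod_pos fun q hq => (hQ q hq).pos
  refine Finset.card_le_card_of_injOn (fun s => dd s * m) ?_ ?_
  · intro s hs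
    simp only [Finset.coe_filter, Finset.mem_powersetCard, Set.mem_ofPred_eq] at hs
    simp only [Finset.coe_filter, Nat.mem_divisors, Set.mem_ofPred_eq]
    refine ⟨⟨Nat.mul_dvd_mul_right ?_ m, by positivity⟩, hs.2⟩
    exact Finset.prod_dvd_prod_of_subset _ _ _ hs.1.1
  · intro s hs t ht hst
    simp only [Finset.coe_filter, Finset.mem_powersetCard, Set.mem_ofPred_eq] at hs ht
    have h1 : dd s = dd t := Nat.eq_of_mul_eq_mul_right hm hst
    rw [← Nat.primeFactors_prod (fun p hp => hQ p (hs.1.1 hp)),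
      ← Nat.primeFactors_prod (fun p hp => hQ p (ht.1.1 hp))]
    exact congrArg Nat.primeFactors h1

lemma pigeon (Q : Finset ℕ) (j w W x : ℕ) (hw : 0 < w) (hW1 : 0 < W)
    (hQw : ∀ q ∈ Q, w ≤ q ∧ q ≤ W) (hx : w ^ j ≤ x) (y : ℝ)
    (hy : y * (W ^ j * (x / w ^ j : ℕ)) ≤ ∑ s ∈ Q.powersetCard j, (dd s : ℝ) *
      (((Finset.Ioc 0 x).filter (fun p => p.Prime ∧ p ≡ 1 [MOD dd s])).card : ℝ)) :
    ∃ m, 0 < m ∧ m ≤ x / w ^ j ∧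
      y ≤ (((Q.powersetCard j).filter (fun s => (dd s * m + 1).Prime)).card : ℝ) := by
  set X := x / w ^ j with hX
  have hX1 : 1 ≤ X := (Nat.one_le_div_iff (by positivity)).mpr hx
  have hcount : ∀ s ∈ Q.powersetCard j,
      ((Finset.Ioc 0 x).filter (fun p => p.Prime ∧ p ≡ 1 [MOD dd s])).card ≤
      ((Finset.Ioc 0 X).filter (fun m => (dd s * m + 1).Prime)).card := by
    intro s hs
    rw [Finset.mem_powersetCard] at hs
    have hd : w ^ j ≤ dd s := by
      rw [← hs.2]; exact Finset.pow_card_le_prod _ _ _ fun q hq => (hQw q (hs.1 hq)).1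
    have hwj : 0 < w ^ j := by positivity
    have hdpos : 0 < dd s := lt_of_lt_of_le hwj hd
    have key : ∀ p : ℕ, p.Prime → p ≡ 1 [MOD dd s] → dd s * ((p - 1) / dd s) + 1 = p := by
      intro p hp hmod
      have : dd s ∣ p - 1 := (Nat.modEq_iff_dvd' hp.one_lt.le).mp hmod.symm
      rw [Nat.mul_div_cancel' this]
      have := hp.one_lt
      omega
    refine Finset.card_le_card_of_injOn (fun p => (p - 1) / dd s) ?_ ?_
    · intro p hp
      simp only [Finset.coe_filter, Finset.mem_Ioc, Set.mem_ofPred_eq] at hp ⊢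
      have e := key p hp.2.1 hp.2.2
      refine ⟨⟨?_, ?_⟩, by rw [e]; exact hp.2.1⟩
      · rcases Nat.eq_zero_or_pos ((p - 1) / dd s) with h0 | h0
        · rw [h0] at e
          have := hp.2.1.one_lt
          omega
        · exact h0
      · calc (p - 1) / dd s ≤ x / dd s := Nat.div_le_div_right (by omega)
          _ ≤ x / w ^ j := Nat.div_le_div_left hd hwj
    · intro p hp q hq hpq
      simp only [Finset.coe_filter, Finset.mem_Ioc, Set.mem_ofPred_eq] at hp hq
      rw [← key p hp.2.1 hp.2.2, ← key q hq.2.1 hq.2.2]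
      simp only at hpq
      rw [hpq]
  have hsum : ∑ s ∈ Q.powersetCard j, (dd s : ℝ) *
      (((Finset.Ioc 0 x).filter (fun p => p.Prime ∧ p ≡ 1 [MOD dd s])).card : ℝ) ≤
      W ^ j * ∑ m ∈ Finset.Ioc 0 X, (((Q.powersetCard j).filter (fun s => (dd s * m + 1).Prime)).card : ℝ) := by
    calc _ ≤ ∑ s ∈ Q.powersetCard j, (W:ℝ) ^ j *
          (((Finset.Ioc 0 X).filter (fun m => (dd s * m + 1).Prime)).card : ℝ) := by
          refine Finset.sum_le_sum fun s hs => ?_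
          have h1 := hcount s hs
          rw [Finset.mem_powersetCard] at hs
          have hd : dd s ≤ W ^ j := by
            rw [← hs.2]; exact Finset.prod_le_pow_card _ _ _ fun q hq => (hQw q (hs.1 hq)).2
          have hd' : (dd s : ℝ) ≤ (W:ℝ) ^ j := by exact_mod_cast hd
          gcongr
      _ = _ := by
          rw [← Finset.mul_sum]
          congr 1
          simp only [Finset.card_filter]
          push_cast
          rw [Finset.sum_comm]
  have hW : 0 ≤ (W:ℝ) ^ j := by positivity
  have hWpos : 0 < (W:ℝ) ^ j := by positivity
  have h2 : ∑ m ∈ Finset.Ioc 0 X, y ≤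
      ∑ m ∈ Finset.Ioc 0 X, (((Q.powersetCard j).filter (fun s => (dd s * m + 1).Prime)).card : ℝ) := by
    rw [Finset.sum_const, nsmul_eq_mul, Nat.card_Ioc, Nat.sub_zero]
    have : (W:ℝ) ^ j * (X * y) ≤ W ^ j * ∑ m ∈ Finset.Ioc 0 X,
        (((Q.powersetCard j).filter (fun s => (dd s * m + 1).Prime)).card : ℝ) := by
      refine le_trans (le_of_eq ?_) (hy.trans hsum)
      ring
    exact le_of_mul_le_mul_left this hWpos
  obtain ⟨m, hm, hm2⟩ := Finset.exists_le_of_sum_le (by simp; omega) h2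
  rw [Finset.mem_Ioc] at hm
  exact ⟨m, hm.1, hm.2, hm2⟩


lemma pool : ∀ᶠ v : ℕ in atTop, ∃ P : Finset ℕ, (∀ q ∈ P, q.Prime) ∧
    (∀ q ∈ P, 2 ^ v ≤ q ∧ q ≤ 2 ^ (v + 3)) ∧ (2:ℝ) ^ v ≤ ((v + 3 : ℕ) : ℝ) * P.card := by
  have hlo := (isLittleO_log_rpow_atTop (r := 1 / 2) (by norm_num)).bound
    (show (0:ℝ) < 1 / 16 by norm_num)
  have ht : Tendsto (fun v : ℕ => (2:ℝ) ^ (v + 3)) atTop atTop :=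
    (tendsto_pow_atTop_atTop_of_one_lt (by norm_num : (1:ℝ) < 2)).comp (tendsto_add_atTop_nat 3)
  filter_upwards [ht.eventually hlo, eventually_ge_atTop 2] with v hv hv2
  set w : ℝ := 2 ^ v with hw
  have hw4 : 4 ≤ w := by
    calc (4:ℝ) = 2 ^ 2 := by norm_num
      _ ≤ 2 ^ v := pow_le_pow_right₀ (by norm_num) hv2
  have ht8 : (2:ℝ) ^ (v + 3) = 8 * w := by rw [pow_add, hw]; ring
  rw [ht8, ← Real.sqrt_eq_rpow, Real.norm_of_nonneg (Real.log_nonneg (by linarith)),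
    Real.norm_of_nonneg (Real.sqrt_nonneg _)] at hv
  refine ⟨(Finset.Ioc (2 ^ v) (2 ^ (v + 3))).filter Nat.Prime, ?_, ?_, ?_⟩
  · intro q hq; exact (Finset.mem_filter.mp hq).2
  · intro q hq
    have := Finset.mem_Ioc.mp (Finset.mem_filter.mp hq).1
    exact ⟨this.1.le, this.2⟩
  · set P := (Finset.Ioc (2 ^ v) (2 ^ (v + 3))).filter Nat.Prime with hP
    have hle : 2 ^ v ≤ 2 ^ (v + 3) := Nat.pow_le_pow_right (by norm_num) (by omega)
    have e1 : Chebyshev.theta ((2 ^ (v + 3) : ℕ) : ℝ) = Chebyshev.theta ((2 ^ v : ℕ) : ℝ) +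
        ∑ p ∈ P, Real.log p := by
      rw [Chebyshev.theta, Chebyshev.theta, Nat.floor_natCast, Nat.floor_natCast, hP,
        Finset.sum_filter, Finset.sum_filter, Finset.sum_filter,
        Finset.sum_Ioc_consecutive _ (Nat.zero_le _) hle]
    have e2 : ∑ p ∈ P, Real.log p ≤ P.card * ((v + 3 : ℕ) : ℝ) := by
      rw [← nsmul_eq_mul]
      refine Finset.sum_le_card_nsmul _ _ _ fun p hp => ?_
      have h1 := Finset.mem_Ioc.mp (Finset.mem_filter.mp hp).1
      have hp0 : (0:ℝ) < p := by exact_mod_cast lt_of_le_of_lt (Nat.zero_le _) h1.1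
      have h2 : (p:ℝ) ≤ 2 ^ (v + 3) := by exact_mod_cast h1.2
      have h3 := Real.log_le_log hp0 h2
      rw [Real.log_pow] at h3
      have : Real.log 2 ≤ 1 := by have := Real.log_two_lt_d9; linarith
      calc _ ≤ ((v + 3 : ℕ) : ℝ) * Real.log 2 := h3
        _ ≤ ((v + 3 : ℕ) : ℝ) * 1 := by gcongr
        _ = _ := by ring
    have g1 := Chebyshev.theta_ge (2 ^ (v + 3))
    have g2 := Chebyshev.theta_le_log4_mul_x (x := ((2 ^ v : ℕ) : ℝ)) (by positivity)
    have c1 : ((2 ^ (v + 3) : ℕ) : ℝ) = 8 * w := by push_cast; exact ht8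
    have c2 : ((2 ^ v : ℕ) : ℝ) = w := by push_cast; rfl
    rw [c1] at g1 e1
    rw [c2] at g2 e1
    have hl4 : Real.log 4 = 2 * Real.log 2 := by
      rw [show (4:ℝ) = 2 ^ 2 by norm_num, Real.log_pow]; norm_num
    rw [hl4] at g2
    have hl2 := Real.log_two_gt_d9
    have hl2' := Real.log_two_lt_d9
    have s1 : √(8 * w) * √(8 * w) = 8 * w := Real.mul_self_sqrt (by linarith)
    have s2 : 2 * √(8 * w) * Real.log (8 * w) ≤ w := by
      have : √(8 * w) * Real.log (8 * w) ≤ √(8 * w) * (1 / 16 * √(8 * w)) := by gcongr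
      nlinarith
    have s3 : Real.log (8 * w + 1) ≤ 1 + w / 2 := by
      have h1 : Real.log (8 * w + 1) ≤ Real.log (2 * (8 * w)) :=
        Real.log_le_log (by positivity) (by linarith)
      rw [Real.log_mul (by norm_num) (by linarith)] at h1
      have : √(8 * w) ≤ 8 * w := by
        rw [Real.sqrt_le_iff]; constructor <;> nlinarith
      linarith
    have : (6:ℝ) * w * 0.69 ≤ 6 * w * Real.log 2 := by gcongr; linarith
    nlinarith

lemma choose_ge (j : ℕ) (hj : 1 ≤ j) : (64:ℝ) ^ j ≤ ((65 * j).choose j : ℝ) := by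
  have h := Nat.pow_le_choose (α := ℝ) j (65 * j)
  refine le_trans ?_ h
  have hf : (0:ℝ) < j.factorial := by exact_mod_cast Nat.factorial_pos j
  rw [le_div_iff₀ hf]
  have h1 : (j.factorial : ℝ) ≤ (j:ℝ) ^ j := by exact_mod_cast Nat.factorial_le_pow j
  calc (64:ℝ) ^ j * j.factorial ≤ 64 ^ j * (j:ℝ) ^ j := by gcongr
    _ = (64 * j) ^ j := by rw [mul_pow]
    _ ≤ _ := by
        gcongr
        have : 64 * j ≤ 65 * j + 1 - j := by omega
        exact_mod_cast this

set_option maxHeartbeats 1600000 in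
lemma exists_n (v j b : ℕ) (hb : b = v + 3) (hj : 1 ≤ j) (P : Finset ℕ) (hP : ∀ q ∈ P, q.Prime)
    (hPw : ∀ q ∈ P, 2 ^ v ≤ q ∧ q ≤ 2 ^ b) (hPc : (2:ℝ) ^ v ≤ (b : ℝ) * P.card)
    (h1 : (b:ℝ) * j ^ 2 * (1800 * (6 * (b * j)) ^ 7) ≤ 2 ^ v)
    (h2 : (20:ℝ) * b * j ≤ 2 ^ j) :
    ∃ n : ℕ, 0 < n ∧ n ≤ 2 ^ (71 * b * j) ∧ (4:ℝ) ^ j ≤ omegaStar n := by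
  set A := b * j with hA
  have hb3 : 3 ≤ b := by omega
  have hA1 : 1 ≤ A := Nat.one_le_iff_ne_zero.mpr (by positivity)
  have hAr : (A:ℝ) = b * j := by rw [hA]; push_cast; rfl
  set h : ℝ := 6 * A with hh
  rw [← hAr, ← hh] at h1
  have hA1' : (1:ℝ) ≤ A := by exact_mod_cast hA1
  have hj' : (1:ℝ) ≤ j := by exact_mod_cast hj
  have hb' : (3:ℝ) ≤ b := by exact_mod_cast hb3
  have h6 : 6 ≤ h := by rw [hh]; linarith
  set g : ℝ := 1800 * h ^ 7 with hg
  have hg0 : 0 < g := by positivity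
  have hg1 : 1800 ≤ g := by
    have : 1 ≤ h ^ 7 := one_le_pow₀ (by linarith)
    linarith
  set δ : ℝ := 1 / g with hδ
  have hδ0 : 0 ≤ δ := by positivity
  have hPcard : (j:ℝ) ^ 2 * g ≤ P.card := by
    have : (b:ℝ) * (j ^ 2 * g) ≤ b * P.card := by linarith [mul_assoc (b:ℝ) (j ^ 2) g]
    exact le_of_mul_le_mul_left this (by linarith)
  have hjj : (j:ℝ) ≤ j ^ 2 := le_self_pow₀ hj' (by norm_num)
  have hKP : 65 * j ≤ P.card := by
    have : (65:ℝ) * j ≤ P.card := by nlinarith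
    exact_mod_cast this
  have hw0 : (0:ℝ) < 2 ^ v := by positivity
  have hjw : (j:ℝ) / 2 ^ v ≤ δ := by
    rw [hδ, div_le_div_iff₀ hw0 hg0]
    have : (j:ℝ) * g ≤ b * j ^ 2 * g := by
      gcongr
      nlinarith
    linarith
  set D := P.powersetCard j with hD
  have hds : ∀ s ∈ D, (2 ^ v) ^ j ≤ dd s ∧ dd s ≤ (2 ^ b) ^ j := by
    intro s hs
    have hs' := Finset.mem_powersetCard.mp hs
    constructor
    · rw [← hs'.2]; exact Finset.pow_card_le_prod _ _ _ fun q hq => (hPw q (hs'.1 hq)).1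
    · rw [← hs'.2]; exact Finset.prod_le_pow_card _ _ _ fun q hq => (hPw q (hs'.1 hq)).2
  have hv1 : 1 ≤ v := by
    by_contra hcon
    have hv0 : v = 0 := by omega
    rw [hv0] at h1
    have : (1:ℝ) ≤ b * j ^ 2 := by nlinarith
    have : 1 * g ≤ (b:ℝ) * j ^ 2 * g := by gcongr
    norm_num at h1
    linarith
  have hmain := main_lower D A hA1 δ h hδ0 hh ?_ ?_ ?_ ?_ ?_ ?_
  rotate_left
  · intro s hs
    refine ⟨lt_of_lt_of_le ?_ (hds s hs).1, (hds s hs).2.trans (le_of_eq (pow_mul 2 b j).symm)⟩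
    rw [← pow_mul]
    exact Nat.one_lt_two_pow (Nat.mul_ne_zero (by omega) (by omega))
  · intro s hs M
    have hs' := Finset.mem_powersetCard.mp hs
    refine (sum_nc s (2 ^ v) hw0 (fun q hq => hP q (hs'.1 hq))
      (fun q hq => by exact_mod_cast (hPw q (hs'.1 hq)).1) M).trans ?_
    rw [hs'.2]
    gcongr
  · intro s hs M
    have hs' := Finset.mem_powersetCard.mp hs
    refine (sum_nc_inv s (2 ^ v) hw0 (fun q hq => hP q (hs'.1 hq))
      (fun q hq => by exact_mod_cast (hPw q (hs'.1 hq)).1) M).trans ?_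
    rw [hs'.2]
    have := harm_nonneg M
    gcongr
  · refine eta_bound P j hP δ ?_ hj (by omega)
    rw [hδ, one_div, inv_mul_eq_div, le_div_iff₀ hg0]
    exact hPcard
  · rw [hδ, one_div, inv_mul_eq_div, le_div_iff₀ hg0, one_mul]
    have a1 : (2:ℝ) ^ v ≤ 2 ^ A := by
      refine pow_le_pow_right₀ (by norm_num) ?_
      rw [hA]
      calc v ≤ b * 1 := by omega
        _ ≤ b * j := Nat.mul_le_mul_left _ hj
    have : 1 * g ≤ (b:ℝ) * j ^ 2 * g := by gcongr; nlinarith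
    linarith
  · rw [hδ]
    have : 1800 * (1 / g) * h ^ 7 = g / g := by rw [hg]; ring
    rw [this, div_self hg0.ne']
  set x : ℕ := (2 ^ A) ^ 6 with hx
  have hxr : (x:ℝ) = ((2:ℝ) ^ A) ^ 6 := by rw [hx]; push_cast; rfl
  rw [← hxr] at hmain
  have hh0 : 0 < h := by linarith
  obtain ⟨Q, hQ, hQs⟩ := exists_good_subset P j (65 * j) (by omega) hKP
    (fun s => (dd s : ℝ) * (((Finset.Ioc 0 x).filter
        (fun p => p.Prime ∧ p ≡ 1 [MOD dd s])).card : ℝ)) (3 / 10 * x / h) (by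
      rw [div_mul_eq_mul_div, div_le_iff₀ hh0]
      linarith)
  have hQ' := Finset.mem_powersetCard.mp hQ
  have hQp : ∀ q ∈ Q, q.Prime := fun q hq => hP q (hQ'.1 hq)
  obtain ⟨m, hm0, hmx, hmy⟩ := pigeon Q j (2 ^ v) (2 ^ b) x (by positivity) (by positivity)
    (fun q hq => hPw q (hQ'.1 hq)) (by
      rw [hx, ← pow_mul, ← pow_mul]
      refine Nat.pow_le_pow_right (by norm_num) ?_
      rw [hA]; nlinarith) (4 ^ j) (by
      refine le_trans ?_ hQs
      have c1 : ((x / (2 ^ v) ^ j : ℕ) : ℝ) ≤ x / ((2:ℝ) ^ v) ^ j := by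
        have := Nat.cast_div_le (α := ℝ) (m := x) (n := (2 ^ v) ^ j)
        push_cast at this
        exact_mod_cast this
      have c2 := choose_ge j hj
      have c3 : (((2 ^ b : ℕ) : ℝ)) ^ j = 8 ^ j * ((2:ℝ) ^ v) ^ j := by
        rw [hb, ← mul_pow]; push_cast; rw [pow_add]; congr 1; ring
      rw [c3]
      have hwj : (0:ℝ) < ((2:ℝ) ^ v) ^ j := by positivity
      calc (4:ℝ) ^ j * (8 ^ j * ((2:ℝ) ^ v) ^ j * ((x / (2 ^ v) ^ j : ℕ) : ℝ))
          ≤ 4 ^ j * (8 ^ j * ((2:ℝ) ^ v) ^ j * (x / ((2:ℝ) ^ v) ^ j)) := by gcongr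
        _ = 32 ^ j * x := by
            rw [mul_assoc, mul_div_cancel₀ _ hwj.ne', ← mul_assoc, ← mul_pow]; norm_num
        _ ≤ 3 / 10 * x / h * 64 ^ j := by
            rw [div_mul_eq_mul_div, le_div_iff₀ hh0]
            have c4 : (64:ℝ) ^ j = 32 ^ j * 2 ^ j := by rw [← mul_pow]; norm_num
            have c5 : h ≤ 3 / 10 * 2 ^ j := by rw [hh, hAr]; linarith
            rw [c4]
            calc (32:ℝ) ^ j * x * h ≤ 32 ^ j * x * (3 / 10 * 2 ^ j) := by gcongr
              _ = _ := by ring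
        _ ≤ _ := by gcongr)
  have hQpos : 0 < dd Q := Finset.prod_pos fun q hq => (hQp q hq).pos
  refine ⟨dd Q * m, Nat.mul_pos hQpos hm0, ?_, hmy.trans (by exact_mod_cast omegaStar_ge Q hQp j m hm0)⟩
  have hQle : dd Q ≤ (2 ^ b) ^ (65 * j) := by
    rw [← hQ'.2]; exact Finset.prod_le_pow_card _ _ _ fun q hq => (hPw q (hQ'.1 hq)).2
  calc dd Q * m ≤ (2 ^ b) ^ (65 * j) * x := Nat.mul_le_mul hQle (hmx.trans (Nat.div_le_self _ _))
    _ = _ := by rw [hx, hA, ← pow_mul, ← pow_mul, ← pow_add]; congr 1; ring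


lemma omegaStar_mono {n m : ℕ} (h : n ∣ m) (hm : m ≠ 0) : omegaStar n ≤ omegaStar m := by
  unfold omegaStar
  exact Finset.card_le_card (Finset.filter_subset_filter _ (Nat.divisors_subset_of_dvd hm h))

lemma lin_le_two_pow (k : ℕ) (hk : 10 ≤ k) : 23 * k ≤ 2 ^ k := by
  induction k, hk using Nat.le_induction with
  | base => norm_num
  | succ k hk ih => rw [pow_succ]; omega

lemma exists_n_k : ∃ K₀ : ℕ, ∀ k : ℕ, K₀ ≤ k →
    ∃ n : ℕ, 0 < n ∧ n ≤ 2 ^ (1633 * k * 2 ^ k) ∧ (4:ℝ) ^ (2 ^ k) ≤ omegaStar n := by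
  obtain ⟨v₀, hv₀⟩ := eventually_atTop.mp pool
  refine ⟨max v₀ 10, fun k hk => ?_⟩
  have hkv : v₀ ≤ 20 * k := by have := le_max_left v₀ 10; omega
  have hk10 : 10 ≤ k := (le_max_right v₀ 10).trans hk
  obtain ⟨P, hP, hPw, hPc⟩ := hv₀ (20 * k) hkv
  have hlin := lin_le_two_pow k hk10
  have hbN : 20 * k + 3 ≤ 2 ^ k := by omega
  have hb : (((20 * k + 3 : ℕ)) : ℝ) ≤ 2 ^ k := by exact_mod_cast hbN
  obtain ⟨n, hn0, hn, hny⟩ := exists_n (20 * k) (2 ^ k) (20 * k + 3) rfl Nat.one_le_two_pow P hP hPw hPc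
    (by
      set B : ℝ := ((20 * k + 3 : ℕ) : ℝ) with hB
      have hB0 : 0 ≤ B := by positivity
      push_cast
      calc B * ((2:ℝ) ^ k) ^ 2 * (1800 * (6 * (B * 2 ^ k)) ^ 7)
          ≤ 2 ^ k * ((2:ℝ) ^ k) ^ 2 * (1800 * (6 * (2 ^ k * 2 ^ k)) ^ 7) := by gcongr
        _ = 503884800 * (2:ℝ) ^ (17 * k) := by rw [pow_mul' (2:ℝ) 17 k]; ring
        _ ≤ 2 ^ 30 * (2:ℝ) ^ (17 * k) := by gcongr; norm_num
        _ = 2 ^ (30 + 17 * k) := by rw [pow_add]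
        _ ≤ 2 ^ (20 * k) := pow_le_pow_right₀ (by norm_num) (by omega))
    (by
      set B : ℝ := ((20 * k + 3 : ℕ) : ℝ) with hB
      have hB0 : 0 ≤ B := by positivity
      push_cast
      calc 20 * B * (2:ℝ) ^ k ≤ 2 ^ 5 * 2 ^ k * 2 ^ k := by gcongr; norm_num
        _ = 2 ^ (5 + k + k) := by rw [pow_add, pow_add]
        _ ≤ 2 ^ (2 ^ k) := pow_le_pow_right₀ (by norm_num) (by omega))
  refine ⟨n, hn0, hn.trans (Nat.pow_le_pow_right (by norm_num) ?_), hny⟩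
  have : 71 * (20 * k + 3) ≤ 1633 * k := by omega
  exact Nat.mul_le_mul_right _ this

lemma count_multiples (n : ℕ) (hn : 0 < n) (Y x y : ℝ) (hY : (n:ℝ) ≤ Y) (hx : 0 ≤ x)
    (hy : y ≤ omegaStar n) :
    (⌊x / Y⌋₊ : ℝ)
        ≤ (((Finset.Icc 1 ⌊x⌋₊).filter (fun n => y ≤ (omegaStar n : ℝ))).card : ℝ) := by
  have hn' : (0:ℝ) < n := by exact_mod_cast hn
  have hY0 : 0 < Y := by linarith
  have : ⌊x / Y⌋₊ = (Finset.Icc 1 ⌊x / Y⌋₊).card := by simp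
  rw [this]
  norm_cast
  refine Finset.card_le_card_of_injOn (fun i => n * i) ?_ ?_
  · intro i hi
    simp only [Finset.coe_Icc, Set.mem_Icc] at hi
    simp only [Finset.coe_filter, Finset.mem_Icc, Set.mem_ofPred_eq]
    have hi1 : (i:ℝ) ≤ x / Y := (Nat.le_floor_iff (by positivity)).mp hi.2
    rw [le_div_iff₀ hY0] at hi1
    refine ⟨⟨Nat.mul_pos hn hi.1, Nat.le_floor ?_⟩, ?_⟩
    · push_cast
      calc (n:ℝ) * i ≤ Y * i := by gcongr
        _ ≤ x := by linarith
    · refine hy.trans ?_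
      exact_mod_cast omegaStar_mono (Dvd.intro i rfl) (Nat.mul_pos hn hi.1).ne'
  · intro a _ b _ hab
    exact Nat.eq_of_mul_eq_mul_left hn hab

theorem N_lower_bound :
    ∃ c : ℝ, c > 0 ∧ ∃ y₀ : ℝ, ∀ x y : ℝ, x ≥ 1 → y ≥ y₀ →
      (⌊x / y ^ (c * Real.log (Real.log y))⌋₊ : ℝ)
        ≤ (((Finset.Icc 1 ⌊x⌋₊).filter (fun n => y ≤ (omegaStar n : ℝ))).card : ℝ) := by
  obtain ⟨K₀, hK₀⟩ := exists_n_k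
  refine ⟨10000, by norm_num, Real.exp (2 ^ (K₀ + 1)), fun x y hx hy => ?_⟩
  have hy0 : 0 < y := lt_of_lt_of_le (Real.exp_pos _) hy
  set L := Real.log y with hL
  have hyL : y = Real.exp L := (Real.exp_log hy0).symm
  have hLK : (2:ℝ) ^ (K₀ + 1) ≤ L := (Real.le_log_iff_exp_le hy0).mpr hy
  have hL2 : 2 ≤ L := by
    have : (2:ℝ) ^ 1 ≤ 2 ^ (K₀ + 1) := pow_le_pow_right₀ (by norm_num) (by omega)
    linarith
  obtain ⟨k, hk1, hk2⟩ := exists_nat_pow_near (show (1:ℝ) ≤ L by linarith) (show (1:ℝ) < 2 by norm_num)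
  have hkK : K₀ ≤ k + 1 := by
    have : K₀ + 1 < k + 1 := (pow_lt_pow_iff_right₀ (by norm_num : (1:ℝ) < 2)).mp (hLK.trans_lt hk2)
    omega
  obtain ⟨n, hn0, hn, hny⟩ := hK₀ (k + 1) hkK
  refine count_multiples n hn0 _ x y ?_ (by linarith) ?_
  · have hlogL : 0 < Real.log L := Real.log_pos (by linarith)
    have hl2 := Real.log_two_gt_d9
    have hl2' := Real.log_two_lt_d9
    have hj : (2:ℝ) ^ (k + 1) ≤ 2 * L := by rw [pow_succ]; linarith
    have hk3 : ((k + 1 : ℕ) : ℝ) ≤ 3 * Real.log L := by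
      have h1 := Real.log_le_log (by positivity) hj
      rw [Real.log_pow, Real.log_mul (by norm_num) (by linarith)] at h1
      have h2 : Real.log 2 ≤ Real.log L := Real.log_le_log (by norm_num) hL2
      have h3 : ((k + 1 : ℕ) : ℝ) * 0.69 ≤ ((k + 1 : ℕ) : ℝ) * Real.log 2 := by gcongr; linarith
      linarith
    have hnr : (n:ℝ) ≤ 2 ^ (1633 * (k + 1) * 2 ^ (k + 1)) := by exact_mod_cast hn
    refine hnr.trans ?_
    rw [Real.rpow_def_of_pos hy0, ← hL]
    have he : (2:ℝ) ≤ Real.exp 1 := by have := Real.exp_one_gt_d9; linarith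
    calc (2:ℝ) ^ (1633 * (k + 1) * 2 ^ (k + 1)) ≤ Real.exp 1 ^ (1633 * (k + 1) * 2 ^ (k + 1)) := by
          gcongr
      _ = Real.exp ((1633 * (k + 1) * 2 ^ (k + 1) : ℕ) : ℝ) := by rw [← Real.exp_nat_mul, mul_one]
      _ ≤ _ := by
          apply Real.exp_le_exp.mpr
          have e : ((1633 * (k + 1) * 2 ^ (k + 1) : ℕ) : ℝ) = 1633 * ((k + 1 : ℕ) : ℝ) * 2 ^ (k + 1) := by
            push_cast; ring
          rw [e]
          calc 1633 * ((k + 1 : ℕ) : ℝ) * 2 ^ (k + 1) ≤ 1633 * (3 * Real.log L) * (2 * L) := by gcongr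
            _ = 9798 * (L * Real.log L) := by ring
            _ ≤ 10000 * (L * Real.log L) := by gcongr; norm_num
            _ = _ := by ring
  · refine le_trans ?_ hny
    rw [hyL]
    have he : Real.exp 1 ≤ 4 := by have := Real.exp_one_lt_d9; linarith
    calc Real.exp L ≤ Real.exp ((2 ^ (k + 1) : ℕ) : ℝ) := by
          apply Real.exp_le_exp.mpr; push_cast; exact hk2.le
      _ = Real.exp 1 ^ (2 ^ (k + 1)) := by rw [← Real.exp_nat_mul, mul_one]
      _ ≤ 4 ^ (2 ^ (k + 1)) := by gcongr
end
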